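/- Let G be a planar graph. If bw(G) ≥ 4r for a positive integer r, then G contains the (r × r)-grid as a minor. -/

import Mathlib

open SimpleGraph Set

universe u

/-- A branch-decomposition of a graph `G`: a ternary tree `T` (internal vertices of
degree 3) together with a bijection from the edges of `G` to the leaves of `T`. -/
structure BranchDecomp {V : Type u} (G : SimpleGraph V) : Type (u + 1) where
  t : Type
  fin : Fintype t
  T : SimpleGraph t
  isTree : T.IsTree
  ternary : ∀ v : t, (T.neighborSet v).ncard ≤ 1 ∨ (T.neighborSet v).ncard = 3
  τ : G.edgeSet ≃ {v : t // (T.neighborSet v).ncard ≤ 1}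

namespace BranchDecomp

variable {V : Type u} {G : SimpleGraph V} (B : BranchDecomp G)

/-- The edges of `G` whose leaves lie on the `a`-side of the tree edge `ab`. -/
def side (a b : B.t) : Set G.edgeSet :=
  {e | (B.T.deleteEdges {s(a, b)}).Reachable a (B.τ e).1}

/-- The boundary `∂(X_e)` of the bipartition of `E(G)` induced by the tree edge `ab`:
vertices incident to edges on both sides. -/
def bdry (a b : B.t) : Set V :=
  {v | (∃ e : G.edgeSet, e ∈ B.side a b ∧ v ∈ (e : Sym2 V)) ∧
       (∃ e : G.edgeSet, e ∉ B.side a b ∧ v ∈ (e : Sym2 V))}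

/-- The width of a branch-decomposition: the maximum, over edges of the tree, of the
size of the corresponding boundary. -/
noncomputable def width : ℕ :=
  sSup {n | ∃ a b : B.t, B.T.Adj a b ∧ n = (B.bdry a b).ncard}

end BranchDecomp

/-- The branchwidth of a graph: the minimum width of a branch-decomposition. -/
noncomputable def branchwidth {V : Type u} (G : SimpleGraph V) : ℕ :=
  sInf {n | ∃ B : BranchDecomp G, B.width = n}

/-- A tree-decomposition of a graph. -/
structure TreeDecomp {V : Type u} (G : SimpleGraph V) : Type (u + 1) where
  t : Type
  fin : Fintype t
  T : SimpleGraph t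
  isTree : T.IsTree
  β : t → Set V
  covers_edge : ∀ ⦃u v : V⦄, G.Adj u v → ∃ x, u ∈ β x ∧ v ∈ β x
  covers_vert : ∀ v : V, ∃ x, v ∈ β x
  subtree : ∀ v : V, (T.induce {x | v ∈ β x}).Connected

/-- The width of a tree-decomposition: maximum bag size minus one. -/
noncomputable def TreeDecomp.width {V : Type u} {G : SimpleGraph V} (D : TreeDecomp G) : ℕ :=
  sSup {n | ∃ x : D.t, n + 1 = (D.β x).ncard}

/-- The treewidth of a graph. -/
noncomputable def treewidth {V : Type u} (G : SimpleGraph V) : ℕ :=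
  sInf {n | ∃ D : TreeDecomp G, D.width = n}

/-- A minor model of `H` in `G`: disjoint connected branch sets with edges realized. -/
def IsMinorModel {V : Type u} {W : Type*} (G : SimpleGraph V) (H : SimpleGraph W)
    (φ : W → Set V) : Prop :=
  (∀ w, (G.induce (φ w)).Connected) ∧
  (Pairwise fun w₁ w₂ => Disjoint (φ w₁) (φ w₂)) ∧
  (∀ ⦃w₁ w₂ : W⦄, H.Adj w₁ w₂ → ∃ a ∈ φ w₁, ∃ b ∈ φ w₂, G.Adj a b)

/-- `G` has `H` as a minor. -/
def HasMinor {V : Type u} {W : Type*} (G : SimpleGraph V) (H : SimpleGraph W) : Prop :=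
  ∃ φ : W → Set V, IsMinorModel G H φ

/-- The `(k × k)`-grid. -/
def gridGraph (k : ℕ) : SimpleGraph (Fin k × Fin k) :=
  SimpleGraph.fromRel fun p q =>
    (p.1 = q.1 ∧ (p.2 : ℕ) + 1 = (q.2 : ℕ)) ∨ (p.2 = q.2 ∧ (p.1 : ℕ) + 1 = (q.1 : ℕ))

/-- A combinatorial closed surface presented as a flag system ("graph-encoded map"):
three fixed-point-free involutions on a finite set of flags, with `σ₀` and `σ₂`
commuting and `σ₀σ₂` fixed-point free. Vertices, edges, faces of the map are the orbits
of `⟨σ₁,σ₂⟩`, `⟨σ₀,σ₂⟩`, `⟨σ₀,σ₁⟩` respectively. -/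
structure FlagSystem : Type 1 where
  F : Type
  fin : Fintype F
  σ₀ : Equiv.Perm F
  σ₁ : Equiv.Perm F
  σ₂ : Equiv.Perm F
  inv₀ : σ₀ * σ₀ = 1
  inv₁ : σ₁ * σ₁ = 1
  inv₂ : σ₂ * σ₂ = 1
  fpf₀ : ∀ x, σ₀ x ≠ x
  fpf₁ : ∀ x, σ₁ x ≠ x
  fpf₂ : ∀ x, σ₂ x ≠ x
  comm02 : σ₀ * σ₂ = σ₂ * σ₀
  fpf02 : ∀ x, (σ₀ * σ₂) x ≠ x

namespace FlagSystem

variable (M : FlagSystem)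

/-- Two flags lie in a common orbit of the subgroup generated by a set of permutations. -/
def SameOrbit (S : Set (Equiv.Perm M.F)) (x y : M.F) : Prop :=
  ∃ g ∈ Subgroup.closure S, g x = y

/-- The number of orbits of the subgroup generated by `S` on the flags. -/
noncomputable def numOrbits (S : Set (Equiv.Perm M.F)) : ℕ :=
  Nat.card (Quotient (MulAction.orbitRel (Subgroup.closure S) M.F))

/-- Number of vertices of the map. -/
noncomputable def nV : ℕ := M.numOrbits {M.σ₁, M.σ₂}
/-- Number of edges of the map. -/
noncomputable def nE : ℕ := M.numOrbits {M.σ₀, M.σ₂}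
/-- Number of faces of the map. -/
noncomputable def nF : ℕ := M.numOrbits {M.σ₀, M.σ₁}
/-- Number of connected components of the map (= of the underlying surface). -/
noncomputable def nC : ℕ := M.numOrbits {M.σ₀, M.σ₁, M.σ₂}

/-- The flag system `M` is (the flag system of) a 2-cell embedding of the graph `G`:
there are assignments of a (non-isolated) vertex and an edge of `G` to each flag which
identify the vertex orbits with the non-isolated vertices of `G` and the edge orbits
with the edges of `G`, respecting all incidences. -/
def Realizes {V : Type u} (G : SimpleGraph V) : Prop :=
  ∃ (fv : M.F → {v : V // ∃ e ∈ G.edgeSet, v ∈ e}) (fe : M.F → G.edgeSet),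
    (∀ x, ((fv x : V) ∈ (fe x : Sym2 V))) ∧
    (∀ x, fv (M.σ₁ x) = fv x) ∧ (∀ x, fv (M.σ₂ x) = fv x) ∧
    (∀ x, fv (M.σ₀ x) ≠ fv x) ∧
    (∀ x, fe (M.σ₀ x) = fe x) ∧ (∀ x, fe (M.σ₂ x) = fe x) ∧
    (∀ x y, fv x = fv y → M.SameOrbit {M.σ₁, M.σ₂} x y) ∧
    (∀ x y, fe x = fe y → M.SameOrbit {M.σ₀, M.σ₂} x y) ∧
    Function.Surjective fv ∧
    (∀ (e : G.edgeSet) (v : V), v ∈ (e : Sym2 V) → ∃ x, fe x = e ∧ (fv x : V) = v)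

end FlagSystem

/-- The Euler genus of a graph `G`: the least `g` such that some 2-cell embedding of `G`
(given by a flag system `M` realizing `G`) satisfies the Euler formula
`g + v + f = 2·c + e`, i.e. `g = 2c - v + e - f`. -/
noncomputable def eulerGenus {V : Type u} (G : SimpleGraph V) : ℕ :=
  sInf {g | ∃ M : FlagSystem, M.Realizes G ∧ g + M.nV + M.nF = 2 * M.nC + M.nE}

/-- A graph is planar if it embeds in the sphere, i.e. has Euler genus zero. -/
def IsPlanar {V : Type u} (G : SimpleGraph V) : Prop := eulerGenus G = 0


open SimpleGraph Set

set_option linter.unusedSectionVars false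

section LinAlg

variable {F : Type} [Fintype F]

/-- Functions invariant under all permutations in `S`. -/
def InvS (S : Set (Equiv.Perm F)) : Submodule (ZMod 2) (F → ZMod 2) where
  carrier := {f | ∀ σ ∈ S, ∀ x, f (σ x) = f x}
  add_mem' := by
    intro a b ha hb σ hσ x
    simp [ha σ hσ x, hb σ hσ x]
  zero_mem' := by intro σ _ x; rfl
  smul_mem' := by
    intro c f hf σ hσ x
    simp [hf σ hσ x]

theorem InvS_mono {S S' : Set (Equiv.Perm F)} (h : S ⊆ S') : InvS S' ≤ InvS S :=
  fun _ hf σ hσ x => hf σ (h hσ) x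

theorem InvS_closure {S : Set (Equiv.Perm F)} {f : F → ZMod 2} (hf : f ∈ InvS S)
    {g : Equiv.Perm F} (hg : g ∈ Subgroup.closure S) : ∀ x, f (g x) = f x := by
  induction hg using Subgroup.closure_induction with
  | mem σ hσ => exact fun x => hf σ hσ x
  | one => intro x; rfl
  | mul a b _ _ iha ihb => intro x; rw [Equiv.Perm.mul_apply, iha, ihb]
  | inv a _ iha => intro x; have := iha (a⁻¹ x); simpa using this.symm

theorem finrank_InvS (S : Set (Equiv.Perm F)) :
    Module.finrank (ZMod 2) (InvS S) =
      Nat.card (Quotient (MulAction.orbitRel (Subgroup.closure S) F)) := by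
  classical
  let e : InvS S ≃ₗ[ZMod 2]
      (Quotient (MulAction.orbitRel (Subgroup.closure S) F) → ZMod 2) :=
    { toFun := fun f => Quotient.lift f.1 (by
        intro a b hab
        obtain ⟨g, hg⟩ := (MulAction.orbitRel_apply.1 hab)
        rw [← hg]
        exact InvS_closure f.2 g.2 b)
      map_add' := by
        intro f g
        funext q
        induction q using Quotient.inductionOn with
        | h x => rfl
      map_smul' := by
        intro c g
        funext q
        induction q using Quotient.inductionOn with
        | h x => rfl
      invFun := fun h => ⟨fun x => h (Quotient.mk _ x), by
        intro σ hσ x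
        show h _ = h _
        congr 1
        apply Quotient.sound
        exact MulAction.orbitRel_apply.2 ⟨⟨σ, Subgroup.subset_closure hσ⟩, rfl⟩⟩
      left_inv := fun f => rfl
      right_inv := by
        intro h
        funext q
        induction q using Quotient.inductionOn with
        | h x => rfl }
  have : Fintype (Quotient (MulAction.orbitRel (Subgroup.closure S) F)) := Fintype.ofFinite _
  rw [e.finrank_eq, Module.finrank_fintype_fun_eq_card, Nat.card_eq_fintype_card]

theorem z2_add_self (a : ZMod 2) : a + a = 0 := by revert a; decide

theorem z2_abc (a b c : ZMod 2) : b + c + (a + c + (a + b)) = 0 := by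
  revert a b c; decide

theorem z2_eq_of_add {a b : ZMod 2} (h : a + b = 0) : a = b := by
  revert a b; decide

/-- the map `f ↦ f + f ∘ σ`. -/
def symm2 (σ : Equiv.Perm F) : (F → ZMod 2) →ₗ[ZMod 2] (F → ZMod 2) :=
  LinearMap.id + LinearMap.funLeft (ZMod 2) (ZMod 2) σ

theorem symm2_apply (σ : Equiv.Perm F) (f : F → ZMod 2) (x : F) :
    symm2 σ f x = f x + f (σ x) := rfl

theorem invol_apply {σ : Equiv.Perm F} (h : σ * σ = 1) (x : F) : σ (σ x) = x := by
  rw [← Equiv.Perm.mul_apply, h]; rfl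

theorem ker_symm2 (σ : Equiv.Perm F) : LinearMap.ker (symm2 σ) = InvS {σ} := by
  ext f
  rw [LinearMap.mem_ker]
  constructor
  · intro h τ hτ x
    rw [mem_singleton_iff.1 hτ]
    have := congrFun h x
    rw [symm2_apply] at this
    exact (z2_eq_of_add this).symm
  · intro h
    funext x
    rw [symm2_apply, h σ rfl x]
    exact z2_add_self _

theorem range_symm2 {σ : Equiv.Perm F} (h : σ * σ = 1) : LinearMap.range (symm2 σ) ≤ InvS {σ} := by
  rintro _ ⟨f, rfl⟩ τ hτ x
  rw [mem_singleton_iff.1 hτ, symm2_apply, symm2_apply, invol_apply h, add_comm]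

theorem le_range_symm2 {σ : Equiv.Perm F} (h : σ * σ = 1) (hf : ∀ x, σ x ≠ x) :
    InvS {σ} ≤ LinearMap.range (symm2 σ) := by
  classical
  let e := Fintype.equivFin F
  intro g hg
  refine ⟨fun x => if e x < e (σ x) then g x else 0, ?_⟩
  funext x
  have h1 := hg σ rfl x
  have h2 : e x ≠ e (σ x) := fun h => hf x (e.injective h).symm
  simp only [symm2_apply, invol_apply h, h1]
  rcases lt_or_gt_of_ne h2 with h3 | h3
  · simp [h3, h3.not_gt]
  · simp [h3, h3.not_gt]

theorem finrank_Inv_single_le {σ : Equiv.Perm F} (h : σ * σ = 1) (hf : ∀ x, σ x ≠ x) :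
    2 * Module.finrank (ZMod 2) (InvS {σ}) ≤ Fintype.card F := by
  have h1 := LinearMap.finrank_range_add_finrank_ker (symm2 σ)
  rw [ker_symm2, Module.finrank_fintype_fun_eq_card] at h1
  have h2 := Submodule.finrank_mono (le_range_symm2 h hf)
  omega

theorem card_le_finrank_Inv_single {σ : Equiv.Perm F} (h : σ * σ = 1) :
    Fintype.card F ≤ 2 * Module.finrank (ZMod 2) (InvS {σ}) := by
  have h1 := LinearMap.finrank_range_add_finrank_ker (symm2 σ)
  rw [ker_symm2, Module.finrank_fintype_fun_eq_card] at h1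
  have h2 := Submodule.finrank_mono (range_symm2 h)
  omega

theorem finrank_Inv_pair {σ τ : Equiv.Perm F} (hτ : τ * τ = 1)
    (hc : σ * τ = τ * σ) :
    Module.finrank (ZMod 2) (InvS {σ}) ≤ 2 * Module.finrank (ZMod 2) (InvS {σ, τ}) := by
  have h1 := LinearMap.finrank_range_add_finrank_ker ((symm2 τ).domRestrict (InvS {σ}))
  have h2 : LinearMap.range ((symm2 τ).domRestrict (InvS {σ})) ≤ InvS {σ, τ} := by
    rintro _ ⟨f, rfl⟩ ρ hρ x
    rcases hρ with rfl | hρ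
    · have hs : ∀ y, ρ (τ y) = τ (ρ y) := fun y => by
        rw [← Equiv.Perm.mul_apply, hc]; rfl
      rw [LinearMap.domRestrict_apply, symm2_apply, symm2_apply, ← hs, f.2 ρ rfl, f.2 ρ rfl]
    · exact range_symm2 hτ ⟨f.1, rfl⟩ ρ hρ x
  have h3 : Module.finrank (ZMod 2) (LinearMap.ker ((symm2 τ).domRestrict (InvS {σ}))) ≤
      Module.finrank (ZMod 2) (InvS {σ, τ}) := by
    let j : LinearMap.ker ((symm2 τ).domRestrict (InvS {σ})) →ₗ[ZMod 2] InvS {σ, τ} :=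
      LinearMap.codRestrict _ ((InvS {σ}).subtype ∘ₗ Submodule.subtype _) (by
        rintro ⟨f, hf⟩ ρ hρ x
        rcases hρ with rfl | hρ
        · exact f.2 ρ rfl x
        · have : f.1 ∈ LinearMap.ker (symm2 τ) := hf
          rw [ker_symm2] at this
          exact this ρ hρ x)
    apply LinearMap.finrank_le_finrank_of_injective (f := j)
    intro a b hab
    have : (j a).1 = (j b).1 := congrArg Subtype.val hab
    exact Subtype.ext (Subtype.ext this)
  have h4 := Submodule.finrank_mono h2
  omega

variable {σ₀ σ₁ σ₂ : Equiv.Perm F}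

/-- The sum map on triples of invariant functions. -/
noncomputable def sum3 (σ₀ σ₁ σ₂ : Equiv.Perm F) :
    ((InvS {σ₀} × InvS {σ₁} × InvS {σ₂})) →ₗ[ZMod 2] (F → ZMod 2) :=
  (InvS {σ₀}).subtype.coprod ((InvS {σ₁}).subtype.coprod (InvS {σ₂}).subtype)

theorem single_pair_mem [DecidableEq F] {σ : Equiv.Perm F} (h : σ * σ = 1) (x : F) :
    (Pi.single x 1 + Pi.single (σ x) 1 : F → ZMod 2) ∈ InvS {σ} := by
  intro τ hτ y
  rw [mem_singleton_iff.1 hτ]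
  have h1 : σ y = x ↔ y = σ x := by
    constructor
    · rintro rfl; rw [invol_apply h]
    · rintro rfl; rw [invol_apply h]
  have h2 : σ y = σ x ↔ y = x := σ.injective.eq_iff
  simp only [Pi.add_apply, Pi.single_apply, h1, h2]
  rw [add_comm]

theorem finrank_range_sum3 (h0 : σ₀ * σ₀ = 1) (h1 : σ₁ * σ₁ = 1) (h2 : σ₂ * σ₂ = 1) :
    Fintype.card F ≤ Module.finrank (ZMod 2) (LinearMap.range (sum3 σ₀ σ₁ σ₂)) +
      Module.finrank (ZMod 2) (InvS {σ₀, σ₁, σ₂}) := by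
  classical
  set W := LinearMap.range (sum3 σ₀ σ₁ σ₂) with hW
  have e := Subspace.finrank_add_finrank_dualAnnihilator_eq W
  rw [Module.finrank_fintype_fun_eq_card] at e
  have m0 : ∀ f ∈ InvS {σ₀}, f ∈ W := fun f hf => ⟨(⟨f, hf⟩, 0, 0), by simp [sum3]⟩
  have m1 : ∀ f ∈ InvS {σ₁}, f ∈ W := fun f hf => ⟨(0, ⟨f, hf⟩, 0), by simp [sum3]⟩
  have m2 : ∀ f ∈ InvS {σ₂}, f ∈ W := fun f hf => ⟨(0, 0, ⟨f, hf⟩), by simp [sum3]⟩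
  let j0 : Module.Dual (ZMod 2) (F → ZMod 2) →ₗ[ZMod 2] (F → ZMod 2) :=
    { toFun := fun φ x => φ (Pi.single x 1)
      map_add' := fun _ _ => rfl
      map_smul' := fun _ _ => rfl }
  let j : W.dualAnnihilator →ₗ[ZMod 2] InvS {σ₀, σ₁, σ₂} :=
    LinearMap.codRestrict _ (j0 ∘ₗ Submodule.subtype _) (by
      rintro ⟨φ, hφ⟩ ρ hρ x
      rw [Submodule.mem_dualAnnihilator] at hφ
      show φ _ = φ _
      apply z2_eq_of_add
      rw [add_comm, ← map_add]
      apply hφ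
      rcases hρ with rfl | rfl | rfl
      · exact m0 _ (single_pair_mem h0 x)
      · exact m1 _ (single_pair_mem h1 x)
      · exact m2 _ (single_pair_mem h2 x))
  have hj : Function.Injective j := by
    intro a b hab
    have h3 : j0 a.1 = j0 b.1 := congrArg Subtype.val hab
    apply Subtype.ext
    apply LinearMap.pi_ext'
    intro x
    apply LinearMap.ext_ring
    exact congrFun h3 x
  have := LinearMap.finrank_le_finrank_of_injective hj
  omega

/-- The map `(a,b,c) ↦ (b+c, a+c, a+b)`. -/
noncomputable def phi3 (σ₀ σ₁ σ₂ : Equiv.Perm F) :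
    (InvS {σ₁, σ₂} × InvS {σ₀, σ₂} × InvS {σ₀, σ₁}) →ₗ[ZMod 2]
      (InvS {σ₀} × InvS {σ₁} × InvS {σ₂}) where
  toFun p := (⟨p.2.1.1 + p.2.2.1, Submodule.add_mem _
      (InvS_mono (by simp) p.2.1.2) (InvS_mono (by simp) p.2.2.2)⟩,
    ⟨p.1.1 + p.2.2.1, Submodule.add_mem _
      (InvS_mono (by simp) p.1.2) (InvS_mono (by simp) p.2.2.2)⟩,
    ⟨p.1.1 + p.2.1.1, Submodule.add_mem _
      (InvS_mono (by simp) p.1.2) (InvS_mono (by simp) p.2.1.2)⟩)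
  map_add' := by
    intro p q
    ext x <;> simp <;> abel
  map_smul' := by
    intro c p
    ext x <;> simp

theorem phi3_range : LinearMap.range (phi3 σ₀ σ₁ σ₂) ≤ LinearMap.ker (sum3 σ₀ σ₁ σ₂) := by
  rintro _ ⟨p, rfl⟩
  rw [LinearMap.mem_ker]
  funext x
  simp only [sum3, phi3, LinearMap.coprod_apply, LinearMap.coe_mk, AddHom.coe_mk,
    Submodule.subtype_apply, Pi.add_apply, Pi.zero_apply]
  exact z2_abc _ _ _

theorem phi3_ker : Module.finrank (ZMod 2) (LinearMap.ker (phi3 σ₀ σ₁ σ₂)) ≤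
    Module.finrank (ZMod 2) (InvS {σ₀, σ₁, σ₂}) := by
  have key : ∀ p : LinearMap.ker (phi3 σ₀ σ₁ σ₂), (p.1.2.1.1 = p.1.1.1) ∧ (p.1.2.2.1 = p.1.1.1) := by
    rintro ⟨p, hp⟩
    rw [LinearMap.mem_ker] at hp
    have hb : p.1.1 + p.2.2.1 = 0 := congrArg (fun q => q.2.1.1) hp
    have hc : p.1.1 + p.2.1.1 = 0 := congrArg (fun q => q.2.2.1) hp
    exact ⟨funext fun x => (z2_eq_of_add (congrFun hc x)).symm,
      funext fun x => (z2_eq_of_add (congrFun hb x)).symm⟩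
  let j : LinearMap.ker (phi3 σ₀ σ₁ σ₂) →ₗ[ZMod 2] InvS {σ₀, σ₁, σ₂} :=
    LinearMap.codRestrict _ ((InvS {σ₁, σ₂}).subtype ∘ₗ LinearMap.fst _ _ _ ∘ₗ
      Submodule.subtype _) (by
        intro p ρ hρ x
        show p.1.1.1 _ = p.1.1.1 _
        rcases hρ with rfl | hρ
        · rw [← (key p).1]
          exact p.1.2.1.2 ρ (by simp) x
        · exact p.1.1.2 ρ hρ x)
  apply LinearMap.finrank_le_finrank_of_injective (f := j)
  intro a b hab
  have this0 : (j a).1 = (j b).1 := congrArg Subtype.val hab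
  have this : a.1.1.1 = b.1.1.1 := this0
  obtain ⟨a1, a2⟩ := key a
  obtain ⟨b1, b2⟩ := key b
  apply Subtype.ext
  refine Prod.ext (Subtype.ext this) (Prod.ext (Subtype.ext ?_) (Subtype.ext ?_))
  · rw [a1, b1, this]
  · rw [a2, b2, this]

theorem finrank_ker_sum3 (h0 : σ₀ * σ₀ = 1) (h1 : σ₁ * σ₁ = 1) (h2 : σ₂ * σ₂ = 1)
    (f0 : ∀ x, σ₀ x ≠ x) (f1 : ∀ x, σ₁ x ≠ x) (f2 : ∀ x, σ₂ x ≠ x)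
    (hc : σ₀ * σ₂ = σ₂ * σ₀) :
    Module.finrank (ZMod 2) (LinearMap.ker (sum3 σ₀ σ₁ σ₂)) ≤
      2 * Module.finrank (ZMod 2) (InvS {σ₀, σ₂}) +
      Module.finrank (ZMod 2) (InvS {σ₀, σ₁, σ₂}) := by
  have a0 := finrank_Inv_single_le h0 f0
  have a1 := finrank_Inv_single_le h1 f1
  have a2 := finrank_Inv_single_le h2 f2
  have a3 := card_le_finrank_Inv_single h0
  have a4 := finrank_Inv_pair h2 hc
  have a5 := finrank_range_sum3 h0 h1 h2
  have a6 := LinearMap.finrank_range_add_finrank_ker (sum3 σ₀ σ₁ σ₂)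
  rw [Module.finrank_prod, Module.finrank_prod] at a6
  omega

theorem euler_ineq (h0 : σ₀ * σ₀ = 1) (h1 : σ₁ * σ₁ = 1) (h2 : σ₂ * σ₂ = 1)
    (f0 : ∀ x, σ₀ x ≠ x) (f1 : ∀ x, σ₁ x ≠ x) (f2 : ∀ x, σ₂ x ≠ x)
    (hc : σ₀ * σ₂ = σ₂ * σ₀) :
    Module.finrank (ZMod 2) (InvS {σ₁, σ₂}) + Module.finrank (ZMod 2) (InvS {σ₀, σ₁}) ≤
      2 * Module.finrank (ZMod 2) (InvS {σ₀, σ₁, σ₂}) +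
      Module.finrank (ZMod 2) (InvS {σ₀, σ₂}) := by
  have a1 := finrank_ker_sum3 h0 h1 h2 f0 f1 f2 hc
  have a2 := Submodule.finrank_mono (phi3_range (σ₀ := σ₀) (σ₁ := σ₁) (σ₂ := σ₂))
  have a3 := phi3_ker (σ₀ := σ₀) (σ₁ := σ₁) (σ₂ := σ₂)
  have a6 := LinearMap.finrank_range_add_finrank_ker (phi3 σ₀ σ₁ σ₂)
  rw [Module.finrank_prod, Module.finrank_prod] at a6
  omega

theorem homology (h0 : σ₀ * σ₀ = 1) (h1 : σ₁ * σ₁ = 1) (h2 : σ₂ * σ₂ = 1)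
    (f0 : ∀ x, σ₀ x ≠ x) (f1 : ∀ x, σ₁ x ≠ x) (f2 : ∀ x, σ₂ x ≠ x)
    (hc : σ₀ * σ₂ = σ₂ * σ₀)
    (heq : Module.finrank (ZMod 2) (InvS {σ₁, σ₂}) + Module.finrank (ZMod 2) (InvS {σ₀, σ₁}) =
      2 * Module.finrank (ZMod 2) (InvS {σ₀, σ₁, σ₂}) +
      Module.finrank (ZMod 2) (InvS {σ₀, σ₂}))
    (g0 g1 g2 : F → ZMod 2) (m0 : g0 ∈ InvS {σ₀}) (m1 : g1 ∈ InvS {σ₁}) (m2 : g2 ∈ InvS {σ₂})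
    (hs : ∀ x, g0 x + g1 x + g2 x = 0) :
    ∃ a ∈ InvS {σ₁, σ₂}, ∃ b ∈ InvS {σ₀, σ₂}, ∃ c ∈ InvS {σ₀, σ₁},
      g0 = b + c ∧ g1 = a + c ∧ g2 = a + b := by
  have a1 := finrank_ker_sum3 h0 h1 h2 f0 f1 f2 hc
  have a3 := phi3_ker (σ₀ := σ₀) (σ₁ := σ₁) (σ₂ := σ₂)
  have a6 := LinearMap.finrank_range_add_finrank_ker (phi3 σ₀ σ₁ σ₂)
  rw [Module.finrank_prod, Module.finrank_prod] at a6
  have a7 : LinearMap.range (phi3 σ₀ σ₁ σ₂) = LinearMap.ker (sum3 σ₀ σ₁ σ₂) :=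
    Submodule.eq_of_le_of_finrank_le phi3_range (by omega)
  have a8 : ((⟨g0, m0⟩, ⟨g1, m1⟩, ⟨g2, m2⟩) : InvS {σ₀} × InvS {σ₁} × InvS {σ₂}) ∈
      LinearMap.range (phi3 σ₀ σ₁ σ₂) := by
    rw [a7, LinearMap.mem_ker]
    funext x
    simp only [sum3, LinearMap.coprod_apply, Submodule.subtype_apply, Pi.add_apply, Pi.zero_apply]
    rw [← hs x, add_assoc]
  obtain ⟨⟨a, b, c⟩, h⟩ := a8
  refine ⟨a.1, a.2, b.1, b.2, c.1, c.2, ?_, ?_, ?_⟩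
  · exact (congrArg (fun q => q.1.1) h).symm
  · exact (congrArg (fun q => q.2.1.1) h).symm
  · exact (congrArg (fun q => q.2.2.1) h).symm

theorem sum_symm2 {σ : Equiv.Perm F} (h : σ * σ = 1) (f g : F → ZMod 2) :
    ∑ x, f x * symm2 σ g x = ∑ x, symm2 σ f x * g x := by
  simp only [symm2_apply, mul_add, add_mul, Finset.sum_add_distrib]
  congr 1
  rw [← Equiv.sum_comp σ]
  simp only [invol_apply h]

theorem cohomology (h0 : σ₀ * σ₀ = 1) (h1 : σ₁ * σ₁ = 1) (h2 : σ₂ * σ₂ = 1)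
    (f0 : ∀ x, σ₀ x ≠ x) (f1 : ∀ x, σ₁ x ≠ x) (f2 : ∀ x, σ₂ x ≠ x)
    (hc : σ₀ * σ₂ = σ₂ * σ₀)
    (heq : Module.finrank (ZMod 2) (InvS {σ₁, σ₂}) + Module.finrank (ZMod 2) (InvS {σ₀, σ₁}) =
      2 * Module.finrank (ZMod 2) (InvS {σ₀, σ₁, σ₂}) +
      Module.finrank (ZMod 2) (InvS {σ₀, σ₂}))
    (t1 t2 : F → ZMod 2)
    (ha : ∀ a ∈ InvS {σ₁, σ₂}, ∑ x, a x * (t1 x + t2 x) = 0)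
    (hb : ∀ b ∈ InvS {σ₀, σ₂}, ∑ x, b x * t2 x = 0)
    (hcc : ∀ c ∈ InvS {σ₀, σ₁}, ∑ x, c x * t1 x = 0) :
    ∃ K : F → ZMod 2, (∀ x, K (σ₀ x) = K x) ∧
      (∀ x, K (σ₁ x) + t1 (σ₁ x) = K x + t1 x) ∧
      (∀ x, K (σ₂ x) + t2 (σ₂ x) = K x + t2 x) := by
  classical
  let Ψ : (F → ZMod 2) →ₗ[ZMod 2] ((F → ZMod 2) × (F → ZMod 2) × (F → ZMod 2)) :=
    (symm2 σ₀).prod ((symm2 σ₁).prod (symm2 σ₂))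
  by_cases hw : ((0, symm2 σ₁ t1, symm2 σ₂ t2) :
      (F → ZMod 2) × (F → ZMod 2) × (F → ZMod 2)) ∈ LinearMap.range Ψ
  · obtain ⟨K, hK⟩ := hw
    have e0 : symm2 σ₀ K = 0 := congrArg (fun q => q.1) hK
    have e1 : symm2 σ₁ K = symm2 σ₁ t1 := congrArg (fun q => q.2.1) hK
    have e2 : symm2 σ₂ K = symm2 σ₂ t2 := congrArg (fun q => q.2.2) hK
    refine ⟨K, fun x => ?_, fun x => ?_, fun x => ?_⟩
    · have := congrFun e0 x
      rw [symm2_apply] at this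
      exact (z2_eq_of_add this).symm
    · have := congrFun e1 x
      rw [symm2_apply, symm2_apply] at this
      revert this
      generalize K x = a
      generalize K (σ₁ x) = b
      generalize t1 x = c
      generalize t1 (σ₁ x) = d
      revert a b c d
      decide
    · have := congrFun e2 x
      rw [symm2_apply, symm2_apply] at this
      revert this
      generalize K x = a
      generalize K (σ₂ x) = b
      generalize t2 x = c
      generalize t2 (σ₂ x) = d
      revert a b c d
      decide
  · exfalso
    obtain ⟨φ, hφ1, hφ2⟩ := Submodule.exists_le_ker_of_notMem hw
    let e0 : F → ZMod 2 := fun x => φ (Pi.single x 1, 0, 0)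
    let e1 : F → ZMod 2 := fun x => φ (0, Pi.single x 1, 0)
    let e2 : F → ZMod 2 := fun x => φ (0, 0, Pi.single x 1)
    have hrep : ∀ u v w : F → ZMod 2, φ (u, v, w) =
        ∑ x, e0 x * u x + ∑ x, e1 x * v x + ∑ x, e2 x * w x := by
      intro u v w
      have gen : ∀ (ψ : (F → ZMod 2) →ₗ[ZMod 2] ZMod 2) (u : F → ZMod 2),
          ψ u = ∑ x, ψ (Pi.single x 1) * u x := by
        intro ψ u
        conv_lhs => rw [pi_eq_sum_univ' u]
        rw [map_sum]
        apply Finset.sum_congr rfl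
        intro x _
        rw [map_smul, smul_eq_mul, mul_comm]
      have h3 : (u, v, w) = LinearMap.inl (ZMod 2) (F → ZMod 2) ((F → ZMod 2) × (F → ZMod 2)) u +
        LinearMap.inr (ZMod 2) (F → ZMod 2) ((F → ZMod 2) × (F → ZMod 2)) (LinearMap.inl (ZMod 2) _ _ v)
        + LinearMap.inr (ZMod 2) (F → ZMod 2) ((F → ZMod 2) × (F → ZMod 2))
          (LinearMap.inr (ZMod 2) _ _ w) := by
        simp
      rw [h3, map_add, map_add]
      have r1 := gen (φ ∘ₗ LinearMap.inl (ZMod 2) (F → ZMod 2) ((F → ZMod 2) × (F → ZMod 2))) u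
      have r2 := gen (φ ∘ₗ LinearMap.inr (ZMod 2) (F → ZMod 2) ((F → ZMod 2) × (F → ZMod 2)) ∘ₗ
        LinearMap.inl _ _ _) v
      have r3 := gen (φ ∘ₗ LinearMap.inr (ZMod 2) (F → ZMod 2) ((F → ZMod 2) × (F → ZMod 2)) ∘ₗ
        LinearMap.inr _ _ _) w
      simp only [LinearMap.comp_apply] at r1 r2 r3
      rw [r1, r2, r3]
      rfl
    have hzero : ∀ K : F → ZMod 2,
        ∑ x, (symm2 σ₀ e0 x + symm2 σ₁ e1 x + symm2 σ₂ e2 x) * K x = 0 := by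
      intro K
      have : φ (Ψ K) = 0 := hφ2 ⟨K, rfl⟩
      have h4 : Ψ K = (symm2 σ₀ K, symm2 σ₁ K, symm2 σ₂ K) := rfl
      rw [h4, hrep, sum_symm2 h0, sum_symm2 h1, sum_symm2 h2] at this
      simp only [add_mul, Finset.sum_add_distrib]
      exact this
    have hs : ∀ x, symm2 σ₀ e0 x + symm2 σ₁ e1 x + symm2 σ₂ e2 x = 0 := by
      intro x
      have := hzero (Pi.single x 1)
      simpa [Pi.single_apply] using this
    obtain ⟨a, ma, b, mb, c, mc, q0, q1, q2⟩ := homology h0 h1 h2 f0 f1 f2 hc heq _ _ _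
      (range_symm2 h0 ⟨e0, rfl⟩) (range_symm2 h1 ⟨e1, rfl⟩) (range_symm2 h2 ⟨e2, rfl⟩) hs
    apply hφ1
    rw [hrep, sum_symm2 h1, sum_symm2 h2, q1, q2]
    have A := ha a ma
    have B := hb b mb
    have C := hcc c mc
    simp only [Pi.add_apply, Pi.zero_apply, mul_zero, Finset.sum_const_zero, zero_add, add_mul,
      mul_add, Finset.sum_add_distrib] at A B C ⊢
    rw [B, C, add_zero, add_zero]
    exact A

end LinAlg

theorem exists_fibre_rot {α β : Type*} [Finite α] (f : α → β) :
    ∃ ρ : Equiv.Perm α, (∀ x, f (ρ x) = f x) ∧ ∀ x y, f x = f y → ∃ n : ℕ, (ρ ^ n) x = y := by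
  classical
  have : Fintype α := Fintype.ofFinite α
  have h : ∀ b : β, ∃ c : Equiv.Perm α, c.IsCycleOn (Finset.univ.filter fun x => f x = b : Finset α) := by
    intro b
    obtain ⟨c, hc, -⟩ := Finset.exists_cycleOn (Finset.univ.filter fun x => f x = b)
    exact ⟨c, hc⟩
  choose c hc using h
  have hmem : ∀ b x, f (c b x) = b ↔ f x = b := by
    intro b x
    have := (hc b).apply_mem_iff (x := x)
    simpa using this
  have hmem' : ∀ b x, f ((c b).symm x) = b ↔ f x = b := by
    intro b x
    rw [← hmem b, Equiv.apply_symm_apply]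
  let ρ : Equiv.Perm α :=
    { toFun := fun x => c (f x) x
      invFun := fun x => (c (f x)).symm x
      left_inv := by
        intro x
        have h1 : f (c (f x) x) = f x := (hmem _ _).2 rfl
        show (c (f (c (f x) x))).symm (c (f x) x) = x
        rw [h1, Equiv.symm_apply_apply]
      right_inv := by
        intro x
        have h1 : f ((c (f x)).symm x) = f x := (hmem' _ _).2 rfl
        show (c (f ((c (f x)).symm x))) ((c (f x)).symm x) = x
        rw [h1, Equiv.apply_symm_apply] }
  have hρ : ∀ x, ρ x = c (f x) x := fun _ => rfl
  have hf : ∀ x, f (ρ x) = f x := fun x => (hmem _ _).2 rfl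
  have hfn : ∀ (n : ℕ) x, f ((ρ ^ n) x) = f x := by
    intro n
    induction n with
    | zero => intro x; rfl
    | succ n ih => intro x; rw [pow_succ', Equiv.Perm.mul_apply, hf, ih]
  refine ⟨ρ, hf, fun x y hxy => ?_⟩
  obtain ⟨n, -, hn⟩ := (hc (f y)).exists_pow_eq (a := x) (b := y) (by simpa using hxy) (by simp)
  refine ⟨n, ?_⟩
  rw [← hn]
  clear hn
  induction n with
  | zero => rfl
  | succ n ih =>
    rw [pow_succ', Equiv.Perm.mul_apply, ih, pow_succ', Equiv.Perm.mul_apply, hρ, ← ih, hfn, hxy]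

theorem sameOrbit_refl (M : FlagSystem) (S : Set (Equiv.Perm M.F)) (x : M.F) :
    M.SameOrbit S x x := ⟨1, Subgroup.one_mem _, rfl⟩

theorem sameOrbit_symm {M : FlagSystem} {S : Set (Equiv.Perm M.F)} {x y : M.F}
    (h : M.SameOrbit S x y) : M.SameOrbit S y x := by
  obtain ⟨g, hg, rfl⟩ := h
  exact ⟨g⁻¹, Subgroup.inv_mem _ hg, by simp⟩

theorem sameOrbit_trans {M : FlagSystem} {S : Set (Equiv.Perm M.F)} {x y z : M.F}
    (h : M.SameOrbit S x y) (h' : M.SameOrbit S y z) : M.SameOrbit S x z := by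
  obtain ⟨g, hg, rfl⟩ := h
  obtain ⟨g', hg', rfl⟩ := h'
  exact ⟨g' * g, Subgroup.mul_mem _ hg' hg, rfl⟩

theorem sameOrbit_step {M : FlagSystem} {S : Set (Equiv.Perm M.F)} {σ : Equiv.Perm M.F}
    (h : σ ∈ S) (x : M.F) : M.SameOrbit S x (σ x) :=
  ⟨σ, Subgroup.subset_closure h, rfl⟩

theorem exists_realizes {V : Type u} [Fintype V] (G : SimpleGraph V) :
    ∃ M : FlagSystem, M.Realizes G := by
  classical
  let e := Fintype.equivFin V
  let D := {p : Fin (Fintype.card V) × Fin (Fintype.card V) // G.Adj (e.symm p.1) (e.symm p.2)}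
  let sy : D → D := fun d => ⟨(d.1.2, d.1.1), d.2.symm⟩
  have hsy : ∀ d, sy (sy d) = d := fun d => rfl
  have hsn : ∀ d, (sy d) ≠ d := by
    intro d h
    have h1 : d.1.2 = d.1.1 := congrArg (fun q : D => q.1.1) h
    exact G.ne_of_adj d.2 (congrArg e.symm h1.symm)
  obtain ⟨ρ, hρ1, hρ2⟩ := exists_fibre_rot (fun d : D => d.1.1)
  let mk : (f : D × Bool → D × Bool) → (∀ x, f (f x) = x) → Equiv.Perm (D × Bool) :=
    fun f h => ⟨f, f, h, h⟩
  let s0 : Equiv.Perm (D × Bool) := mk (fun p => (sy p.1, !p.2)) (by rintro ⟨d, s⟩; simp [hsy])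
  let s2 : Equiv.Perm (D × Bool) := mk (fun p => (p.1, !p.2)) (by rintro ⟨d, s⟩; simp)
  let s1 : Equiv.Perm (D × Bool) := mk (fun p => if p.2 then (ρ p.1, false) else (ρ.symm p.1, true))
    (by rintro ⟨d, s⟩; cases s <;> simp)
  have e0 : ∀ d s, s0 (d, s) = (sy d, !s) := fun _ _ => rfl
  have e2 : ∀ d s, s2 (d, s) = (d, !s) := fun _ _ => rfl
  have e1t : ∀ d, s1 (d, true) = (ρ d, false) := fun _ => rfl
  have e1f : ∀ d, s1 (d, false) = (ρ.symm d, true) := fun _ => rfl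
  let M : FlagSystem :=
    { F := D × Bool
      fin := inferInstance
      σ₀ := s0
      σ₁ := s1
      σ₂ := s2
      inv₀ := by ext x : 1; exact s0.left_inv x
      inv₁ := by ext x : 1; exact s1.left_inv x
      inv₂ := by ext x : 1; exact s2.left_inv x
      fpf₀ := by
        rintro ⟨d, s⟩ h
        rw [e0] at h
        simpa using congrArg Prod.snd h
      fpf₁ := by
        rintro ⟨d, s⟩ h
        cases s
        · rw [e1f] at h
          simpa using congrArg Prod.snd h
        · rw [e1t] at h
          simpa using congrArg Prod.snd h
      fpf₂ := by
        rintro ⟨d, s⟩ h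
        rw [e2] at h
        simpa using congrArg Prod.snd h
      comm02 := by ext x : 1; rfl
      fpf02 := by
        rintro ⟨d, s⟩ h
        rw [Equiv.Perm.mul_apply, e2, e0] at h
        exact hsn d (congrArg Prod.fst h) }
  have v1 : ∀ d s, M.SameOrbit {M.σ₁, M.σ₂} (d, s) (d, true) := by
    intro d s
    cases s
    · exact sameOrbit_step (M := M) (σ := M.σ₂) (by simp) (d, false)
    · exact sameOrbit_refl _ _ _
  have v2 : ∀ (n : ℕ) d, M.SameOrbit {M.σ₁, M.σ₂} (d, true) ((ρ ^ n) d, true) := by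
    intro n
    induction n with
    | zero => intro d; exact sameOrbit_refl _ _ _
    | succ n ih =>
      intro d
      refine sameOrbit_trans (ih d) ?_
      rw [pow_succ', Equiv.Perm.mul_apply]
      refine sameOrbit_trans (sameOrbit_step (M := M) (σ := M.σ₁) (by simp) _) ?_
      exact v1 _ _
  have w2 : ∀ d s, M.SameOrbit {M.σ₀, M.σ₂} (d, s) (d, true) := by
    intro d s
    cases s
    · exact sameOrbit_step (M := M) (σ := M.σ₂) (by simp) (d, false)
    · exact sameOrbit_refl _ _ _
  have w0 : ∀ d s, M.SameOrbit {M.σ₀, M.σ₂} (d, s) (sy d, !s) := fun d s =>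
    sameOrbit_step (M := M) (σ := M.σ₀) (by simp) (d, s)
  refine ⟨M, fun x => ⟨e.symm x.1.1.1, s(e.symm x.1.1.1, e.symm x.1.1.2), x.1.2, by simp⟩,
    fun x => ⟨s(e.symm x.1.1.1, e.symm x.1.1.2), x.1.2⟩, ?_, ?_, ?_, ?_, ?_, ?_, ?_, ?_, ?_, ?_⟩
  · intro x; simp
  · rintro ⟨d, s⟩
    apply Subtype.ext
    cases s
    · show e.symm (ρ.symm d).1.1 = e.symm d.1.1
      have := hρ1 (ρ.symm d)
      rw [Equiv.apply_symm_apply] at this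
      rw [this]
    · show e.symm (ρ d).1.1 = e.symm d.1.1
      rw [hρ1 d]
  · rintro ⟨d, s⟩; rfl
  · rintro ⟨d, s⟩ h
    have h1 : e.symm d.1.2 = e.symm d.1.1 := congrArg Subtype.val h
    exact G.ne_of_adj d.2 h1.symm
  · rintro ⟨d, s⟩
    apply Subtype.ext
    exact Sym2.eq_swap
  · rintro ⟨d, s⟩; rfl
  · rintro ⟨d, s⟩ ⟨d', s'⟩ h
    have h1 : d.1.1 = d'.1.1 := e.symm.injective (congrArg Subtype.val h)
    obtain ⟨n, rfl⟩ := hρ2 d d' h1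
    exact sameOrbit_trans (v1 _ _) (sameOrbit_trans (v2 n d) (sameOrbit_symm (v1 _ _)))
  · rintro ⟨d, s⟩ ⟨d', s'⟩ h
    have h1 : s(e.symm d.1.1, e.symm d.1.2) = s(e.symm d'.1.1, e.symm d'.1.2) :=
      congrArg Subtype.val h
    rw [Sym2.eq_iff] at h1
    have h2 : d = d' ∨ sy d = d' := by
      rcases h1 with ⟨a, b⟩ | ⟨a, b⟩
      · left
        exact Subtype.ext (Prod.ext (e.symm.injective a) (e.symm.injective b))
      · right
        exact Subtype.ext (Prod.ext (e.symm.injective b) (e.symm.injective a))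
    rcases h2 with rfl | rfl
    · exact sameOrbit_trans (w2 _ _) (sameOrbit_symm (w2 _ _))
    · exact sameOrbit_trans (w0 _ _) (sameOrbit_trans (w2 _ _) (sameOrbit_symm (w2 _ _)))
  · rintro ⟨v, ε, hε, hv⟩
    obtain ⟨w, rfl⟩ := hv
    refine ⟨(⟨(e v, e w), ?_⟩, true), ?_⟩
    · simpa using hε
    · apply Subtype.ext; simp
  · rintro ⟨ε, hε⟩ v hv
    obtain ⟨w, rfl⟩ := hv
    refine ⟨(⟨(e v, e w), ?_⟩, true), ?_, ?_⟩
    · simpa using hε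
    · apply Subtype.ext; simp
    · simp

theorem FlagSystem.euler_le (M : FlagSystem) : M.nV + M.nF ≤ 2 * M.nC + M.nE := by
  have := M.fin
  have h := euler_ineq M.inv₀ M.inv₁ M.inv₂ M.fpf₀ M.fpf₁ M.fpf₂ M.comm02
  simp only [finrank_InvS] at h
  exact h

theorem exists_planar_map {V : Type u} [Fintype V] {G : SimpleGraph V} (h : IsPlanar G) :
    ∃ M : FlagSystem, M.Realizes G ∧ M.nV + M.nF = 2 * M.nC + M.nE := by
  have hne : {g | ∃ M : FlagSystem, M.Realizes G ∧ g + M.nV + M.nF = 2 * M.nC + M.nE}.Nonempty := by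
    obtain ⟨M, hM⟩ := exists_realizes G
    refine ⟨2 * M.nC + M.nE - (M.nV + M.nF), M, hM, ?_⟩
    have := M.euler_le
    omega
  have h2 := Nat.sInf_mem hne
  have h3 : sInf {g | ∃ M : FlagSystem, M.Realizes G ∧ g + M.nV + M.nF = 2 * M.nC + M.nE} = 0 := h
  rw [h3] at h2
  obtain ⟨M, hM, e⟩ := h2
  exact ⟨M, hM, by omega⟩

theorem FlagSystem.cohom (M : FlagSystem) [Fintype M.F] (hM : M.nV + M.nF = 2 * M.nC + M.nE)
    (t1 t2 : M.F → ZMod 2)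
    (ha : ∀ a : M.F → ZMod 2, (∀ x, a (M.σ₁ x) = a x) → (∀ x, a (M.σ₂ x) = a x) →
      ∑ x, a x * (t1 x + t2 x) = 0)
    (hb : ∀ b : M.F → ZMod 2, (∀ x, b (M.σ₀ x) = b x) → (∀ x, b (M.σ₂ x) = b x) →
      ∑ x, b x * t2 x = 0)
    (hc : ∀ c : M.F → ZMod 2, (∀ x, c (M.σ₀ x) = c x) → (∀ x, c (M.σ₁ x) = c x) →
      ∑ x, c x * t1 x = 0) :
    ∃ K : M.F → ZMod 2, (∀ x, K (M.σ₀ x) = K x) ∧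
      (∀ x, K (M.σ₁ x) + t1 (M.σ₁ x) = K x + t1 x) ∧
      (∀ x, K (M.σ₂ x) + t2 (M.σ₂ x) = K x + t2 x) := by
  apply cohomology M.inv₀ M.inv₁ M.inv₂ M.fpf₀ M.fpf₁ M.fpf₂ M.comm02 _ t1 t2
  · intro a h
    exact ha a (h _ (by simp)) (h _ (by simp))
  · intro a h
    exact hb a (h _ (by simp)) (h _ (by simp))
  · intro a h
    exact hc a (h _ (by simp)) (h _ (by simp))
  · simp only [finrank_InvS]
    exact hM

/-- Rooted binary labelled tree with leaves labelled by the elements of `X`. -/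
def RT {E : Type u} (ok : Set E → Prop) (X : Set E) : Prop :=
  ∃ (α : Type) (_ : Fintype α) (par : α → Option α) (lab : α → Set E),
    (∀ p q, par p = some q → lab p ⊂ lab q) ∧
    (∃ ρ, par ρ = none ∧ lab ρ = X ∧ ∀ p, par p = none → p = ρ) ∧
    (∀ p q, lab q ⊆ lab p → q ≠ p → ∃ q', par q = some q' ∧ lab q' ⊆ lab p) ∧
    (∀ p, ((∃ e, lab p = {e}) ∧ ∀ q, par q ≠ some p) ∨
      ((¬ ∃ e, lab p = {e}) ∧ ∃ q1 q2, q1 ≠ q2 ∧ ∀ q, par q = some p ↔ q = q1 ∨ q = q2)) ∧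
    (∀ e ∈ X, ∃ p, lab p = {e}) ∧
    (∀ p, ok (lab p)) ∧
    (∀ p, (lab p).Nonempty ∧ lab p ⊆ X)

theorem RT_ok {E : Type u} {ok : Set E → Prop} {X : Set E} (h : RT ok X) : ok X := by
  obtain ⟨α, _, par, lab, -, ⟨ρ, -, rfl, -⟩, -, -, -, h6, -⟩ := h
  exact h6 ρ

theorem RT_single {E : Type u} {ok : Set E → Prop} (e : E) (h : ok {e}) : RT ok {e} := by
  refine ⟨Unit, inferInstance, fun _ => none, fun _ => {e}, ?_, ⟨(), rfl, rfl, fun _ _ => rfl⟩,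
    ?_, ?_, ?_, ?_, ?_⟩
  · intro p q h; cases h
  · intro p q _ h; exact absurd rfl h
  · intro p; left; exact ⟨⟨e, rfl⟩, by intro q h; cases h⟩
  · intro e' he'; exact ⟨(), by rw [mem_singleton_iff.1 he']⟩
  · intro _; exact h
  · intro _; exact ⟨singleton_nonempty _, Subset.rfl⟩

theorem RT_node {E : Type u} {ok : Set E → Prop} {X Y : Set E} (hX : RT ok X) (hY : RT ok Y)
    (hd : Disjoint X Y) (h : ok (X ∪ Y)) : RT ok (X ∪ Y) := by
  obtain ⟨α, _, par, lab, a1, ⟨ρ, a2, a2', a2''⟩, a3, a4, a5, a6, a7⟩ := hX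
  obtain ⟨β, _, par', lab', b1, ⟨ρ', b2, b2', b2''⟩, b3, b4, b5, b6, b7⟩ := hY
  have hnX : X.Nonempty := by rw [← a2']; exact (a7 ρ).1
  have hnY : Y.Nonempty := by rw [← b2']; exact (b7 ρ').1
  have hsX : X ⊂ X ∪ Y := by
    refine ⟨subset_union_left, fun h => ?_⟩
    obtain ⟨y, hy⟩ := hnY
    exact (Set.disjoint_left.1 hd) (h (Or.inr hy)) hy
  have hsY : Y ⊂ X ∪ Y := by
    refine ⟨subset_union_right, fun h => ?_⟩
    obtain ⟨y, hy⟩ := hnX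
    exact (Set.disjoint_left.1 hd) hy (h (Or.inl hy))
  have hnd : ∀ p q, ¬ (lab p ⊆ lab' q) := by
    intro p q hh
    obtain ⟨x, hx⟩ := (a7 p).1
    exact (Set.disjoint_left.1 hd) ((a7 p).2 hx) ((b7 q).2 (hh hx))
  have hnd' : ∀ p q, ¬ (lab' p ⊆ lab q) := by
    intro p q hh
    obtain ⟨x, hx⟩ := (b7 p).1
    exact (Set.disjoint_left.1 hd) ((a7 q).2 (hh hx)) ((b7 p).2 hx)
  let PAR : Option (α ⊕ β) → Option (Option (α ⊕ β)) := fun z =>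
    match z with
    | none => none
    | some (Sum.inl p) => some ((par p).map Sum.inl)
    | some (Sum.inr p) => some ((par' p).map Sum.inr)
  let LAB : Option (α ⊕ β) → Set E := fun z =>
    match z with
    | none => X ∪ Y
    | some (Sum.inl p) => lab p
    | some (Sum.inr p) => lab' p
  refine ⟨Option (α ⊕ β), inferInstance, PAR, LAB, ?_, ⟨none, rfl, rfl, ?_⟩, ?_, ?_, ?_, ?_, ?_⟩
  · rintro (_ | p | p) q hq
    · cases hq
    · have hq' : (par p).map Sum.inl = q := Option.some.inj hq
      cases hp : par p with
      | none =>
        rw [hp] at hq'; subst hq'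
        have := a2'' p hp
        subst this
        show lab p ⊂ X ∪ Y
        rw [a2']; exact hsX
      | some p' =>
        rw [hp] at hq'; subst hq'
        exact a1 p p' hp
    · have hq' : (par' p).map Sum.inr = q := Option.some.inj hq
      cases hp : par' p with
      | none =>
        rw [hp] at hq'; subst hq'
        have := b2'' p hp
        subst this
        show lab' p ⊂ X ∪ Y
        rw [b2']; exact hsY
      | some p' =>
        rw [hp] at hq'; subst hq'
        exact b1 p p' hp
  · rintro (_ | p | p) hp
    · rfl
    · cases hp
    · cases hp
  · rintro (_ | p | p) (_ | q | q) hs hne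
    · exact absurd rfl hne
    · refine ⟨_, rfl, ?_⟩
      cases hp : par q with
      | none => exact Subset.rfl
      | some p' => exact (a7 p').2.trans subset_union_left
    · refine ⟨_, rfl, ?_⟩
      cases hp : par' q with
      | none => exact Subset.rfl
      | some p' => exact (b7 p').2.trans subset_union_right
    · exact absurd (hs.trans (a7 p).2) hsX.2
    · obtain ⟨q', h1, h2⟩ := a3 p q hs (by rintro rfl; exact hne rfl)
      exact ⟨some (Sum.inl q'), by show some ((par q).map Sum.inl) = _; rw [h1]; rfl, h2⟩
    · exact absurd hs (hnd' _ _)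
    · exact absurd (hs.trans (b7 p).2) hsY.2
    · exact absurd hs (hnd _ _)
    · obtain ⟨q', h1, h2⟩ := b3 p q hs (by rintro rfl; exact hne rfl)
      exact ⟨some (Sum.inr q'), by show some ((par' q).map Sum.inr) = _; rw [h1]; rfl, h2⟩
  · rintro (_ | p | p)
    · right
      refine ⟨?_, some (Sum.inl ρ), some (Sum.inr ρ'), by simp, ?_⟩
      · rintro ⟨e, he⟩
        have he' : X ∪ Y = {e} := he
        obtain ⟨x, hx⟩ := hnX
        obtain ⟨y, hy⟩ := hnY
        have h1 : x = e := by
          have : x ∈ X ∪ Y := Or.inl hx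
          rw [he'] at this; exact this
        have h2 : y = e := by
          have : y ∈ X ∪ Y := Or.inr hy
          rw [he'] at this; exact this
        exact (Set.disjoint_left.1 hd) hx (by rw [h1, ← h2]; exact hy)
      · rintro (_ | q | q)
        · simp [PAR]
        · constructor
          · intro h
            have h' : (par q).map Sum.inl = (none : Option (α ⊕ β)) := Option.some.inj h
            left
            rw [a2'' q (by simpa using h')]
          · rintro (h | h)
            · cases h
              show some ((par ρ).map Sum.inl) = _
              rw [a2]; rfl
            · cases h
        · constructor
          · intro h
            have h' : (par' q).map Sum.inr = (none : Option (α ⊕ β)) := Option.some.inj h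
            right
            rw [b2'' q (by simpa using h')]
          · rintro (h | h)
            · cases h
            · cases h
              show some ((par' ρ').map Sum.inr) = _
              rw [b2]; rfl
    · have key : ∀ q, PAR q = some (some (Sum.inl p)) ↔ ∃ q', q = some (Sum.inl q') ∧ par q' = some p := by
        rintro (_ | q | q) <;> simp [PAR]
      rcases a4 p with ⟨h1, h2⟩ | ⟨h1, q1, q2, h3, h4⟩
      · left
        refine ⟨h1, fun q hq => ?_⟩
        obtain ⟨q', -, h⟩ := (key q).1 hq
        exact h2 _ h
      · right
        refine ⟨h1, some (Sum.inl q1), some (Sum.inl q2), by simpa using h3, fun q => ?_⟩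
        rw [key]
        constructor
        · rintro ⟨q', rfl, h⟩
          rcases (h4 q').1 h with rfl | rfl <;> simp
        · rintro (rfl | rfl)
          · exact ⟨q1, rfl, (h4 q1).2 (Or.inl rfl)⟩
          · exact ⟨q2, rfl, (h4 q2).2 (Or.inr rfl)⟩
    · have key : ∀ q, PAR q = some (some (Sum.inr p)) ↔ ∃ q', q = some (Sum.inr q') ∧ par' q' = some p := by
        rintro (_ | q | q) <;> simp [PAR]
      rcases b4 p with ⟨h1, h2⟩ | ⟨h1, q1, q2, h3, h4⟩
      · left
        refine ⟨h1, fun q hq => ?_⟩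
        obtain ⟨q', -, h⟩ := (key q).1 hq
        exact h2 _ h
      · right
        refine ⟨h1, some (Sum.inr q1), some (Sum.inr q2), by simpa using h3, fun q => ?_⟩
        rw [key]
        constructor
        · rintro ⟨q', rfl, h⟩
          rcases (h4 q').1 h with rfl | rfl <;> simp
        · rintro (rfl | rfl)
          · exact ⟨q1, rfl, (h4 q1).2 (Or.inl rfl)⟩
          · exact ⟨q2, rfl, (h4 q2).2 (Or.inr rfl)⟩
  · rintro e (he | he)
    · obtain ⟨p, hp⟩ := a5 e he
      exact ⟨some (Sum.inl p), hp⟩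
    · obtain ⟨p, hp⟩ := b5 e he
      exact ⟨some (Sum.inr p), hp⟩
  · rintro (_ | p | p)
    · exact h
    · exact a6 p
    · exact b6 p
  · rintro (_ | p | p)
    · exact ⟨hnX.inl, Subset.rfl⟩
    · exact ⟨(a7 p).1, (a7 p).2.trans subset_union_left⟩
    · exact ⟨(b7 p).1, (b7 p).2.trans subset_union_right⟩

/-- The vertex boundary of a set of edges. -/
def bdE {V : Type u} (G : SimpleGraph V) (X : Set G.edgeSet) : Set V :=
  {v | (∃ e : G.edgeSet, e ∈ X ∧ v ∈ (e : Sym2 V)) ∧ (∃ e : G.edgeSet, e ∉ X ∧ v ∈ (e : Sym2 V))}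

theorem bdE_compl {V : Type u} (G : SimpleGraph V) (X : Set G.edgeSet) : bdE G Xᶜ = bdE G X := by
  ext v
  constructor
  · rintro ⟨⟨e, h1, h2⟩, ⟨f, h3, h4⟩⟩
    exact ⟨⟨f, not_not.1 h3, h4⟩, ⟨e, h1, h2⟩⟩
  · rintro ⟨⟨e, h1, h2⟩, ⟨f, h3, h4⟩⟩
    exact ⟨⟨f, h3, h4⟩, ⟨e, not_not.2 h1, h2⟩⟩

/-- The tree of a parent function, with an extra vertex `none` above the root. -/
def parTree {α : Type} (par : α → Option α) : SimpleGraph (Option α) :=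
  SimpleGraph.fromRel fun x y => ∃ p, x = some p ∧ y = par p

theorem climb {α : Type} {E : Type u} [Finite E] {par : α → Option α} {lab : α → Set E}
    (h1 : ∀ p q, par p = some q → lab p ⊂ lab q) (s : Set (Sym2 (Option α))) (P : α → Prop)
    (x0 : Option α) (h : ∀ q, P q → some q = x0 ∨ (s(some q, par q) ∉ s ∧
      (par q = x0 ∨ ∃ q', par q = some q' ∧ P q'))) (q : α) (hq : P q) :
    ((parTree par).deleteEdges s).Reachable (some q) x0 := by
  generalize hX : lab q = X
  induction X using WellFoundedGT.induction generalizing q with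
  | ind X ih =>
    rcases h q hq with h2 | ⟨h2, h3⟩
    · rw [h2]
    · have hadj : ((parTree par).deleteEdges s).Adj (some q) (par q) := by
        rw [SimpleGraph.deleteEdges_adj]
        refine ⟨?_, h2⟩
        rw [parTree, SimpleGraph.fromRel_adj]
        refine ⟨?_, Or.inl ⟨q, rfl, rfl⟩⟩
        intro h4
        exact (h1 q q h4.symm).2 Subset.rfl
      refine hadj.reachable.trans ?_
      rcases h3 with h3 | ⟨q', h3, h4⟩
      · rw [h3]
      · rw [h3]
        refine ih (lab q') ?_ q' h4 rfl
        rw [← hX]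
        exact h1 q q' h3

theorem branch_of_RT {V : Type u} [Finite V] (G : SimpleGraph V) (k : ℕ) (e0 : G.edgeSet)
    (h : RT (fun X : Set G.edgeSet => (bdE G X).ncard ≤ k) {e0}ᶜ) : branchwidth G ≤ k := by
  classical
  obtain ⟨α, _, par, lab, a1, ⟨ρ, a2, a2', a2''⟩, a3, a4, a5, a6, a7⟩ := h
  have he0 : ∀ p, e0 ∉ lab p := fun p hp => (a7 p).2 hp rfl
  have hpp : ∀ p, par p ≠ some p := fun p hp => (a1 p p hp).2 Subset.rfl
  have hinj : ∀ p q, lab p = lab q → p = q := by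
    intro p q hpq
    by_contra hne
    obtain ⟨q', h1, h2⟩ := a3 q p hpq.le hne
    exact (a1 _ _ h1).2 (h2.trans hpq.ge)
  let T := parTree par
  have hT : ∀ x y, T.Adj x y ↔ (∃ p, x = some p ∧ y = par p) ∨ (∃ p, y = some p ∧ x = par p) := by
    intro x y
    show (parTree par).Adj x y ↔ _
    rw [parTree, SimpleGraph.fromRel_adj]
    constructor
    · exact fun h => h.2
    · intro h
      refine ⟨?_, h⟩
      rintro rfl
      rcases h with ⟨p, h1, h2⟩ | ⟨p, h1, h2⟩
      · exact hpp p (by rw [← h2, ← h1])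
      · exact hpp p (by rw [← h2, ← h1])
  let D : α → Set (Option α) := fun p => {x | ∃ q, x = some q ∧ lab q ⊆ lab p}
  have hDp : ∀ p, some p ∈ D p := fun p => ⟨p, rfl, Subset.rfl⟩
  have hDpar : ∀ p, par p ∉ D p := by
    rintro p ⟨q, h1, h2⟩
    exact (a1 p q h1).2 h2
  have hcl : ∀ p x y, T.Adj x y → x ∈ D p → y ∉ D p → x = some p ∧ y = par p := by
    rintro p x y hxy ⟨q, rfl, hq⟩ hy
    rcases (hT _ _).1 hxy with ⟨q2, h1, rfl⟩ | ⟨q2, rfl, h1⟩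
    · cases h1
      by_cases hqp : q = p
      · exact ⟨by rw [hqp], by rw [hqp]⟩
      · obtain ⟨q', h2, h3⟩ := a3 p q hq hqp
        exact absurd ⟨q', h2, h3⟩ hy
    · exact absurd ⟨q2, rfl, (a1 _ _ h1.symm).1.trans hq⟩ hy
  have hstay : ∀ p x y, (T.deleteEdges {s(some p, par p)}).Reachable x y → (x ∈ D p ↔ y ∈ D p) := by
    rintro p x y ⟨w⟩
    induction w with
    | nil => rfl
    | cons hadj _ ih =>
      rename_i u v w _
      rw [← ih]
      rw [SimpleGraph.deleteEdges_adj] at hadj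
      by_cases hu : u ∈ D p <;> by_cases hv : v ∈ D p
      · simp [hu, hv]
      · obtain ⟨rfl, rfl⟩ := hcl p _ _ hadj.1 hu hv
        exact absurd rfl hadj.2
      · obtain ⟨rfl, rfl⟩ := hcl p _ _ hadj.1.symm hv hu
        exact absurd Sym2.eq_swap hadj.2
      · simp [hu, hv]
  have hedge : ∀ p q, q ≠ p → s(some q, par q) ≠ s(some p, par p) := by
    intro p q hqp h
    rw [Sym2.eq_iff] at h
    rcases h with ⟨h1, -⟩ | ⟨h1, h2⟩
    · cases h1; exact hqp rfl
    · exact (a1 p q h1.symm).2 (a1 q p h2).1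
  have hup : ∀ p x, x ∉ D p → (T.deleteEdges {s(some p, par p)}).Reachable x none := by
    rintro p (_ | q) hx
    · exact Reachable.refl _
    · refine climb a1 _ (fun q => some q ∉ D p) none ?_ q hx
      intro q hq
      right
      refine ⟨?_, ?_⟩
      · intro hm
        refine hedge p q ?_ hm
        rintro rfl
        exact hq (hDp _)
      · cases hpar : par q with
        | none => left; rfl
        | some q' =>
          right
          refine ⟨q', rfl, ?_⟩
          rintro ⟨q2, h2, h3⟩
          cases h2
          exact hq ⟨q, rfl, (a1 _ _ hpar).1.trans h3⟩
  have hdown : ∀ p x, x ∈ D p → (T.deleteEdges {s(some p, par p)}).Reachable x (some p) := by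
    rintro p _ ⟨q, rfl, hq⟩
    refine climb a1 _ (fun q => lab q ⊆ lab p) (some p) ?_ q hq
    intro q hq
    by_cases hqp : q = p
    · left; rw [hqp]
    · right
      refine ⟨fun hm => hedge p q hqp hm, ?_⟩
      right
      exact a3 p q hq hqp
  have hreach : ∀ x, T.Reachable x none := by
    rintro (_ | q)
    · exact Reachable.refl _
    · have : (T.deleteEdges ∅).Reachable (some q) none := by
        refine climb a1 _ (fun _ => True) none ?_ q trivial
        intro q _
        right
        refine ⟨by simp, ?_⟩
        cases par q with
        | none => left; rfl
        | some q' => right; exact ⟨q', rfl, trivial⟩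
      rwa [SimpleGraph.deleteEdges_empty] at this
  have hbr : ∀ p, T.IsBridge s(some p, par p) := by
    intro p
    rw [SimpleGraph.isBridge_iff]
    intro h
    exact hDpar p ((hstay p _ _ h).1 (hDp p))
  have htree : T.IsTree := by
    refine ⟨⟨fun x y => (hreach x).trans (hreach y).symm⟩, ?_⟩
    rw [SimpleGraph.isAcyclic_iff_forall_adj_isBridge]
    intro v w hvw
    rcases (hT _ _).1 hvw with ⟨p, rfl, rfl⟩ | ⟨p, rfl, rfl⟩
    · exact hbr p
    · rw [Sym2.eq_swap]; exact hbr p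
  let L : Option α → Set G.edgeSet := fun x => match x with
    | none => {e0}
    | some p => lab p
  have hLinj : ∀ x y, L x = L y → x = y := by
    rintro (_ | p) (_ | q) hxy
    · rfl
    · have hxy' : {e0} = lab q := hxy
      exact absurd (hxy' ▸ mem_singleton e0) (he0 q)
    · have hxy' : lab p = {e0} := hxy
      exact absurd (hxy' ▸ mem_singleton e0) (he0 p)
    · rw [hinj p q hxy]
  have hleaf : ∀ x, (∃ e, L x = {e}) → (T.neighborSet x).ncard = 1 := by
    rintro (_ | p) ⟨e, he⟩
    · rw [Set.ncard_eq_one]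
      refine ⟨some ρ, ?_⟩
      ext y
      rw [SimpleGraph.mem_neighborSet, hT, mem_singleton_iff]
      constructor
      · rintro (⟨p, h1, -⟩ | ⟨p, rfl, h1⟩)
        · cases h1
        · rw [a2'' p h1.symm]
      · rintro rfl
        exact Or.inr ⟨ρ, rfl, a2.symm⟩
    · rw [Set.ncard_eq_one]
      refine ⟨par p, ?_⟩
      ext y
      rw [SimpleGraph.mem_neighborSet, hT, mem_singleton_iff]
      rcases a4 p with ⟨-, h2⟩ | ⟨h1, -⟩
      · constructor
        · rintro (⟨p', h1, rfl⟩ | ⟨p', rfl, h1⟩)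
          · cases h1; rfl
          · exact absurd h1.symm (h2 p')
        · rintro rfl
          exact Or.inl ⟨p, rfl, rfl⟩
      · exact absurd ⟨e, he⟩ h1
  have hinner : ∀ x, (¬ ∃ e, L x = {e}) → (T.neighborSet x).ncard = 3 := by
    rintro (_ | p) he
    · exact absurd ⟨e0, rfl⟩ he
    · rcases a4 p with ⟨h1, -⟩ | ⟨-, q1, q2, h12, h3⟩
      · exact absurd h1 he
      · rw [Set.ncard_eq_three]
        have hq1 := (h3 q1).2 (Or.inl rfl)
        have hq2 := (h3 q2).2 (Or.inr rfl)
        refine ⟨par p, some q1, some q2, ?_, ?_, by simpa using h12, ?_⟩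
        · intro h; exact (a1 _ _ h).2 (a1 _ _ hq1).1
        · intro h; exact (a1 _ _ h).2 (a1 _ _ hq2).1
        · ext y
          rw [SimpleGraph.mem_neighborSet, hT]
          simp only [mem_insert_iff, mem_singleton_iff]
          constructor
          · rintro (⟨p', h1, rfl⟩ | ⟨p', rfl, h1⟩)
            · cases h1; left; rfl
            · right
              rcases (h3 p').1 h1.symm with rfl | rfl <;> simp
          · rintro (rfl | rfl | rfl)
            · exact Or.inl ⟨p, rfl, rfl⟩
            · exact Or.inr ⟨q1, rfl, hq1.symm⟩
            · exact Or.inr ⟨q2, rfl, hq2.symm⟩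
  have hex : ∀ e : G.edgeSet, ∃ x, L x = {e} := by
    intro e
    by_cases he : e = e0
    · exact ⟨none, by rw [he]⟩
    · obtain ⟨p, hp⟩ := a5 e he
      exact ⟨some p, hp⟩
  choose f hf using hex
  let τ : G.edgeSet ≃ {v : Option α // (T.neighborSet v).ncard ≤ 1} :=
    Equiv.ofBijective (fun e => ⟨f e, (hleaf (f e) ⟨e, hf e⟩).le⟩) (by
      constructor
      · intro e e' h
        have h1 : f e = f e' := congrArg Subtype.val h
        have h2 := hf e
        rw [h1, hf e'] at h2
        exact (singleton_injective h2).symm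
      · rintro ⟨x, hx⟩
        by_cases h : ∃ e, L x = {e}
        · obtain ⟨e, he⟩ := h
          refine ⟨e, Subtype.ext (hLinj _ _ ?_)⟩
          rw [hf, he]
        · rw [hinner x h] at hx
          omega)
  have hτ : ∀ e, (τ e).1 = f e := fun _ => rfl
  have hfD : ∀ e p, f e ∈ D p ↔ e ∈ lab p := by
    intro e p
    constructor
    · rintro ⟨q, h1, h2⟩
      have h3 := hf e
      rw [h1] at h3
      have h4 : lab q = {e} := h3
      exact h2 (h4 ▸ mem_singleton e)
    · intro h
      have h3 := hf e
      cases hfe : f e with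
      | none =>
        rw [hfe] at h3
        have h4 : e0 = e := singleton_injective h3
        exact absurd h (h4 ▸ he0 p)
      | some q =>
        rw [hfe] at h3
        have h4 : lab q = {e} := h3
        exact ⟨q, rfl, by rw [h4]; simpa using h⟩
  let B : BranchDecomp G :=
    { t := Option α
      fin := inferInstance
      T := T
      isTree := htree
      ternary := by
        intro v
        by_cases h : ∃ e, L v = {e}
        · exact Or.inl (hleaf v h).le
        · exact Or.inr (hinner v h)
      τ := τ }
  have hs1 : ∀ p, B.side (some p) (par p) = lab p := by
    intro p
    ext e
    show (T.deleteEdges {s(some p, par p)}).Reachable (some p) (f e) ↔ _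
    rw [← hfD]
    constructor
    · intro h; exact (hstay p _ _ h).1 (hDp p)
    · intro h; exact (hdown p _ h).symm
  have hs2 : ∀ p, B.side (par p) (some p) = (lab p)ᶜ := by
    intro p
    ext e
    show (T.deleteEdges {s(par p, some p)}).Reachable (par p) (f e) ↔ _
    rw [Sym2.eq_swap, mem_compl_iff, ← hfD]
    constructor
    · intro h h'; exact hDpar p ((hstay p _ _ h).2 h')
    · intro h; exact (hup p _ (hDpar p)).trans (hup p _ h).symm
  have hbd : ∀ a b, B.bdry a b = bdE G (B.side a b) := fun a b => rfl
  have hw : B.width ≤ k := by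
    apply csSup_le'
    rintro n ⟨a, b, hab, rfl⟩
    rcases (hT a b).1 hab with ⟨p, rfl, rfl⟩ | ⟨p, rfl, rfl⟩
    · rw [hbd, hs1]; exact a6 p
    · rw [hbd, hs2, bdE_compl]; exact a6 p
  have hle : branchwidth G ≤ B.width := Nat.sInf_le ⟨B, rfl⟩
  exact hle.trans hw

theorem branch_of_subsingleton {V : Type u} (G : SimpleGraph V) (h : Subsingleton G.edgeSet) :
    branchwidth G = 0 := by
  by_cases hne : Nonempty G.edgeSet
  · obtain ⟨e0⟩ := hne
    have hn : ∀ v : Unit, ((⊥ : SimpleGraph Unit).neighborSet v).ncard = 0 := by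
      intro v
      rw [Set.ncard_eq_zero]
      ext; simp
    let B : BranchDecomp G :=
      { t := Unit
        fin := inferInstance
        T := ⊥
        isTree := ⟨⟨fun x y => by rw [Subsingleton.elim x y]⟩, by
          rw [SimpleGraph.isAcyclic_iff_forall_adj_isBridge]
          intro v w h
          exact absurd h (by simp)⟩
        ternary := fun v => Or.inl (by rw [hn]; omega)
        τ := ⟨fun _ => ⟨(), by rw [hn]; omega⟩, fun _ => e0, fun _ => Subsingleton.elim _ _,
          fun _ => rfl⟩ }
    have hw : B.width ≤ 0 := by
      apply csSup_le'
      rintro n ⟨a, b, hab, rfl⟩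
      exact absurd hab (by simp [B])
    have : branchwidth G ≤ B.width := Nat.sInf_le ⟨B, rfl⟩
    omega
  · rcases Set.eq_empty_or_nonempty {n | ∃ B : BranchDecomp G, B.width = n} with h0 | ⟨n, B, hB⟩
    · rw [branchwidth, h0]
      simp
    · have hw : B.width ≤ 0 := by
        apply csSup_le'
        rintro n ⟨a, b, hab, rfl⟩
        have : B.bdry a b = ∅ := by
          rw [eq_empty_iff_forall_notMem]
          rintro v ⟨⟨e, -⟩, -⟩
          exact hne ⟨e⟩
        rw [this, Set.ncard_empty]
      have : branchwidth G ≤ B.width := Nat.sInf_le ⟨B, rfl⟩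
      omega

section Split

variable {E : Type u} {V : Type u}

/-- abstract boundary -/
def bdI (inc : V → E → Prop) (X : Set E) : Set V :=
  {v | (∃ e, e ∈ X ∧ inc v e) ∧ (∃ e, e ∉ X ∧ inc v e)}

/-- `Y` is closed in `X` under adjacency. -/
def ClI (adj : E → E → Prop) (Y X : Set E) : Prop :=
  Y ⊆ X ∧ ∀ e ∈ Y, ∀ e' ∈ X, adj e e' → e' ∈ Y

/-- connectedness -/
def ConnI (adj : E → E → Prop) (X : Set E) : Prop :=
  X.Nonempty ∧ ∀ Y : Set E, Y.Nonempty → ClI adj Y X → Y = X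

/-- discs -/
def DiscI (adj : E → E → Prop) (C D : Set E) : Prop :=
  D ⊆ C ∧ ConnI adj D ∧ ConnI adj (C \ D)

variable {inc : V → E → Prop} {adj : E → E → Prop}

theorem ClI.trans {X Y Z : Set E} (h : ClI adj Z Y) (h' : ClI adj Y X) : ClI adj Z X :=
  ⟨h.1.trans h'.1, fun e he e' he' ha => h.2 e he e' (h'.2 e (h.1 he) e' he' ha) ha⟩

theorem ClI.diff (hs : ∀ e e', adj e e' → adj e' e) {X Y : Set E} (h : ClI adj Y X) :
    ClI adj (X \ Y) X :=
  ⟨diff_subset, fun e he e' he' ha => ⟨he', fun h' => he.2 (h.2 e' h' e he.1 (hs _ _ ha))⟩⟩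

theorem ConnI.sub {A X Y : Set E} (hA : ConnI adj A) (hAX : A ⊆ X) (hY : ClI adj Y X)
    (hm : (A ∩ Y).Nonempty) : A ⊆ Y := by
  have := hA.2 (A ∩ Y) hm ⟨inter_subset_left, fun e he e' he' ha =>
    ⟨he', hY.2 e he.2 e' (hAX he') ha⟩⟩
  rw [← this]
  exact inter_subset_right

theorem exists_compI (hs : ∀ e e', adj e e' → adj e' e) {X : Set E} {e : E} (he : e ∈ X) :
    ∃ Y, e ∈ Y ∧ ConnI adj Y ∧ ClI adj Y X := by
  let Y : Set E := {f | ∀ Z, e ∈ Z → ClI adj Z X → f ∈ Z}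
  have h1 : e ∈ Y := fun Z hZ _ => hZ
  have h2 : ClI adj Y X := by
    refine ⟨fun f hf => hf X he ⟨Subset.rfl, fun _ _ e' he' _ => he'⟩, ?_⟩
    intro f hf f' hf' ha Z hZ hZ'
    exact hZ'.2 f (hf Z hZ hZ') f' hf' ha
  refine ⟨Y, h1, ⟨⟨e, h1⟩, ?_⟩, h2⟩
  intro Z hZ hcl
  have h3 := hcl.trans h2
  by_cases heZ : e ∈ Z
  · exact Subset.antisymm hcl.1 (fun f hf => hf Z heZ h3)
  · obtain ⟨z, hz⟩ := hZ
    have := (hcl.1 hz) (X \ Z) ⟨he, heZ⟩ (h3.diff hs)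
    exact absurd hz this.2

theorem bdI_closed (hK : ∀ X, ∀ v ∈ bdI inc X, ∃ e ∈ X, ∃ e', e' ∉ X ∧ adj e e' ∧ inc v e ∧ inc v e')
    {X Y : Set E} (h : ClI adj Y X) : bdI inc Y ⊆ bdI inc X := by
  intro v hv
  obtain ⟨e, he, e', he', ha, h1, h2⟩ := hK Y v hv
  exact ⟨⟨e, h.1 he, h1⟩, ⟨e', fun h' => he' (h.2 e he e' h' ha), h2⟩⟩

theorem bdI_compl (hK : ∀ X, ∀ v ∈ bdI inc X, ∃ e ∈ X, ∃ e', e' ∉ X ∧ adj e e' ∧ inc v e ∧ inc v e')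
    {C Y : Set E} (hC : ClI adj C univ) (h : Y ⊆ C) : bdI inc (C \ Y) = bdI inc Y := by
  ext v
  constructor
  · intro hv
    obtain ⟨e, he, e', he', ha, h1, h2⟩ := hK _ v hv
    have h3 : e' ∈ C := hC.2 e he.1 e' (mem_univ _) ha
    exact ⟨⟨e', by_contra fun h => he' ⟨h3, h⟩, h2⟩, ⟨e, he.2, h1⟩⟩
  · intro hv
    obtain ⟨e, he, e', he', ha, h1, h2⟩ := hK _ v hv
    have h3 : e' ∈ C := hC.2 e (h he) e' (mem_univ _) ha
    exact ⟨⟨e', ⟨h3, he'⟩, h2⟩, ⟨e, fun h => h.2 he, h1⟩⟩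

theorem RT_of_comps [Finite E] [Finite V] {k : ℕ} (hs : ∀ e e', adj e e' → adj e' e)
    (hK : ∀ X, ∀ v ∈ bdI inc X, ∃ e ∈ X, ∃ e', e' ∉ X ∧ adj e e' ∧ inc v e ∧ inc v e')
    (X : Set E) (hne : X.Nonempty) (hX : (bdI inc X).ncard ≤ k)
    (h : ∀ Y, ConnI adj Y → ClI adj Y X → RT (fun X => (bdI inc X).ncard ≤ k) Y) :
    RT (fun X => (bdI inc X).ncard ≤ k) X := by
  generalize hn : X.ncard = n
  induction n using Nat.strong_induction_on generalizing X with
  | _ n ih =>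
    obtain ⟨e, he⟩ := hne
    obtain ⟨Y, heY, hY1, hY2⟩ := exists_compI hs he
    by_cases hYX : (X \ Y).Nonempty
    · have h1 := h Y hY1 hY2
      have h2 : RT (fun X => (bdI inc X).ncard ≤ k) (X \ Y) := by
        refine ih (X \ Y).ncard ?_ (X \ Y) hYX ?_ ?_ rfl
        · rw [← hn]
          exact ncard_lt_ncard ⟨diff_subset, fun h => (h he).2 heY⟩ (toFinite _)
        · exact (ncard_le_ncard (bdI_closed hK (hY2.diff hs)) (toFinite _)).trans hX
        · exact fun Z hZ1 hZ2 => h Z hZ1 (hZ2.trans (hY2.diff hs))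
      have h3 : Y ∪ (X \ Y) = X := union_diff_cancel hY2.1
      have h4 := RT_node h1 h2 disjoint_sdiff_right (by rw [h3]; exact hX)
      rwa [h3] at h4
    · have h3 : Y = X := Subset.antisymm hY2.1 (by
        rw [not_nonempty_iff_eq_empty, diff_eq_empty] at hYX
        exact hYX)
      exact h3 ▸ h Y hY1 hY2

theorem conn_diff_comp (hs : ∀ e e', adj e e' → adj e' e) {C D Y : Set E} (hC : ConnI adj C)
    (hDC : D ⊆ C) (hD : ConnI adj (C \ D)) (hY : ConnI adj Y) (hYD : ClI adj Y D) :
    DiscI adj C Y := by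
  refine ⟨hYD.1.trans hDC, hY, ?_⟩
  have key : ∀ U, ClI adj U (C \ Y) → U ⊆ D → U = ∅ := by
    intro U hU hUD
    by_contra hne
    have hcl : ClI adj U C := by
      refine ⟨hU.1.trans diff_subset, fun e he e' he' ha => ?_⟩
      refine hU.2 e he e' ⟨he', fun h' => ?_⟩ ha
      exact (hU.1 he).2 (hYD.2 e' h' e (hUD he) (hs _ _ ha))
    have := hC.2 U (nonempty_iff_ne_empty.2 hne) hcl
    obtain ⟨y, hy⟩ := hY.1
    have h1 : y ∈ U := this ▸ hDC (hYD.1 hy)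
    exact (hU.1 h1).2 hy
  have hsub : C \ D ⊆ C \ Y := diff_subset_diff_right hYD.1
  refine ⟨hD.1.mono hsub, fun Z hZ hcl => ?_⟩
  by_cases hm : ((C \ D) ∩ Z).Nonempty
  · have h1 := hD.sub hsub hcl hm
    have h2 := key _ (hcl.diff hs) (fun e he => by
      by_contra h
      exact he.2 (h1 ⟨he.1.1, h⟩))
    rw [diff_eq_empty] at h2
    exact Subset.antisymm hcl.1 h2
  · have h2 := key Z hcl (fun e he => by
      by_contra h
      exact hm ⟨e, ⟨(hcl.1 he).1, h⟩, he⟩)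
    exact absurd h2 (nonempty_iff_ne_empty.1 hZ)

theorem conn_insert (hs : ∀ e e', adj e e' → adj e' e) {Y : Set E} {e y : E} (hY : ConnI adj Y)
    (hy : y ∈ Y) (ha : adj e y) : ConnI adj (Y ∪ {e}) := by
  refine ⟨⟨e, Or.inr rfl⟩, fun Z hZ hcl => ?_⟩
  have h1 : (Y ∩ Z).Nonempty := by
    obtain ⟨z, hz⟩ := hZ
    rcases hcl.1 hz with h | h
    · exact ⟨z, h, hz⟩
    · rw [mem_singleton_iff] at h
      subst h
      exact ⟨y, hy, hcl.2 z hz y (Or.inl hy) ha⟩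
  have h2 := hY.sub subset_union_left hcl h1
  refine Subset.antisymm hcl.1 (union_subset h2 ?_)
  rintro _ rfl
  exact hcl.2 y (h2 hy) _ (Or.inr rfl) (hs _ _ ha)

theorem conn_single (e : E) : ConnI adj {e} := by
  refine ⟨⟨e, rfl⟩, fun Z hZ hcl => ?_⟩
  exact (subset_singleton_iff_eq.1 hcl.1).resolve_left hZ.ne_empty

theorem RT_disc [Finite E] [Finite V] {k : ℕ} (hs : ∀ e e', adj e e' → adj e' e)
    (hK : ∀ X, ∀ v ∈ bdI inc X, ∃ e ∈ X, ∃ e', e' ∉ X ∧ adj e e' ∧ inc v e ∧ inc v e')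
    (hK0 : ∀ e e', adj e e' → ∃ v, inc v e ∧ inc v e')
    (h2 : ∀ e, {v | inc v e}.ncard ≤ 2) (hk : 2 ≤ k)
    {C : Set E} (hC : ConnI adj C) (hCu : ClI adj C univ)
    (hgrid : ∀ D, DiscI adj C D → (bdI inc D).ncard = k →
      ∃ A ⊆ D, (bdI inc A).ncard < (bdI inc D).ncard ∧ (bdI inc (D \ A)).ncard < (bdI inc D).ncard)
    (D : Set E) (hD : DiscI adj C D) (hDk : (bdI inc D).ncard ≤ k) :
    RT (fun X => (bdI inc X).ncard ≤ k) D := by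
  generalize hn : D.ncard = n
  have hsing : ∀ e, (bdI inc {e}).ncard ≤ k := by
    intro e
    refine le_trans (le_trans (ncard_le_ncard ?_ (toFinite _)) (h2 e)) hk
    rintro v ⟨⟨f, hf, hv⟩, -⟩
    rw [mem_singleton_iff] at hf
    exact hf ▸ hv
  induction n using Nat.strong_induction_on generalizing D with
  | _ n ih =>
    have step : ∀ A, A ⊆ D → A ≠ D → A.Nonempty → (bdI inc A).ncard ≤ k →
        (∀ Y, ConnI adj Y → ClI adj Y A → DiscI adj C Y) →
        RT (fun X => (bdI inc X).ncard ≤ k) A := by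
      intro A hAD hne hn0 hA hY
      refine RT_of_comps hs hK A hn0 hA ?_
      intro Y hY1 hY2
      refine ih Y.ncard ?_ Y (hY Y hY1 hY2) ?_ rfl
      · rw [← hn]
        refine ncard_lt_ncard ⟨hY2.1.trans hAD, fun h => ?_⟩ (toFinite _)
        exact hne (Subset.antisymm hAD (h.trans hY2.1))
      · exact (ncard_le_ncard (bdI_closed hK hY2) (toFinite _)).trans hA
    rcases lt_or_eq_of_le hDk with hlt | heq
    · have hex : ∃ e ∈ D, ∃ e' ∈ C \ D, adj e e' := by
        by_contra hcon
        push Not at hcon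
        have hcl : ClI adj D C := by
          refine ⟨hD.1, fun e he e' he' ha => ?_⟩
          by_contra h
          exact hcon e he e' ⟨he', h⟩ ha
        have := hC.2 D hD.2.1.1 hcl
        obtain ⟨x, hx⟩ := hD.2.2.1
        exact hx.2 (this ▸ hx.1)
      obtain ⟨e, heD, e', he', ha⟩ := hex
      have hu : {e} ∪ (D \ {e}) = D := union_diff_cancel (by simpa using heD)
      by_cases hn1 : (D \ {e}).Nonempty
      · have r1 : RT (fun X => (bdI inc X).ncard ≤ k) {e} := RT_single e (hsing e)
        have hCe : C \ (D \ {e}) = (C \ D) ∪ {e} := by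
          ext x
          simp only [mem_diff, mem_union, mem_singleton_iff]
          constructor
          · rintro ⟨h1, h2⟩
            by_cases h3 : x = e
            · exact Or.inr h3
            · exact Or.inl ⟨h1, fun h => h2 ⟨h, h3⟩⟩
          · rintro (⟨h1, h2⟩ | rfl)
            · exact ⟨h1, fun h => h2 h.1⟩
            · exact ⟨hD.1 heD, fun h => h.2 rfl⟩
        have r2 : RT (fun X => (bdI inc X).ncard ≤ k) (D \ {e}) := by
          refine step _ diff_subset ?_ hn1 ?_ ?_
          · intro h
            have : e ∈ D \ {e} := h.symm ▸ heD
            exact this.2 rfl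
          · obtain ⟨v, hv, hv'⟩ := hK0 e e' ha
            have hvD : v ∈ bdI inc D := ⟨⟨e, heD, hv⟩, ⟨e', he'.2, hv'⟩⟩
            have hsub : bdI inc (D \ {e}) ⊆ bdI inc D ∪ ({v | inc v e} \ {v}) := by
              rintro w ⟨⟨f, hf, hw⟩, ⟨g, hg, hw'⟩⟩
              by_cases hwD : w ∈ bdI inc D
              · exact Or.inl hwD
              · right
                by_cases hgD : g ∈ D
                · have : g = e := by
                    by_contra h
                    exact hg ⟨hgD, h⟩
                  subst this
                  exact ⟨hw', fun h => hwD (mem_singleton_iff.1 h ▸ hvD)⟩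
                · exact absurd ⟨⟨f, hf.1, hw⟩, ⟨g, hgD, hw'⟩⟩ hwD
            have c1 := ncard_le_ncard hsub (toFinite _)
            have c2 := ncard_union_le (bdI inc D) ({v | inc v e} \ {v})
            have c3 : ({v | inc v e} \ {v}).ncard < {v | inc v e}.ncard :=
              ncard_diff_singleton_lt_of_mem (s := {v | inc v e}) hv (toFinite _)
            have c4 := h2 e
            omega
          · intro Y hY1 hY2
            refine conn_diff_comp hs hC (diff_subset.trans hD.1) ?_ hY1 hY2
            rw [hCe]
            exact conn_insert hs hD.2.2 he' ha
        have := RT_node r1 r2 disjoint_sdiff_right (by rw [hu]; exact hDk)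
        rwa [hu] at this
      · rw [not_nonempty_iff_eq_empty] at hn1
        rw [hn1, union_empty] at hu
        rw [← hu]
        exact RT_single e (hsing e)
    · obtain ⟨A, hAD, hA1, hA2⟩ := hgrid D hD heq
      obtain ⟨e, he⟩ := hD.2.2.1
      obtain ⟨K, heK, hK1, hK2⟩ := exists_compI hs (X := C \ A) ⟨he.1, fun h => he.2 (hAD h)⟩
      have hsubK : C \ D ⊆ K := hD.2.2.sub (diff_subset_diff_right hAD) hK2 ⟨e, he, heK⟩
      have hKC : K ⊆ C := hK2.1.trans diff_subset
      have hB' : ClI adj (D ∩ K) (D \ A) := by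
        refine ⟨fun x hx => ⟨hx.1, (hK2.1 hx.2).2⟩, fun x hx x' hx' ha => ⟨hx'.1, ?_⟩⟩
        exact hK2.2 x hx.2 x' ⟨hD.1 hx'.1, hx'.2⟩ ha
      have hA' : bdI inc (C \ K) ⊆ bdI inc A := by
        rw [bdI_compl hK hCu hKC, ← bdI_compl hK hCu (hAD.trans hD.1)]
        exact bdI_closed hK hK2
      have hBC : D ∩ K ⊆ C := inter_subset_left.trans hD.1
      obtain ⟨L, heL, hL1, hL2⟩ := exists_compI hs (X := C \ (D ∩ K)) ⟨he.1, fun h => he.2 h.1⟩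
      have hsubL : C \ D ⊆ L := hD.2.2.sub (diff_subset_diff_right inter_subset_left) hL2 ⟨e, he, heL⟩
      have hLC : L ⊆ C := hL2.1.trans diff_subset
      have hB'' : bdI inc (C \ L) ⊆ bdI inc (D \ A) := by
        rw [bdI_compl hK hCu hLC]
        refine (bdI_closed hK hL2).trans ?_
        rw [bdI_compl hK hCu hBC]
        exact bdI_closed hK hB'
      have hA'' : ClI adj (D ∩ L) (C \ K) := by
        refine ⟨fun x hx => ⟨hD.1 hx.1, fun h => (hL2.1 hx.2).2 ⟨hx.1, h⟩⟩, ?_⟩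
        intro x hx x' hx' ha
        have hx'D : x' ∈ D := by
          by_contra h
          exact hx'.2 (hsubK ⟨hx'.1, h⟩)
        exact ⟨hx'D, hL2.2 x hx.2 x' ⟨hx'.1, fun h => hx'.2 h.2⟩ ha⟩
      have hBD : C \ L ⊆ D := by
        intro x hx
        by_contra h
        exact hx.2 (hsubL ⟨hx.1, h⟩)
      have hu : (D ∩ L) ∪ (C \ L) = D := by
        ext x
        constructor
        · rintro (h | h)
          · exact h.1
          · exact hBD h
        · intro h
          by_cases hxL : x ∈ L
          · exact Or.inl ⟨h, hxL⟩
          · exact Or.inr ⟨hD.1 h, hxL⟩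
      have cA : (bdI inc (D ∩ L)).ncard < (bdI inc D).ncard :=
        lt_of_le_of_lt (ncard_le_ncard ((bdI_closed hK hA'').trans hA') (toFinite _)) hA1
      have cB : (bdI inc (C \ L)).ncard < (bdI inc D).ncard :=
        lt_of_le_of_lt (ncard_le_ncard hB'' (toFinite _)) hA2
      have nA : D ∩ L ≠ D := fun h => by rw [h] at cA; exact lt_irrefl _ cA
      have nB : C \ L ≠ D := fun h => by rw [h] at cB; exact lt_irrefl _ cB
      have neA : (D ∩ L).Nonempty := by
        rw [nonempty_iff_ne_empty]
        intro h
        rw [h, empty_union] at hu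
        exact nB hu
      have neB : (C \ L).Nonempty := by
        rw [nonempty_iff_ne_empty]
        intro h
        rw [h, union_empty] at hu
        exact nA hu
      have hCK : C \ (C \ K) = K := diff_diff_cancel_left hKC
      have hCL : C \ (C \ L) = L := diff_diff_cancel_left hLC
      have rA := step _ inter_subset_left nA neA (cA.le.trans hDk) (fun Y hY1 hY2 =>
        conn_diff_comp hs hC (D := C \ K) diff_subset (by rw [hCK]; exact hK1) hY1 (hY2.trans hA''))
      have rB := step _ hBD nB neB (cB.le.trans hDk) (fun Y hY1 hY2 =>
        conn_diff_comp hs hC (D := C \ L) diff_subset (by rw [hCL]; exact hL1) hY1 hY2)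
      have := RT_node rA rB (Set.disjoint_left.2 fun x hx hx' => hx'.2 hx.2) (by rw [hu]; exact hDk)
      rwa [hu] at this

theorem RT_top [Finite E] [Finite V] {k : ℕ} (hs : ∀ e e', adj e e' → adj e' e)
    (hK : ∀ X, ∀ v ∈ bdI inc X, ∃ e ∈ X, ∃ e', e' ∉ X ∧ adj e e' ∧ inc v e ∧ inc v e')
    (hK0 : ∀ e e', adj e e' → ∃ v, inc v e ∧ inc v e')
    (h2 : ∀ e, {v | inc v e}.ncard ≤ 2) (hk : 2 ≤ k)
    (hgrid : ∀ C D, ConnI adj C → ClI adj C univ → DiscI adj C D → (bdI inc D).ncard = k →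
      ∃ A ⊆ D, (bdI inc A).ncard < (bdI inc D).ncard ∧ (bdI inc (D \ A)).ncard < (bdI inc D).ncard)
    (e0 : E) (hne : ({e0}ᶜ : Set E).Nonempty) :
    RT (fun X => (bdI inc X).ncard ≤ k) {e0}ᶜ := by
  have hsing : ∀ e, (bdI inc {e}).ncard ≤ k := by
    intro e
    refine le_trans (le_trans (ncard_le_ncard ?_ (toFinite _)) (h2 e)) hk
    rintro v ⟨⟨f, hf, hv⟩, -⟩
    rw [mem_singleton_iff] at hf
    exact hf ▸ hv
  have main : ∀ C e, ConnI adj C → ClI adj C univ → e ∈ C → ∀ Y, ConnI adj Y →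
      ClI adj Y (C \ {e}) → RT (fun X => (bdI inc X).ncard ≤ k) Y := by
    intro C e hC hCu he Y hY hYC
    have he' : {e} ⊆ C := by simpa using he
    refine RT_disc hs hK hK0 h2 hk hC hCu (fun D => hgrid C D hC hCu) Y ?_ ?_
    · refine conn_diff_comp hs hC (D := C \ {e}) diff_subset ?_ hY hYC
      rw [diff_diff_cancel_left he']
      exact conn_single e
    · refine (ncard_le_ncard (bdI_closed hK hYC) (toFinite _)).trans ?_
      rw [bdI_compl hK hCu he']
      exact hsing e
  have huniv : ClI adj (univ : Set E) univ := ⟨Subset.rfl, fun _ _ _ _ _ => mem_univ _⟩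
  refine RT_of_comps hs hK _ hne ?_ ?_
  · rw [compl_eq_univ_diff, bdI_compl hK huniv (subset_univ _)]
    exact hsing e0
  · intro Y hY hYc
    obtain ⟨C, heC, hC1, hC2⟩ := exists_compI hs (X := univ) (mem_univ e0)
    by_cases hm : (Y ∩ C).Nonempty
    · have hYC := hY.sub (subset_univ _) hC2 hm
      refine main C e0 hC1 hC2 heC Y hY ⟨fun x hx => ⟨hYC hx, hYc.1 hx⟩, ?_⟩
      intro x hx x' hx' ha
      exact hYc.2 x hx x' hx'.2 ha
    · have hYu : ClI adj Y univ := by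
        refine ⟨subset_univ _, fun x hx x' _ ha => hYc.2 x hx x' ?_ ha⟩
        intro h
        rw [mem_singleton_iff] at h
        subst h
        exact hm ⟨x, hx, hC2.2 _ heC x (mem_univ _) (hs _ _ ha)⟩
      obtain ⟨e, he⟩ := hY.1
      have r1 : RT (fun X => (bdI inc X).ncard ≤ k) {e} := RT_single e (hsing e)
      have hu : {e} ∪ (Y \ {e}) = Y := union_diff_cancel (by simpa using he)
      by_cases hn1 : (Y \ {e}).Nonempty
      · have r2 : RT (fun X => (bdI inc X).ncard ≤ k) (Y \ {e}) := by
          refine RT_of_comps hs hK _ hn1 ?_ (main Y e hY hYu he)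
          rw [bdI_compl hK hYu (by simpa using he)]
          exact hsing e
        have := RT_node r1 r2 disjoint_sdiff_right (by
          rw [hu]
          have : bdI inc Y ⊆ bdI inc univ := bdI_closed hK hYu
          have h0 : bdI inc (univ : Set E) = ∅ := by
            rw [eq_empty_iff_forall_notMem]
            rintro v ⟨-, ⟨e, he, -⟩⟩
            exact he (mem_univ _)
          rw [h0] at this
          rw [subset_empty_iff.1 this, ncard_empty]
          omega)
        rwa [hu] at this
      · rw [not_nonempty_iff_eq_empty] at hn1
        rw [hn1, union_empty] at hu
        rw [← hu]
        exact r1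

end Split

/-- A planar map of a graph. -/
structure PMap {V : Type u} (G : SimpleGraph V) where
  M : FlagSystem
  ft : Fintype M.F
  fv : M.F → V
  fe : M.F → G.edgeSet
  hinc : ∀ x, fv x ∈ (fe x : Sym2 V)
  v1 : ∀ x, fv (M.σ₁ x) = fv x
  v2 : ∀ x, fv (M.σ₂ x) = fv x
  v0 : ∀ x, fv (M.σ₀ x) ≠ fv x
  e0 : ∀ x, fe (M.σ₀ x) = fe x
  e2 : ∀ x, fe (M.σ₂ x) = fe x
  ov : ∀ x y, fv x = fv y → M.SameOrbit {M.σ₁, M.σ₂} x y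
  oe : ∀ x y, fe x = fe y → M.SameOrbit {M.σ₀, M.σ₂} x y
  sur : ∀ (e : G.edgeSet) (v : V), v ∈ (e : Sym2 V) → ∃ x, fe x = e ∧ fv x = v
  pl : M.nV + M.nF = 2 * M.nC + M.nE

theorem exists_PMap {V : Type u} [Fintype V] {G : SimpleGraph V} (h : IsPlanar G) :
    Nonempty (PMap G) := by
  obtain ⟨M, ⟨fv, fe, h1, h2, h3, h4, h5, h6, h7, h8, h9, h10⟩, hp⟩ := exists_planar_map h
  exact ⟨⟨M, M.fin, fun x => (fv x : V), fe, h1, fun x => by rw [h2], fun x => by rw [h3],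
    fun x hx => h4 x (Subtype.ext hx), h5, h6, fun x y hxy => h7 x y (Subtype.ext hxy), h8, h10, hp⟩⟩

theorem orbit_const {M : FlagSystem} {S : Set (Equiv.Perm M.F)} {β : Type*} (f : M.F → β)
    (hf : ∀ σ ∈ S, ∀ x, f (σ x) = f x) {x y : M.F} (h : M.SameOrbit S x y) : f x = f y := by
  obtain ⟨g, hg, rfl⟩ := h
  have key : ∀ x, f (g x) = f x := by
    induction hg using Subgroup.closure_induction with
    | mem σ hσ => exact fun x => hf σ hσ x
    | one => intro x; rfl
    | mul a b _ _ iha ihb => intro x; rw [Equiv.Perm.mul_apply, iha, ihb]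
    | inv a _ iha => intro x; have := iha (a⁻¹ x); simpa using this.symm
  exact (key x).symm

theorem orbit_const2 {M : FlagSystem} {σ τ : Equiv.Perm M.F} {β : Type*} (f : M.F → β)
    (h1 : ∀ x, f (σ x) = f x) (h2 : ∀ x, f (τ x) = f x) {x y : M.F} (h : M.SameOrbit {σ, τ} x y) :
    f x = f y := by
  refine orbit_const f ?_ h
  rintro ρ (rfl | rfl)
  · exact h1
  · exact h2

theorem even_card_involution {F : Type} [Fintype F] (S : Finset F) (τ : Equiv.Perm F)
    (h1 : τ * τ = 1) (h2 : ∀ x, τ x ≠ x) (h3 : ∀ x ∈ S, τ x ∈ S) : ((S.card : ℕ) : ZMod 2) = 0 := by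
  have : ∑ x ∈ S, (1 : ZMod 2) = 0 := by
    refine Finset.sum_involution (fun x _ => τ x) ?_ ?_ ?_ ?_
    · intro _ _; decide
    · intro x _ _; exact h2 x
    · intro x hx; exact h3 x hx
    · intro x _; exact invol_apply h1 x
  simpa using this

theorem exists_other_bd {F : Type} [Fintype F] (σ τ : Equiv.Perm F)
    (hσ : σ * σ = 1) (hσ' : ∀ x, σ x ≠ x) (hτ : τ * τ = 1) (hτ' : ∀ x, τ x ≠ x)
    (P d : F → Prop) (hP1 : ∀ x, P (σ x) ↔ P x) (hP2 : ∀ x, P (τ x) ↔ P x)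
    (hd : ∀ x, d (τ x) ↔ d x) (x : F) (hx : P x) (hx1 : d x) (hx2 : ¬ d (σ x)) :
    ∃ y, y ≠ x ∧ P y ∧ d y ∧ ¬ d (σ y) := by
  classical
  by_contra hcon
  push Not at hcon
  let S := Finset.univ.filter fun y => P y ∧ d y
  let S1 := S.filter fun y => d (σ y)
  let S2 := S.filter fun y => ¬ d (σ y)
  have c := Finset.card_filter_add_card_filter_not (s := S) (fun y => d (σ y))
  have c0 := even_card_involution S τ hτ hτ' (by
    intro y hy
    simp only [S, Finset.mem_filter, Finset.mem_univ, true_and] at hy ⊢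
    rwa [hP2, hd])
  have c1 := even_card_involution S1 σ hσ hσ' (by
    intro y hy
    simp only [S1, S, Finset.mem_filter, Finset.mem_univ, true_and] at hy ⊢
    rw [hP1, invol_apply hσ]
    exact ⟨⟨hy.1.1, hy.2⟩, hy.1.2⟩)
  have c2 : S2 = {x} := by
    ext y
    simp only [S2, S, Finset.mem_filter, Finset.mem_univ, true_and, Finset.mem_singleton]
    constructor
    · rintro ⟨⟨h1, h2⟩, h3⟩
      by_contra hne
      exact h3 (hcon y hne h1 h2)
    · rintro rfl
      exact ⟨⟨hx, hx1⟩, hx2⟩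
  have c3 : S1.card + S2.card = S.card := c
  rw [c2, Finset.card_singleton] at c3
  rw [← c3, Nat.cast_add, c1] at c0
  exact absurd c0 (by decide)

namespace PMap

variable {V : Type u} {G : SimpleGraph V} (m : PMap G)

/-- adjacency of edges at a corner -/
def adj (e e' : G.edgeSet) : Prop := ∃ x, m.fe x = e ∧ m.fe (m.M.σ₁ x) = e'

theorem inv0 (x : m.M.F) : m.M.σ₀ (m.M.σ₀ x) = x := by
  have := m.ft
  exact invol_apply m.M.inv₀ x
theorem inv1 (x : m.M.F) : m.M.σ₁ (m.M.σ₁ x) = x := by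
  have := m.ft
  exact invol_apply m.M.inv₁ x
theorem inv2 (x : m.M.F) : m.M.σ₂ (m.M.σ₂ x) = x := by
  have := m.ft
  exact invol_apply m.M.inv₂ x

theorem adj_symm (e e' : G.edgeSet) (h : m.adj e e') : m.adj e' e := by
  obtain ⟨x, h1, h2⟩ := h
  exact ⟨m.M.σ₁ x, h2, by rw [m.inv1, h1]⟩

/-- incidence -/
def inc (_ : PMap G) (v : V) (e : G.edgeSet) : Prop := v ∈ (e : Sym2 V)

theorem K0 (e e' : G.edgeSet) (h : m.adj e e') : ∃ v, m.inc v e ∧ m.inc v e' := by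
  obtain ⟨x, h1, h2⟩ := h
  refine ⟨m.fv x, ?_, ?_⟩
  · rw [← h1]; exact m.hinc x
  · rw [← h2, ← m.v1 x]; exact m.hinc _

theorem K1 (X : Set G.edgeSet) (v : V) (hv : v ∈ bdI m.inc X) :
    ∃ x, m.fv x = v ∧ m.fe x ∈ X ∧ m.fe (m.M.σ₁ x) ∉ X := by
  by_contra hcon
  push Not at hcon
  obtain ⟨⟨e, he, hve⟩, ⟨f, hf, hvf⟩⟩ := hv
  obtain ⟨x, hx, hxv⟩ := m.sur e v hve
  obtain ⟨y, hy, hyv⟩ := m.sur f v hvf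
  have h := orbit_const2 (fun x => m.fv x = v ∧ m.fe x ∈ X) (fun x => ?_) (fun x => ?_)
    (m.ov x y (hxv.trans hyv.symm))
  · have h1 : m.fv x = v ∧ m.fe x ∈ X := ⟨hxv, hx ▸ he⟩
    have h2 : m.fv y = v ∧ m.fe y ∈ X := h ▸ h1
    exact hf (hy ▸ h2.2)
  · simp only [m.v1, eq_iff_iff]
    constructor
    · rintro ⟨h1, h2⟩
      have := hcon (m.M.σ₁ x) (by rw [m.v1, h1]) h2
      rw [m.inv1] at this
      exact ⟨h1, this⟩
    · rintro ⟨h1, h2⟩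
      exact ⟨h1, hcon x h1 h2⟩
  · simp only [m.v2, m.e2]

theorem K1' (X : Set G.edgeSet) (v : V) (hv : v ∈ bdI m.inc X) :
    ∃ e ∈ X, ∃ e', e' ∉ X ∧ m.adj e e' ∧ m.inc v e ∧ m.inc v e' := by
  obtain ⟨x, h1, h2, h3⟩ := m.K1 X v hv
  refine ⟨m.fe x, h2, _, h3, ⟨x, rfl, rfl⟩, ?_, ?_⟩
  · rw [← h1]; exact m.hinc x
  · rw [← h1, ← m.v1]; exact m.hinc _

theorem other_end {x : m.M.F} {w w' : V} (hx : (m.fe x : Sym2 V) = s(w, w')) (hv : m.fv x = w) :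
    m.fv (m.M.σ₀ x) = w' := by
  have h1 := m.hinc (m.M.σ₀ x)
  rw [m.e0, hx, Sym2.mem_iff] at h1
  have h2 := m.v0 x
  rw [hv] at h2
  exact h1.resolve_left h2

/-- boundary flags -/
def Bd (D : Set G.edgeSet) (x : m.M.F) : Prop := m.fe x ∈ D ∧ m.fe (m.M.σ₁ x) ∉ D

theorem phiV (D : Set G.edgeSet) (x : m.M.F) (hx : m.Bd D x) :
    ∃ y, y ≠ x ∧ m.Bd D y ∧ m.fv y = m.fv x := by
  have := m.ft
  obtain ⟨y, h1, h2, h3, h4⟩ := exists_other_bd m.M.σ₁ m.M.σ₂ m.M.inv₁ m.M.fpf₁ m.M.inv₂ m.M.fpf₂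
    (fun y => m.fv y = m.fv x) (fun y => m.fe y ∈ D) (fun y => by simp only [m.v1])
    (fun y => by simp only [m.v2]) (fun y => by simp only [m.e2]) x rfl hx.1 hx.2
  exact ⟨y, h1, ⟨h3, h4⟩, h2⟩

theorem phiF (D : Set G.edgeSet) (x : m.M.F) (hx : m.Bd D x) :
    ∃ y, y ≠ x ∧ m.Bd D y ∧ m.M.SameOrbit {m.M.σ₀, m.M.σ₁} x y := by
  have := m.ft
  have hs : ∀ σ ∈ ({m.M.σ₀, m.M.σ₁} : Set (Equiv.Perm m.M.F)), ∀ y,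
      m.M.SameOrbit {m.M.σ₀, m.M.σ₁} x (σ y) ↔ m.M.SameOrbit {m.M.σ₀, m.M.σ₁} x y := by
    intro σ hσ y
    constructor
    · intro h
      exact sameOrbit_trans h (sameOrbit_symm (sameOrbit_step hσ y))
    · intro h
      exact sameOrbit_trans h (sameOrbit_step hσ y)
  obtain ⟨y, h1, h2, h3, h4⟩ := exists_other_bd m.M.σ₁ m.M.σ₀ m.M.inv₁ m.M.fpf₁ m.M.inv₀ m.M.fpf₀
    (fun y => m.M.SameOrbit {m.M.σ₀, m.M.σ₁} x y) (fun y => m.fe y ∈ D) (hs _ (by simp))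
    (hs _ (by simp)) (fun y => by simp only [m.e0]) x (sameOrbit_refl _ _ _) hx.1 hx.2
  exact ⟨y, h1, ⟨h3, h4⟩, h2⟩

end PMap

/-- sum of indicator pairs -/
noncomputable def pairSum {F : Type} (s : Finset ℕ) (Y X : ℕ → F) : F → ZMod 2 := by
  classical
  exact fun x => ∑ k ∈ s, ((if x = Y k then 1 else 0) + (if x = X (k + 1) then 1 else 0))

theorem pairSum_apply {F : Type} [DecidableEq F] (s : Finset ℕ) (Y X : ℕ → F) (x : F) :
    pairSum s Y X x = ∑ k ∈ s, ((if x = Y k then 1 else 0) + (if x = X (k + 1) then 1 else 0)) := by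
  unfold pairSum
  congr! 

theorem sum_ind {F : Type} [Fintype F] [DecidableEq F] (a : F → ZMod 2) (y : F) :
    ∑ x, a x * (if x = y then 1 else 0) = a y := by
  simp

theorem sum_pairSum {F : Type} [Fintype F] (s : Finset ℕ) (Y X : ℕ → F) (a : F → ZMod 2) :
    ∑ x, a x * pairSum s Y X x = ∑ k ∈ s, (a (Y k) + a (X (k + 1))) := by
  classical
  simp only [pairSum_apply, Finset.mul_sum]
  rw [Finset.sum_comm]
  refine Finset.sum_congr rfl fun k _ => ?_
  simp only [mul_add, Finset.sum_add_distrib, sum_ind]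

theorem pairSum_ne {F : Type} {s : Finset ℕ} {Y X : ℕ → F} {x : F} (h : pairSum s Y X x ≠ 0) :
    ∃ k ∈ s, x = Y k ∨ x = X (k + 1) := by
  classical
  rw [pairSum_apply] at h
  obtain ⟨k, hk, h⟩ := Finset.exists_ne_zero_of_sum_ne_zero h
  refine ⟨k, hk, ?_⟩
  by_contra hc
  push Not at hc
  exact h (by simp [hc.1, hc.2])

theorem tele (s : ℕ → ZMod 2) {i k : ℕ} (h : i ≤ k) :
    ∑ m ∈ Finset.Ico i k, (s m + s (m + 1)) = s i + s k := by
  induction k, h using Nat.le_induction with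
  | base => simp [z2_add_self]
  | succ k hk ih =>
    rw [Finset.sum_Ico_succ_top hk, ih]
    have := z2_add_self (s k)
    linear_combination this

/-- subgraph from an edge set -/
def subG {V : Type u} {G : SimpleGraph V} (D : Set G.edgeSet) : SimpleGraph V where
  Adj u w := ∃ h : G.Adj u w, (⟨s(u, w), h⟩ : G.edgeSet) ∈ D
  symm := ⟨by
    rintro u w ⟨h, h'⟩
    refine ⟨h.symm, ?_⟩
    have : (⟨s(w, u), h.symm⟩ : G.edgeSet) = ⟨s(u, w), h⟩ := Subtype.ext (Sym2.eq_swap)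
    rw [this]
    exact h'⟩
  loopless := ⟨fun u ⟨h, _⟩ => G.loopless.irrefl u h⟩

namespace PMap

variable {V : Type u} {G : SimpleGraph V} (m : PMap G)

theorem const_edge {X : Set G.edgeSet} {K : m.M.F → ZMod 2}
    (h0 : ∀ x, m.fe x ∈ X → K (m.M.σ₀ x) = K x) (h2 : ∀ x, m.fe x ∈ X → K (m.M.σ₂ x) = K x)
    (x y : m.M.F) (hx : m.fe x ∈ X) (hxy : m.fe x = m.fe y) : K x = K y := by
  classical
  have := orbit_const2 (fun x => if m.fe x ∈ X then K x else 0) (fun x => ?_) (fun x => ?_)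
    (m.oe x y hxy)
  · simpa [← hxy, hx] using this
  · simp only [m.e0]
    split_ifs with h
    · exact h0 x h
    · rfl
  · simp only [m.e2]
    split_ifs with h
    · exact h2 x h
    · rfl

theorem const_conn {X : Set G.edgeSet} (hX : ConnI m.adj X) {K : m.M.F → ZMod 2}
    (h0 : ∀ x, m.fe x ∈ X → K (m.M.σ₀ x) = K x) (h2 : ∀ x, m.fe x ∈ X → K (m.M.σ₂ x) = K x)
    (h1 : ∀ x, m.fe x ∈ X → m.fe (m.M.σ₁ x) ∈ X → K (m.M.σ₁ x) = K x) :
    ∃ κ, ∀ x, m.fe x ∈ X → K x = κ := by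
  obtain ⟨⟨e, he⟩, hX⟩ := hX
  have hex : ∃ x, m.fe x = e := by
    obtain ⟨v, hv⟩ : ∃ v, v ∈ (e : Sym2 V) := by
      obtain ⟨s, hs⟩ := e
      induction s using Sym2.ind with
      | _ a b => exact ⟨a, by simp⟩
    obtain ⟨x, hx, _⟩ := m.sur e v hv
    exact ⟨x, hx⟩
  obtain ⟨x0, hx0⟩ := hex
  refine ⟨K x0, ?_⟩
  have := hX {e' | e' ∈ X ∧ ∀ x, m.fe x = e' → K x = K x0}
    ⟨e, he, fun x hx => m.const_edge h0 h2 x x0 (hx ▸ he) (hx.trans hx0.symm)⟩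
    ⟨fun e h => h.1, fun e ⟨h, h'⟩ e' he' ⟨x, hx, hx'⟩ => ⟨he', fun y hy => by
      rw [m.const_edge h0 h2 y (m.M.σ₁ x) (hy ▸ he') (hy.trans hx'.symm),
        h1 x (hx ▸ h) (hx' ▸ he'), h' x hx]⟩⟩
  intro x hx
  rw [← this] at hx
  exact hx.2 x rfl

theorem const_vert {v : V} {β : Type*} {f : m.M.F → β}
    (h1 : ∀ x, m.fv x = v → f (m.M.σ₁ x) = f x) (h2 : ∀ x, m.fv x = v → f (m.M.σ₂ x) = f x)
    {x y : m.M.F} (hx : m.fv x = v) (hy : m.fv y = v) : f x = f y := by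
  classical
  have := orbit_const2 (fun z => if m.fv z = v then f z else f x) (fun x => ?_) (fun x => ?_)
    (m.ov x y (hx.trans hy.symm))
  · simpa [hx, hy] using this
  · simp only [m.v1]
    split_ifs with h
    · exact h1 x h
    · rfl
  · simp only [m.v2]
    split_ifs with h
    · exact h2 x h
    · rfl

/-- cyclic order of the boundary flags -/
structure Cyc (D : Set G.edgeSet) (n : ℕ) (X Y : ℕ → m.M.F) : Prop where
  pos : 0 < n
  bX : ∀ k, m.Bd D (X k)
  bY : ∀ k, m.Bd D (Y k)
  vv : ∀ k, m.fv (Y k) = m.fv (X k)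
  ne : ∀ k, Y k ≠ X k
  ff : ∀ k, m.M.SameOrbit {m.M.σ₀, m.M.σ₁} (Y k) (X (k + 1))
  ne' : ∀ k, X (k + 1) ≠ Y k
  cl : m.fv (X n) = m.fv (X 0)
  inj : ∀ i < n, ∀ j < n, m.fv (X i) = m.fv (X j) → i = j

theorem exists_cyc {D : Set G.edgeSet} (hne : (bdI m.inc D).Nonempty) :
    ∃ n X Y, m.Cyc D n X Y := by
  classical
  have := m.ft
  obtain ⟨v, hv⟩ := hne
  obtain ⟨x0, -, hx0⟩ := m.K1 D v hv
  choose! φV hV using m.phiV D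
  choose! φF hF using m.phiF D
  let x : ℕ → m.M.F := fun k => Nat.rec x0 (fun _ y => φF (φV y)) k
  have hxs : ∀ k, x (k + 1) = φF (φV (x k)) := fun k => rfl
  have hB : ∀ k, m.Bd D (x k) := by
    intro k
    induction k with
    | zero => exact hx0
    | succ k ih => rw [hxs]; exact (hF _ (hV _ ih).2.1).2.1
  have hex : ∃ q, ∃ p < q, m.fv (x p) = m.fv (x q) := by
    have h := not_injective_infinite_finite (fun k : ℕ => (⟨m.fv (x k), x k, rfl⟩ : Set.range m.fv))
    unfold Function.Injective at h
    push Not at h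
    obtain ⟨a, b, h1, h2⟩ := h
    have h1 : m.fv (x a) = m.fv (x b) := congrArg Subtype.val h1
    rcases lt_or_gt_of_ne h2 with h | h
    · exact ⟨b, a, h, h1⟩
    · exact ⟨a, b, h, h1.symm⟩
  obtain ⟨p, hpq, hv⟩ := Nat.find_spec hex
  have hmin : ∀ q' < Nat.find hex, ∀ p' < q', m.fv (x p') ≠ m.fv (x q') := by
    intro q' hq' p' hp' h
    exact Nat.find_min hex hq' ⟨p', hp', h⟩
  generalize Nat.find hex = q at *
  refine ⟨q - p, fun k => x (p + k), fun k => φV (x (p + k)), ?_⟩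
  constructor
  · omega
  · intro k; exact hB _
  · intro k; exact (hV _ (hB _)).2.1
  · intro k; exact (hV _ (hB _)).2.2
  · intro k; exact (hV _ (hB _)).1
  · intro k; exact (hF _ (hV _ (hB _)).2.1).2.2
  · intro k; exact (hF _ (hV _ (hB _)).2.1).1
  · simp only [add_zero]
    rw [show p + (q - p) = q by omega]; exact hv.symm
  · intro i hi j hj h
    rcases lt_trichotomy i j with h' | h' | h'
    · exact absurd h (hmin _ (by omega) _ (by omega))
    · exact h'
    · exact absurd h.symm (hmin _ (by omega) _ (by omega))

theorem pairSum_Bd {D : Set G.edgeSet} {n : ℕ} {X Y : ℕ → m.M.F} (h : m.Cyc D n X Y)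
    {s : Finset ℕ} {x} (hx : pairSum s Y X x ≠ 0) : m.Bd D x := by
  obtain ⟨k, hk, rfl | rfl⟩ := pairSum_ne hx
  · exact h.bY k
  · exact h.bX _

theorem cyc_ha {D : Set G.edgeSet} {n : ℕ} {X Y : ℕ → m.M.F} (h : m.Cyc D n X Y) {i k : ℕ}
    (hik : i ≤ k) [Fintype m.M.F] (a : m.M.F → ZMod 2) (h1 : ∀ x, a (m.M.σ₁ x) = a x)
    (h2 : ∀ x, a (m.M.σ₂ x) = a x) :
    ∑ x, a x * pairSum (Finset.Ico i k) Y X x = a (X i) + a (X k) := by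
  rw [sum_pairSum, ← tele (fun m => a (X m)) hik]
  refine Finset.sum_congr rfl fun k _ => ?_
  rw [orbit_const2 a h1 h2 (m.ov _ _ (h.vv k))]

theorem cyc_hc {D : Set G.edgeSet} {n : ℕ} {X Y : ℕ → m.M.F} (h : m.Cyc D n X Y) {i k : ℕ}
    [Fintype m.M.F] (a : m.M.F → ZMod 2) (h1 : ∀ x, a (m.M.σ₀ x) = a x)
    (h2 : ∀ x, a (m.M.σ₁ x) = a x) :
    ∑ x, a x * pairSum (Finset.Ico i k) Y X x = 0 := by
  rw [sum_pairSum]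
  refine Finset.sum_eq_zero fun k _ => ?_
  rw [orbit_const2 a h1 h2 (h.ff k), z2_add_self]

theorem cyc_all {C D : Set G.edgeSet} (hC : ClI m.adj C univ) (hD : DiscI m.adj C D)
    {n : ℕ} {X Y : ℕ → m.M.F} (h : m.Cyc D n X Y) (x : m.M.F) (hx : m.Bd D x) :
    ∃ k < n, x = Y k ∨ x = X (k + 1) := by
  classical
  have := m.ft
  let t1 := pairSum (Finset.Ico 0 n) Y X
  obtain ⟨K, k0, k1, k2⟩ := m.M.cohom m.pl t1 (fun _ => 0) (by
    intro a h1 h2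
    simp only [add_zero]
    rw [m.cyc_ha h (Nat.zero_le n) a h1 h2, orbit_const2 a h1 h2 (m.ov _ _ h.cl), z2_add_self])
    (by intros; simp) (fun a h1 h2 => m.cyc_hc h a h1 h2)
  simp only [add_zero] at k2
  have t0 : ∀ x, ¬ m.Bd D x → t1 x = 0 := fun x hx => by
    by_contra hc; exact hx (m.pairSum_Bd h hc)
  obtain ⟨κ, hκ⟩ := m.const_conn hD.2.1 (K := K) (fun x _ => k0 x) (fun x _ => k2 x) (by
    intro x h1 h2
    have := k1 x
    rwa [t0 x (fun hb => hb.2 h2), t0 _ (fun hb => hb.2 (by rwa [m.inv1])), add_zero,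
      add_zero] at this)
  obtain ⟨κ', hκ'⟩ := m.const_conn hD.2.2 (K := K) (fun x _ => k0 x) (fun x _ => k2 x) (by
    intro x h1 h2
    have := k1 x
    rwa [t0 x (fun hb => h1.2 hb.1), t0 _ (fun hb => h2.2 hb.1), add_zero,
      add_zero] at this)
  have key : ∀ x, m.Bd D x → t1 x = κ + κ' := by
    intro x hx
    have := k1 x
    rw [t0 (m.M.σ₁ x) (fun hb => hx.2 hb.1), hκ x hx.1,
      hκ' (m.M.σ₁ x) ⟨hC.2 _ (hD.1 hx.1) _ trivial ⟨x, rfl, rfl⟩, hx.2⟩] at this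
    have h3 := z2_add_self κ
    linear_combination -this + (0 : ZMod 2) * h3 - h3
  have hY : t1 (Y (n - 1)) = 1 := by
    have hp := h.pos
    change pairSum _ _ _ _ = 1
    rw [pairSum_apply, Finset.sum_eq_single (n - 1)]
    · rw [if_pos rfl, if_neg (Ne.symm (h.ne' _)), add_zero]
    · intro k hk hkn
      rw [Finset.mem_Ico] at hk
      rw [if_neg, if_neg, add_zero]
      · intro he
        by_cases hk1 : k + 1 = n - 1
        · rw [hk1] at he; exact h.ne _ he
        · have h5 := congrArg m.fv he
          rw [h.vv] at h5
          have := h.inj _ (by omega) _ (by omega) h5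
          omega
      · intro he
        have h5 := congrArg m.fv he
        rw [h.vv, h.vv] at h5
        exact hkn (h.inj _ (by omega) _ (by omega) h5).symm
    · intro hk
      exact absurd (Finset.mem_Ico.2 ⟨Nat.zero_le _, by omega⟩) hk
  have : t1 x ≠ 0 := by
    rw [key x hx, ← key _ (h.bY (n - 1)), hY]; decide
  obtain ⟨k, hk, h'⟩ := pairSum_ne this
  exact ⟨k, (Finset.mem_Ico.1 hk).2, h'⟩

theorem Bd_bd {D : Set G.edgeSet} {x} (hx : m.Bd D x) : m.fv x ∈ bdI m.inc D := by
  refine ⟨⟨_, hx.1, m.hinc x⟩, ⟨_, hx.2, ?_⟩⟩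
  rw [← m.v1]; exact m.hinc _

theorem cyc_bd {C D : Set G.edgeSet} (hC : ClI m.adj C univ) (hD : DiscI m.adj C D)
    {n : ℕ} {X Y : ℕ → m.M.F} (h : m.Cyc D n X Y) :
    bdI m.inc D = (fun k => m.fv (X k)) '' Iio n := by
  ext v
  constructor
  · intro hv
    obtain ⟨x, rfl, hx⟩ := m.K1 D v hv
    obtain ⟨k, hk, rfl | rfl⟩ := m.cyc_all hC hD h x hx
    · exact ⟨k, hk, (h.vv k).symm⟩
    · by_cases hk' : k + 1 = n
      · exact ⟨0, h.pos, by simp only [hk', h.cl]⟩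
      · exact ⟨k + 1, by simp only [mem_Iio]; omega, rfl⟩
  · rintro ⟨k, hk, rfl⟩
    exact m.Bd_bd (h.bX k)

theorem cyc_card {C D : Set G.edgeSet} (hC : ClI m.adj C univ) (hD : DiscI m.adj C D)
    {n : ℕ} {X Y : ℕ → m.M.F} (h : m.Cyc D n X Y) : (bdI m.inc D).ncard = n := by
  rw [m.cyc_bd hC hD h, Set.InjOn.ncard_image]
  · simp [Set.ncard_eq_toFinset_card']
  · intro i hi j hj hij
    exact h.inj i hi j hj hij

theorem path_t2 [Fintype m.M.F] (D : Set G.edgeSet) (Z : Set V) {u w : V}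
    (h : Relation.ReflTransGen (fun u w => (subG D).Adj u w ∧ u ∈ Z ∧ w ∈ Z) u w) :
    ∃ t2 : m.M.F → ZMod 2, (∀ x, t2 x ≠ 0 → m.fe x ∈ D ∧ m.fv x ∈ Z) ∧
      (∀ b : m.M.F → ZMod 2, (∀ x, b (m.M.σ₀ x) = b x) → ∑ x, b x * t2 x = 0) ∧
      (∀ a : m.M.F → ZMod 2, (∀ x, a (m.M.σ₁ x) = a x) → (∀ x, a (m.M.σ₂ x) = a x) →
        ∀ g h, m.fv g = u → m.fv h = w → ∑ x, a x * t2 x = a g + a h) := by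
  classical
  induction h with
  | refl =>
    refine ⟨fun _ => 0, by simp, by simp, ?_⟩
    intro a h1 h2 g h hg hh
    simp only [mul_zero, Finset.sum_const_zero]
    rw [orbit_const2 a h1 h2 (m.ov _ _ (hg.trans hh.symm)), z2_add_self]
  | tail _ hs ih =>
    rename_i w w' _
    obtain ⟨t2, i1, i2, i3⟩ := ih
    obtain ⟨⟨hA, hD⟩, hZ, hZ'⟩ := hs
    obtain ⟨f, hf, hfv⟩ := m.sur ⟨s(w, w'), hA⟩ w (by simp)
    have hfv' : m.fv (m.M.σ₀ f) = w' := m.other_end (by rw [hf]) hfv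
    refine ⟨fun x => t2 x + ((if x = f then 1 else 0) + (if x = m.M.σ₀ f then 1 else 0)),
      ?_, ?_, ?_⟩
    · intro x hx
      by_cases h1 : x = f
      · subst h1; exact ⟨hf ▸ hD, hfv ▸ hZ⟩
      · by_cases h2 : x = m.M.σ₀ f
        · subst h2
          rw [m.e0]
          exact ⟨hf ▸ hD, hfv' ▸ hZ'⟩
        · simp only [h1, h2, if_false, add_zero] at hx
          exact i1 x hx
    · intro b hb
      simp only [mul_add, Finset.sum_add_distrib, sum_ind, i2 b hb, hb, z2_add_self, add_zero]
    · intro a h1 h2 g h hg hh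
      simp only [mul_add, Finset.sum_add_distrib, sum_ind]
      rw [i3 a h1 h2 g f hg hfv, orbit_const2 a h1 h2 (m.ov _ _ (hh.trans hfv'.symm))]
      have := z2_add_self (a f)
      linear_combination this

theorem z2_flip {a b : ZMod 2} (h : a ≠ b) : a = b + 1 := by
  revert a b; decide

theorem cross_free {C D : Set G.edgeSet} (hC : ClI m.adj C univ) (hD : DiscI m.adj C D)
    {n : ℕ} {X Y : ℕ → m.M.F} (h : m.Cyc D n X Y) {i j k l : ℕ} (hij : i < j) (hjk : j < k)
    (hkl : k < l) (hl : l < n) {Z Z' : Set V} (hZ : Disjoint Z Z')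
    (hi : m.fv (X i) ∈ Z) (hk : m.fv (X k) ∈ Z) (hj : m.fv (X j) ∈ Z')
    (hp : Relation.ReflTransGen (fun u w => (subG D).Adj u w ∧ u ∈ Z ∧ w ∈ Z)
      (m.fv (X i)) (m.fv (X k)))
    (hp' : Relation.ReflTransGen (fun u w => (subG D).Adj u w ∧ u ∈ Z' ∧ w ∈ Z')
      (m.fv (X j)) (m.fv (X l))) : False := by
  classical
  have := m.ft
  obtain ⟨t2, p1, p2, p3⟩ := m.path_t2 D Z hp
  let t1 := pairSum (Finset.Ico i k) Y X
  obtain ⟨K, k0, k1, k2⟩ := m.M.cohom m.pl t1 t2 (by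
    intro a h1 h2
    simp only [mul_add, Finset.sum_add_distrib]
    rw [m.cyc_ha h (by omega) a h1 h2, p3 a h1 h2 _ _ rfl rfl, z2_add_self])
    (fun b h1 _ => p2 b h1) (fun a h1 h2 => m.cyc_hc h a h1 h2)
  have t0 : ∀ x, ¬ m.Bd D x → t1 x = 0 := fun x hx => by
    by_contra hc; exact hx (m.pairSum_Bd h hc)
  have t20 : ∀ x, m.fe x ∉ D → t2 x = 0 := fun x hx => by
    by_contra hc; exact hx (p1 x hc).1
  have t20' : ∀ x, m.fv x ∉ Z → t2 x = 0 := fun x hx => by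
    by_contra hc; exact hx (p1 x hc).2
  have k2' : ∀ x, m.fv x ∉ Z → K (m.M.σ₂ x) = K x := fun x hx => by
    have := k2 x
    rwa [t20' x hx, t20' _ (by rwa [m.v2]), add_zero, add_zero] at this
  obtain ⟨κ, hκ⟩ := m.const_conn hD.2.2 (K := K) (fun x _ => k0 x) (fun x hx => by
    have := k2 x
    rwa [t20 x hx.2, t20 _ (by rw [m.e2]; exact hx.2), add_zero, add_zero] at this) (by
    intro x h1 h2
    have := k1 x
    rwa [t0 x (fun hb => h1.2 hb.1), t0 _ (fun hb => h2.2 hb.1), add_zero,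
      add_zero] at this)
  have hκ' : ∀ x, m.Bd D x → K (m.M.σ₁ x) = κ := fun x hx =>
    hκ (m.M.σ₁ x) ⟨hC.2 _ (hD.1 hx.1) _ trivial ⟨x, rfl, rfl⟩, hx.2⟩
  -- values of t1
  have tin : ∀ q, i < q → q < k → ∀ x, m.Bd D x → m.fv x = m.fv (X q) → t1 x = 1 := by
    intro q hq1 hq2 x hx hxv
    have hcase : x = Y q ∨ x = X q := by
      obtain ⟨c, hc, rfl | rfl⟩ := m.cyc_all hC hD h x hx
      · rw [h.vv] at hxv
        have := h.inj _ hc _ (by omega) hxv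
        subst this
        exact Or.inl rfl
      · by_cases hcn : c + 1 = n
        · rw [hcn, h.cl] at hxv
          have := h.inj _ h.pos _ (by omega) hxv
          omega
        · have := h.inj _ (by omega) _ (by omega) hxv
          subst this
          exact Or.inr rfl
    change pairSum _ _ _ _ = 1
    rcases hcase with rfl | rfl
    · rw [pairSum_apply, Finset.sum_eq_single q]
      · rw [if_pos rfl, if_neg, add_zero]
        exact Ne.symm (h.ne' q)
      · intro c hc hcq
        rw [Finset.mem_Ico] at hc
        rw [if_neg, if_neg, add_zero]
        · intro he
          have h5 := congrArg m.fv he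
          rw [h.vv] at h5
          have := h.inj _ (by omega) _ (by omega) h5
          rw [← this] at he
          exact h.ne _ he
        · intro he
          have h5 := congrArg m.fv he
          rw [h.vv, h.vv] at h5
          exact hcq (h.inj _ (by omega) _ (by omega) h5).symm
      · intro hc
        exact absurd (Finset.mem_Ico.2 ⟨by omega, by omega⟩) hc
    · rw [pairSum_apply, Finset.sum_eq_single (q - 1)]
      · rw [if_neg, if_pos, zero_add]
        · congr 1; omega
        · intro he
          have h5 := congrArg m.fv he
          rw [h.vv] at h5
          have := h.inj _ (by omega) _ (by omega) h5
          omega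
      · intro c hc hcq
        rw [Finset.mem_Ico] at hc
        rw [if_neg, if_neg, add_zero]
        · intro he
          have h5 := congrArg m.fv he
          have := h.inj _ (by omega) _ (by omega) h5
          omega
        · intro he
          have h5 := congrArg m.fv he
          rw [h.vv] at h5
          have := h.inj _ (by omega) _ (by omega) h5
          rw [← this] at he
          exact h.ne _ he.symm
      · intro hc
        exact absurd (Finset.mem_Ico.2 ⟨by omega, by omega⟩) hc
  have tout : ∀ x, t1 x ≠ 0 → ∃ q, i ≤ q ∧ q ≤ k ∧ m.fv x = m.fv (X q) := by
    intro x hx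
    obtain ⟨c, hc, rfl | rfl⟩ := pairSum_ne hx
    · rw [Finset.mem_Ico] at hc
      exact ⟨c, hc.1, by omega, h.vv c⟩
    · rw [Finset.mem_Ico] at hc
      exact ⟨c + 1, by omega, by omega, rfl⟩
  have good_in : ∀ q, i < q → q < k → m.fv (X q) ∉ Z → ∀ x, m.fv x = m.fv (X q) → m.fe x ∈ D →
      K x = κ + 1 := by
    intro q hq1 hq2 hqZ x hxv hxD
    have := m.const_vert (v := m.fv (X q)) (f := fun x => K x + if m.fe x ∈ D then 1 else 0)
      (fun x hx => ?_) (fun x hx => ?_) hxv (y := m.M.σ₁ (X q)) (by rw [m.v1])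
    · simp only [hxD, if_true, (h.bX q).2, if_false, add_zero] at this
      rw [hκ' _ (h.bX q)] at this
      have h3 := z2_add_self (1 : ZMod 2)
      linear_combination this - h3
    · have e1 := k1 x
      have hx' : m.fv (m.M.σ₁ x) = m.fv (X q) := by rw [m.v1, hx]
      have i1 := m.inv1 x
      beta_reduce
      by_cases a1 : m.fe x ∈ D <;> by_cases a2 : m.fe (m.M.σ₁ x) ∈ D
      · rw [t0 x (fun hb => hb.2 a2), t0 _ (fun hb => hb.2 (by rwa [m.inv1]))] at e1
        simpa [a1, a2] using e1
      · rw [tin q hq1 hq2 x ⟨a1, a2⟩ hx, t0 _ (fun hb => a2 hb.1)] at e1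
        simpa [a1, a2] using e1
      · rw [tin q hq1 hq2 (m.M.σ₁ x) ⟨a2, by rwa [m.inv1]⟩ hx', t0 _ (fun hb => a1 hb.1)] at e1
        simpa [a1, a2] using e1
      · rw [t0 x (fun hb => a1 hb.1), t0 _ (fun hb => a2 hb.1)] at e1
        simpa [a1, a2] using e1
    · simp only [m.e2]
      rw [k2' x (hx ▸ hqZ)]
  have const_out : ∀ v, v ∉ Z → (∀ q, i ≤ q → q ≤ k → v ≠ m.fv (X q)) → ∀ x y, m.fv x = v →
      m.fv y = v → K x = K y := by
    intro v hv hq x y hx hy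
    have t0' : ∀ x, m.fv x = v → t1 x = 0 := by
      intro x hx
      by_contra hc
      obtain ⟨q, h1, h2, h3⟩ := tout x hc
      exact hq q h1 h2 (hx.symm.trans h3)
    refine m.const_vert (v := v) (fun x hx => ?_) (fun x hx => k2' x (hx ▸ hv)) hx hy
    have e1 := k1 x
    rwa [t0' x hx, t0' _ (by rw [m.v1, hx]), add_zero, add_zero] at e1
  have nZ : ∀ v, v ∈ Z' → v ∉ Z := fun v h1 h2 => Set.disjoint_left.1 hZ h2 h1
  have good : ∀ w, Relation.ReflTransGen (fun u w => (subG D).Adj u w ∧ u ∈ Z' ∧ w ∈ Z')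
      (m.fv (X j)) w → w ∈ Z' ∧ ∀ x, m.fv x = w → m.fe x ∈ D → K x = κ + 1 := by
    intro w hp'
    induction hp' with
    | refl => exact ⟨hj, good_in j hij hjk (nZ _ hj)⟩
    | tail _ hs ih =>
      rename_i w w' _
      obtain ⟨⟨hA, hAD⟩, hw, hw'⟩ := hs
      refine ⟨hw', ?_⟩
      by_cases hc : ∃ q, i ≤ q ∧ q ≤ k ∧ w' = m.fv (X q)
      · obtain ⟨q, q1, q2, rfl⟩ := hc
        have q1' : i ≠ q := by
          rintro rfl; exact nZ _ hw' hi
        have q2' : q ≠ k := by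
          rintro rfl; exact nZ _ hw' hk
        exact good_in q (by omega) (by omega) (nZ _ hw')
      · push Not at hc
        intro x hx hxD
        obtain ⟨f, hf, hfv⟩ := m.sur ⟨s(w, w'), hA⟩ w (by simp)
        have hfv' : m.fv (m.M.σ₀ f) = w' := m.other_end (by rw [hf]) hfv
        rw [const_out w' (nZ _ hw') hc x (m.M.σ₀ f) hx hfv', k0]
        exact ih.2 f hfv (hf ▸ hAD)
  have good := good _ hp'
  have g1 := good.2 (X l) rfl (h.bX l).1
  rw [const_out _ (nZ _ good.1) (fun q q1 q2 he => by
    have := h.inj _ hl _ (by omega) he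
    omega) (X l) (m.M.σ₁ (X l)) rfl (by rw [m.v1]), hκ' _ (h.bX l)] at g1
  have : (0 : ZMod 2) = 1 := by linear_combination g1
  exact absurd this (by decide)

end PMap

/-- A family of `r` vertex-disjoint paths. -/
structure Linkage {V : Type u} (H : SimpleGraph V) (r : ℕ) (p : ℕ → ℕ → V) (L : ℕ → ℕ) : Prop where
  adj : ∀ i < r, ∀ k < L i, H.Adj (p i k) (p i (k + 1))
  inj : ∀ i < r, ∀ i' < r, ∀ k ≤ L i, ∀ k' ≤ L i', p i k = p i' k' → i = i' ∧ k = k'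

theorem menger {V : Type u} [Finite V] (H : SimpleGraph V) (r : ℕ) (A : ℕ → V)
    (hA : ∀ i < r, ∀ j < r, A i = A j → i = j) (B : Set V) :
    (∃ p L, Linkage H r p L ∧ (∀ i < r, p i 0 = A i) ∧ (∀ i < r, p i (L i) ∈ B)) ∨
    (∃ X S : Set V, S.ncard < r ∧ A '' Iio r ⊆ X ∪ S ∧ Disjoint X B ∧
      ∀ u ∈ X, ∀ w, H.Adj u w → w ∈ X ∪ S) := by
  classical
  have := Fintype.ofFinite V
  let As : Finset V := (Finset.range r).image A
  have hAc : As.card = r := by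
    rw [Finset.card_image_of_injOn, Finset.card_range]
    intro i hi j hj hij
    simp only [Finset.coe_range, mem_Iio] at hi hj
    exact hA i hi j hj hij
  let N : V → Finset V := fun v => insert v (Finset.univ.filter fun w => H.Adj v w)
  let t : {v // v ∉ B} → Finset V := fun v => N v \ As
  by_cases hall : ∃ f : {v // v ∉ B} → V, Function.Injective f ∧ ∀ x, f x ∈ t x
  · left
    obtain ⟨f, hf, hft⟩ := hall
    let s : ℕ → ℕ → V := fun i k =>
      Nat.rec (A i) (fun _ v => if h : v ∈ B then v else f ⟨v, h⟩) k
    have hs0 : ∀ i, s i 0 = A i := fun i => rfl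
    have hs : ∀ i k, ∀ h : s i k ∉ B, s i (k + 1) = f ⟨s i k, h⟩ := by
      intro i k h
      change (if h : s i k ∈ B then s i k else f ⟨s i k, h⟩) = _
      rw [dif_neg h]
    have hnA : ∀ x, ∀ i < r, f x ≠ A i := by
      intro x i hi he
      have := hft x
      rw [Finset.mem_sdiff] at this
      exact this.2 (Finset.mem_image.2 ⟨i, Finset.mem_range.2 hi, he.symm⟩)
    have down : ∀ k, ∀ i < r, ∀ i' < r, ∀ k', k ≤ k' → (∀ j < k, s i j ∉ B) →
        (∀ j < k', s i' j ∉ B) → s i k = s i' k' → i = i' ∧ k = k' := by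
      intro k
      induction k with
      | zero =>
        intro i hi i' hi' k' hk _ h2 he
        cases k' with
        | zero => exact ⟨hA i hi i' hi' he, rfl⟩
        | succ k' =>
          rw [hs0, hs i' k' (h2 k' (by omega))] at he
          exact absurd he.symm (hnA _ i hi)
      | succ k ih =>
        intro i hi i' hi' k' hk h1 h2 he
        cases k' with
        | zero => omega
        | succ k' =>
          rw [hs i k (h1 k (by omega)), hs i' k' (h2 k' (by omega))] at he
          have he := congrArg Subtype.val (hf he)
          obtain ⟨h3, h4⟩ := ih i hi i' hi' k' (by omega) (fun j hj => h1 j (by omega))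
            (fun j hj => h2 j (by omega)) he
          exact ⟨h3, by omega⟩
    have term : ∀ i, i < r → ∃ k, s i k ∈ B := by
      intro i hi
      by_contra hc
      push Not at hc
      refine not_injective_infinite_finite (s i) fun k k' he => ?_
      rcases le_total k k' with h | h
      · exact (down k i hi i hi k' h (fun j _ => hc j) (fun j _ => hc j) he).2
      · exact (down k' i hi i hi k h (fun j _ => hc j) (fun j _ => hc j) he.symm).2.symm
    let L : ℕ → ℕ := fun i => if h : i < r then Nat.find (term i h) else 0
    have hL : ∀ i < r, s i (L i) ∈ B := by
      intro i hi
      simp only [L, dif_pos hi]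
      exact Nat.find_spec (term i hi)
    have hL' : ∀ i < r, ∀ k < L i, s i k ∉ B := by
      intro i hi k hk
      simp only [L, dif_pos hi] at hk
      exact Nat.find_min (term i hi) hk
    have linj : ∀ i < r, ∀ i' < r, ∀ k ≤ L i, ∀ k' ≤ L i', s i k = s i' k' → i = i' ∧ k = k' := by
      intro i hi i' hi' k hk k' hk' he
      rcases le_total k k' with h | h
      · exact down k i hi i' hi' k' h (fun j hj => hL' i hi j (by omega))
          (fun j hj => hL' i' hi' j (by omega)) he
      · have := down k' i' hi' i hi k h (fun j hj => hL' i' hi' j (by omega))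
          (fun j hj => hL' i hi j (by omega)) he.symm
        exact ⟨this.1.symm, this.2.symm⟩
    refine ⟨s, L, ⟨?_, linj⟩, fun i _ => rfl, hL⟩
    intro i hi k hk
    have h1 := hft ⟨s i k, hL' i hi k hk⟩
    rw [← hs] at h1
    simp only [t, N, Finset.mem_sdiff, Finset.mem_insert, Finset.mem_filter, Finset.mem_univ,
      true_and] at h1
    refine h1.1.resolve_left fun he => ?_
    have := (linj i hi i hi (k + 1) (by omega) k (by omega) he).2
    omega
  · right
    rw [← Finset.all_card_le_biUnion_card_iff_exists_injective] at hall
    push Not at hall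
    obtain ⟨X', hX'⟩ := hall
    let X : Finset V := X'.image Subtype.val
    have hXc : X.card = X'.card := Finset.card_image_of_injective _ Subtype.val_injective
    let NX : Finset V := X.biUnion N
    have hsub : X ⊆ NX := by
      intro x hx
      exact Finset.mem_biUnion.2 ⟨x, hx, Finset.mem_insert_self _ _⟩
    have hbi : X'.biUnion t = NX \ As := by
      ext v
      simp only [t, NX, X, Finset.mem_biUnion, Finset.mem_sdiff, Finset.mem_image]
      constructor
      · rintro ⟨x, hx, h1, h2⟩
        exact ⟨⟨x, ⟨x, hx, rfl⟩, h1⟩, h2⟩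
      · rintro ⟨⟨_, ⟨x, hx, rfl⟩, h1⟩, h2⟩
        exact ⟨x, hx, h1, h2⟩
    rw [hbi, ← hXc] at hX'
    let S : Finset V := (As \ X) ∪ ((NX \ As) \ (X \ As))
    refine ⟨↑X, ↑S, ?_, ?_, ?_, ?_⟩
    · rw [Set.ncard_coe_finset]
      have h1 : S.card ≤ (As \ X).card + ((NX \ As) \ (X \ As)).card := Finset.card_union_le _ _
      have h2 : ((NX \ As) \ (X \ As)).card = (NX \ As).card - (X \ As).card :=
        Finset.card_sdiff_of_subset (Finset.sdiff_subset_sdiff hsub (Finset.Subset.refl _))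
      have h2' : (X \ As).card ≤ (NX \ As).card :=
        Finset.card_le_card (Finset.sdiff_subset_sdiff hsub (Finset.Subset.refl _))
      have h3 := Finset.card_sdiff_add_card_inter As X
      have h4 := Finset.card_sdiff_add_card_inter X As
      rw [Finset.inter_comm] at h4
      omega
    · rintro _ ⟨i, hi, rfl⟩
      have : A i ∈ As := Finset.mem_image.2 ⟨i, Finset.mem_range.2 hi, rfl⟩
      by_cases h : A i ∈ X
      · exact Or.inl h
      · exact Or.inr (by simp [S, h, this])
    · rw [Set.disjoint_left]
      intro x hx
      simp only [X, Finset.coe_image, mem_image] at hx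
      obtain ⟨y, _, rfl⟩ := hx
      exact y.2
    · intro u hu w hw
      by_cases h : w ∈ X
      · exact Or.inl h
      · right
        have : w ∈ NX := Finset.mem_biUnion.2 ⟨u, hu, by simp [N, hw]⟩
        by_cases h' : w ∈ As <;> simp [S, h, h', this]

theorem sep_bd {V : Type u} [Finite V] {G : SimpleGraph V} (D : Set G.edgeSet) (r : ℕ)
    (inc : V → G.edgeSet → Prop) (hinc : ∀ v e, inc v e ↔ v ∈ (e : Sym2 V))
    (A B X S : Set V) (hA : A ⊆ bdI inc D) (hB : B ⊆ bdI inc D) (hAc : A.ncard = r)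
    (hBc : B.ncard = r) (hS : S.ncard < r) (hAX : A ⊆ X ∪ S) (hXB : Disjoint X B)
    (hX : ∀ u ∈ X, ∀ w, (subG D).Adj u w → w ∈ X ∪ S) :
    ∃ A' ⊆ D, (bdI inc A').ncard < (bdI inc D).ncard ∧
      (bdI inc (D \ A')).ncard < (bdI inc D).ncard := by
  classical
  have nb : ∀ e ∈ D, ∀ x ∈ X, x ∈ (e : Sym2 V) → ∀ v, v ∈ (e : Sym2 V) → v ∉ X → v ∈ S := by
    intro e he x hx hxe v hv hvX
    have hne : x ≠ v := by rintro rfl; exact hvX hx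
    have h1 : (e : Sym2 V) = s(x, v) := ((Sym2.mem_and_mem_iff hne).1 ⟨hxe, hv⟩)
    have hadj : (subG D).Adj x v := by
      have h2 : G.Adj x v := by
        have := e.2
        rw [h1] at this
        exact this
      refine ⟨h2, ?_⟩
      have : (⟨s(x, v), h2⟩ : G.edgeSet) = e := Subtype.ext h1.symm
      rw [this]; exact he
    exact (hX x hx v hadj).resolve_left hvX
  have card : ∀ T U : Set V, T ⊆ bdI inc D → T.ncard = r → U ⊆ (bdI inc D \ T) ∪ S →
      U.ncard < (bdI inc D).ncard := by
    intro T U hT hTc hU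
    have h1 : U.ncard ≤ _ := Set.ncard_le_ncard hU
    have h2 := Set.ncard_union_le (bdI inc D \ T) S
    have h3 := Set.ncard_sdiff_add_ncard_of_subset hT
    omega
  refine ⟨{e | e ∈ D ∧ ∃ x ∈ X, x ∈ (e : Sym2 V)}, fun e he => he.1, card B _ hB hBc ?_,
    card A _ hA hAc ?_⟩
  · rintro v ⟨⟨e, ⟨he, x, hx, hxe⟩, hve⟩, ⟨e', he', hve'⟩⟩
    rw [hinc] at hve
    by_cases hvX : v ∈ X
    · left
      refine ⟨⟨⟨e, he, (hinc _ _).2 hve⟩, ⟨e', fun h => he' ⟨h, v, hvX, (hinc _ _).1 hve'⟩, hve'⟩⟩,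
        Set.disjoint_left.1 hXB hvX⟩
    · right
      exact nb e he x hx hxe v hve hvX
  · rintro v ⟨⟨e, ⟨he, hne⟩, hve⟩, ⟨e', he', hve'⟩⟩
    have hvX : v ∉ X := fun h => hne ⟨he, v, h, (hinc _ _).1 hve⟩
    by_cases h1 : e' ∈ D
    · right
      have h2 : e' ∈ {e | e ∈ D ∧ ∃ x ∈ X, x ∈ (e : Sym2 V)} := by
        by_contra h; exact he' ⟨h1, h⟩
      obtain ⟨_, x, hx, hxe⟩ := h2
      exact nb e' h1 x hx hxe v ((hinc _ _).1 hve') hvX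
    · by_cases h3 : v ∈ A
      · exact Or.inr ((hAX h3).resolve_left hvX)
      · exact Or.inl ⟨⟨⟨e, he, hve⟩, ⟨e', h1, hve'⟩⟩, h3⟩

/-- consecutive positions of a walk, unordered -/
def Lk (b : ℕ → ℕ × ℕ) (t : ℕ) (y y' : ℕ × ℕ) : Prop :=
  (b t = y ∧ b (t + 1) = y') ∨ (b t = y' ∧ b (t + 1) = y)

/-- allowed steps of a walk -/
def StepOK (x y : ℕ × ℕ) : Prop :=
  (x.1 = y.1 ∧ x.2 ≤ y.2 + 1 ∧ y.2 ≤ x.2 + 1) ∨ x.1 = y.1 + 1 ∨ y.1 = x.1 + 1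

/-- walk terms -/
def sT (b : ℕ → ℕ × ℕ) (i k t : ℕ) : ZMod 2 :=
  (if (b t).1 + 1 = i ∧ (b (t + 1)).1 = i ∧ (b (t + 1)).2 < k then 1 else 0) +
  (if (b t).1 = i ∧ (b (t + 1)).1 + 1 = i ∧ (b t).2 < k then 1 else 0)

/-- walk terms -/
def dT (b : ℕ → ℕ × ℕ) (i k t : ℕ) : ZMod 2 :=
  (if (b t).1 = i + 1 ∧ (b (t + 1)).1 = i ∧ (b (t + 1)).2 < k then 1 else 0) +
  (if (b t).1 = i ∧ (b (t + 1)).1 = i + 1 ∧ (b t).2 < k then 1 else 0)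

/-- walk terms -/
def hT (b : ℕ → ℕ × ℕ) (i k t : ℕ) : ZMod 2 :=
  if (b t).1 = i ∧ (b t).2 < k then 1 else 0

theorem walk_step {b : ℕ → ℕ × ℕ} {i k t : ℕ} (h : StepOK (b t) (b (t + 1)))
    (h1 : b t ≠ (i, k)) (h2 : b (t + 1) ≠ (i, k)) :
    sT b i k t + dT b i k t = hT b i k t + hT b i k (t + 1) := by
  unfold sT dT hT
  unfold StepOK at h
  generalize b t = x at *
  generalize b (t + 1) = y at *
  obtain ⟨x1, x2⟩ := x
  obtain ⟨y1, y2⟩ := y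
  simp only [ne_eq, Prod.mk.injEq] at h1 h2 h ⊢
  split_ifs <;> first | decide | omega

theorem walk_sum {b : ℕ → ℕ × ℕ} {i k T : ℕ} (h : ∀ t < T, StepOK (b t) (b (t + 1)))
    (h1 : ∀ t ≤ T, b t ≠ (i, k)) :
    ∑ t ∈ Finset.Ico 0 T, sT b i k t + ∑ t ∈ Finset.Ico 0 T, dT b i k t =
      hT b i k 0 + hT b i k T := by
  rw [← Finset.sum_add_distrib, ← tele (hT b i k) (Nat.zero_le T)]
  refine Finset.sum_congr rfl fun t ht => ?_
  rw [Finset.mem_Ico] at ht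
  exact walk_step (h t ht.2) (h1 t (by omega)) (h1 _ (by omega))

theorem parity (a b : ℕ → ℕ × ℕ) (S T I : ℕ) (ha0 : (a 0).1 = 0) (hb0 : (b 0).1 = 0)
    (haS : (a S).1 = I) (hbT : (b T).1 = I) (haI : ∀ t ≤ S, (a t).1 ≤ I)
    (hbI : ∀ t ≤ T, (b t).1 ≤ I)
    (hsa : ∀ t < S, StepOK (a t) (a (t + 1))) (hsb : ∀ t < T, StepOK (b t) (b (t + 1)))
    (hd : ∀ s ≤ S, ∀ t ≤ T, a s ≠ b t)
    (hN : ∀ s < S, ∀ t < T, ∀ x x' y y', Lk a s x x' → Lk b t y y' → x'.1 = x.1 + 1 →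
      y.1 = x.1 → y'.1 = x.1 + 1 → (y.2 < x.2 ↔ y'.2 < x'.2)) :
    (b 0).2 < (a 0).2 ↔ (b T).2 < (a S).2 := by
  let sg : ℕ × ℕ → ZMod 2 := fun x => ∑ t ∈ Finset.Ico 0 T, sT b x.1 x.2 t + hT b x.1 x.2 0
  have hsg : ∀ s ≤ S, sg (a s) = ∑ t ∈ Finset.Ico 0 T, dT b (a s).1 (a s).2 t
      + hT b (a s).1 (a s).2 T := by
    intro s hs
    have h1 := walk_sum (i := (a s).1) (k := (a s).2) hsb (fun t ht => (hd s hs t ht).symm)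
    have h2 := z2_add_self (hT b (a s).1 (a s).2 0)
    have h3 := z2_add_self (∑ t ∈ Finset.Ico 0 T, dT b (a s).1 (a s).2 t)
    simp only [sg]
    linear_combination h1 + h2 - h3
  have vert : ∀ s < S, ∀ x x', Lk a s x x' → x'.1 = x.1 + 1 → sg x = sg x' := by
    intro s hs x x' hl hx
    have hx1 : ∃ u ≤ S, a u = x := by
      rcases hl with h | h
      · exact ⟨s, by omega, h.1⟩
      · exact ⟨s + 1, by omega, h.2⟩
    have hx1' : ∃ u ≤ S, a u = x' := by
      rcases hl with h | h
      · exact ⟨s + 1, by omega, h.2⟩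
      · exact ⟨s, by omega, h.1⟩
    obtain ⟨u, hu, hux⟩ := hx1
    obtain ⟨u', hu', hux'⟩ := hx1'
    have hxI : x'.1 ≤ I := hux' ▸ haI u' hu'
    rw [← hux, hsg u hu, hux]
    simp only [sg]
    have h1 : hT b x.1 x.2 T = 0 := by
      unfold hT; rw [if_neg]; omega
    have h2 : hT b x'.1 x'.2 0 = 0 := by
      unfold hT; rw [if_neg]; omega
    rw [h1, h2, add_zero, add_zero]
    refine Finset.sum_congr rfl fun t ht => ?_
    rw [Finset.mem_Ico] at ht
    have n1 := hN s hs t ht.2 x x' (b t) (b (t + 1)) hl (Or.inl ⟨rfl, rfl⟩) hx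
    have n2 := hN s hs t ht.2 x x' (b (t + 1)) (b t) hl (Or.inr ⟨rfl, rfl⟩) hx
    unfold sT dT
    generalize b t = y at *
    generalize b (t + 1) = y' at *
    rw [hx]
    split_ifs <;> first | rfl | decide | omega
  have step : ∀ s < S, sg (a s) = sg (a (s + 1)) := by
    intro s hs
    rcases hsa s hs with h | h | h
    · have key : ∀ t ≤ T, (b t).1 = (a s).1 → ((b t).2 < (a s).2 ↔ (b t).2 < (a (s + 1)).2) := by
        intro t ht he
        have h1 : (a s).2 ≠ (b t).2 := fun h' => hd s (by omega) t ht (Prod.ext he.symm h')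
        have h2 : (a (s + 1)).2 ≠ (b t).2 :=
          fun h' => hd (s + 1) (by omega) t ht (Prod.ext (h.1.symm.trans he.symm) h')
        omega
      simp only [sg]
      congr 1
      · refine Finset.sum_congr rfl fun t ht => ?_
        rw [Finset.mem_Ico] at ht
        have k1 := key t (by omega)
        have k2 := key (t + 1) (by omega)
        unfold sT
        rw [← h.1]
        congr 1
        · refine if_congr ?_ rfl rfl
          constructor
          · rintro ⟨e1, e2, e3⟩; exact ⟨e1, e2, (k2 e2).1 e3⟩
          · rintro ⟨e1, e2, e3⟩; exact ⟨e1, e2, (k2 e2).2 e3⟩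
        · refine if_congr ?_ rfl rfl
          constructor
          · rintro ⟨e1, e2, e3⟩; exact ⟨e1, e2, (k1 e1).1 e3⟩
          · rintro ⟨e1, e2, e3⟩; exact ⟨e1, e2, (k1 e1).2 e3⟩
      · unfold hT
        rw [← h.1]
        have k1 := key 0 (by omega)
        refine if_congr ?_ rfl rfl
        constructor
        · rintro ⟨e1, e3⟩; exact ⟨e1, (k1 e1).1 e3⟩
        · rintro ⟨e1, e3⟩; exact ⟨e1, (k1 e1).2 e3⟩
    · exact (vert s hs (a (s + 1)) (a s) (Or.inr ⟨rfl, rfl⟩) h).symm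
    · exact vert s hs (a s) (a (s + 1)) (Or.inl ⟨rfl, rfl⟩) h
  have all : ∀ s ≤ S, sg (a 0) = sg (a s) := by
    intro s hs
    induction s with
    | zero => rfl
    | succ s ih => rw [ih (by omega), step s (by omega)]
  have h0 : sg (a 0) = if (b 0).2 < (a 0).2 then 1 else 0 := by
    simp only [sg]
    rw [Finset.sum_eq_zero, zero_add]
    · unfold hT; simp [ha0, hb0]
    · intro t ht
      unfold sT
      rw [if_neg (by omega), if_neg (by omega), add_zero]
  have hS : sg (a S) = if (b T).2 < (a S).2 then 1 else 0 := by
    rw [hsg S le_rfl, Finset.sum_eq_zero, zero_add]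
    · unfold hT; simp [haS, hbT]
    · intro t ht
      rw [Finset.mem_Ico] at ht
      have h1 := hbI t (by omega)
      have h2 := hbI (t + 1) (by omega)
      unfold dT
      rw [if_neg (by omega), if_neg (by omega), add_zero]
  have := all S le_rfl
  rw [h0, hS] at this
  by_cases h1 : (b 0).2 < (a 0).2 <;> by_cases h2 : (b T).2 < (a S).2 <;> simp [h1, h2] at this ⊢

/-- edges of a family of paths -/
def EQ {V : Type u} (r : ℕ) (q : ℕ → ℕ → V) (M : ℕ → ℕ) (u v : V) : Prop :=
  ∃ j < r, ∃ m < M j, (u = q j m ∧ v = q j (m + 1)) ∨ (u = q j (m + 1) ∧ v = q j m)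

/-- linkage with prescribed ends -/
structure GoodL {V : Type u} (H : SimpleGraph V) (r : ℕ) (A : ℕ → V) (B : Set V)
    (p : ℕ → ℕ → V) (L : ℕ → ℕ) : Prop where
  lk : Linkage H r p L
  st : ∀ i < r, p i 0 = A i
  en : ∀ i < r, p i (L i) ∈ B

/-- splicing -/
def spl {V : Type u} (p b : ℕ → V) (k k' l : ℕ) (t : ℕ) : V :=
  if t ≤ k then p t else if t ≤ k + l then b (t - k) else p (t - (k + l) + k')

theorem spl1 {V : Type u} {p b : ℕ → V} {k k' l t : ℕ} (h : t ≤ k) : spl p b k k' l t = p t := by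
  unfold spl; rw [if_pos h]

theorem spl2 {V : Type u} {p b : ℕ → V} {k k' l t : ℕ} (h0 : b 0 = p k) (h : k ≤ t)
    (h' : t ≤ k + l) : spl p b k k' l t = b (t - k) := by
  unfold spl
  split_ifs with h1
  · have : t = k := by omega
    subst this; simp [h0]
  · rfl

theorem spl3 {V : Type u} {p b : ℕ → V} {k k' l t : ℕ} (h0 : b l = p k') (h : k + l ≤ t)
    (hl : 0 < l) : spl p b k k' l t = p (t - (k + l) + k') := by
  unfold spl
  rw [if_neg (by omega)]
  split_ifs with h1
  · have : t = k + l := by omega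
    subst this; simp [h0]
  · rfl

theorem splice {V : Type u} {H : SimpleGraph V} {r : ℕ} {A : ℕ → V} {B : Set V}
    {p : ℕ → ℕ → V} {L : ℕ → ℕ} (hp : GoodL H r A B p L) {i k k' l : ℕ} {b : ℕ → V} (hi : i < r)
    (hk : k < k') (hk' : k' ≤ L i) (hl : 0 < l) (b0 : b 0 = p i k) (bl : b l = p i k')
    (badj : ∀ t < l, H.Adj (b t) (b (t + 1))) (binj : ∀ s ≤ l, ∀ t ≤ l, b s = b t → s = t)
    (bav : ∀ t, 0 < t → t < l → ∀ i' < r, ∀ c ≤ L i', b t ≠ p i' c) :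
    GoodL H r A B (Function.update p i (spl (p i) b k k' l))
      (Function.update L i (k + l + (L i - k'))) := by
  have cl : ∀ t ≤ k + l + (L i - k'),
      (∃ c ≤ k, t = c ∧ spl (p i) b k k' l t = p i c) ∨
      (∃ c, 0 < c ∧ c < l ∧ t = k + c ∧ spl (p i) b k k' l t = b c) ∨
      (∃ c, k' ≤ c ∧ c ≤ L i ∧ t + k' = k + l + c ∧ spl (p i) b k k' l t = p i c) := by
    intro t ht
    by_cases h1 : t ≤ k
    · exact Or.inl ⟨t, h1, rfl, spl1 h1⟩
    · by_cases h2 : t < k + l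
      · exact Or.inr (Or.inl ⟨t - k, by omega, by omega, by omega, spl2 b0 (by omega) (by omega)⟩)
      · exact Or.inr (Or.inr ⟨t - (k + l) + k', by omega, by omega, by omega,
          spl3 bl (by omega) hl⟩)
  have aux : ∀ t ≤ k + l + (L i - k'), ∀ i' < r, i' ≠ i → ∀ c ≤ L i',
      spl (p i) b k k' l t ≠ p i' c := by
    intro t ht i' hi' hne c hc
    rcases cl t ht with ⟨d, h1, _, h3⟩ | ⟨d, h1, h1', h2, h3⟩ | ⟨d, h1, h1', h2, h3⟩ <;> rw [h3]
    · intro he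
      exact hne (hp.lk.inj i hi i' hi' d (by omega) c hc he).1.symm
    · exact bav d h1 h1' i' hi' c hc
    · intro he
      exact hne (hp.lk.inj i hi i' hi' d (by omega) c hc he).1.symm
  refine ⟨⟨?_, ?_⟩, ?_, ?_⟩
  · intro i' hi' t ht
    by_cases hii : i' = i
    · subst hii
      simp only [Function.update_self] at ht ⊢
      by_cases h1 : t < k
      · rw [spl1 (by omega), spl1 (by omega)]
        exact hp.lk.adj i' hi t (by omega)
      · by_cases h2 : t < k + l
        · rw [spl2 b0 (by omega) (by omega), spl2 b0 (by omega) (by omega),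
            show t + 1 - k = t - k + 1 by omega]
          exact badj _ (by omega)
        · rw [spl3 bl (by omega) hl, spl3 bl (by omega) hl,
            show t + 1 - (k + l) + k' = t - (k + l) + k' + 1 by omega]
          exact hp.lk.adj i' hi _ (by omega)
    · simp only [Function.update_of_ne hii] at ht ⊢
      exact hp.lk.adj i' hi' t ht
  · intro a ha a' ha' c hc c' hc' he
    by_cases h1 : a = i <;> by_cases h2 : a' = i
    · subst h1; subst h2
      simp only [Function.update_self] at hc hc' he
      refine ⟨rfl, ?_⟩
      rcases cl c hc with ⟨d, e1, e2, e3⟩ | ⟨d, e1, e1', e2, e3⟩ | ⟨d, e1, e1', e2, e3⟩ <;>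
      rcases cl c' hc' with ⟨d', f1, f2, f3⟩ | ⟨d', f1, f1', f2, f3⟩ | ⟨d', f1, f1', f2, f3⟩ <;>
      rw [e3, f3] at he
      · have := (hp.lk.inj _ hi _ hi d (by omega) d' (by omega) he).2; omega
      · exact absurd he.symm (bav d' f1 f1' _ hi d (by omega))
      · have := (hp.lk.inj _ hi _ hi d (by omega) d' (by omega) he).2; omega
      · exact absurd he (bav d e1 e1' _ hi d' (by omega))
      · have := binj d (by omega) d' (by omega) he; omega
      · exact absurd he (bav d e1 e1' _ hi d' (by omega))
      · have := (hp.lk.inj _ hi _ hi d (by omega) d' (by omega) he).2; omega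
      · exact absurd he.symm (bav d' f1 f1' _ hi d (by omega))
      · have := (hp.lk.inj _ hi _ hi d (by omega) d' (by omega) he).2; omega
    · subst h1
      simp only [Function.update_self, Function.update_of_ne h2] at hc hc' he
      exact absurd he (aux c hc a' ha' h2 c' hc')
    · subst h2
      simp only [Function.update_self, Function.update_of_ne h1] at hc hc' he
      exact absurd he.symm (aux c' hc' a ha h1 c hc)
    · simp only [Function.update_of_ne h1, Function.update_of_ne h2] at hc hc' he
      exact hp.lk.inj a ha a' ha' c hc c' hc' he
  · intro a ha
    by_cases h1 : a = i
    · subst h1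
      simp only [Function.update_self]
      rw [spl1 (by omega)]
      exact hp.st _ hi
    · simp only [Function.update_of_ne h1]
      exact hp.st a ha
  · intro a ha
    by_cases h1 : a = i
    · subst h1
      simp only [Function.update_self]
      rw [spl3 bl (by omega) hl, show k + l + (L a - k') - (k + l) + k' = L a by omega]
      exact hp.en _ hi
    · simp only [Function.update_of_ne h1]
      exact hp.en a ha

open Classical in
/-- weight of an edge -/
noncomputable def wE {V : Type u} (R : V → V → Prop) (u v : V) : ℕ := if R u v then 0 else 1

/-- weight of a linkage -/
noncomputable def wL {V : Type u} (R : V → V → Prop) (r : ℕ) (p : ℕ → ℕ → V) (L : ℕ → ℕ) : ℕ :=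
  ∑ i ∈ Finset.range r, ∑ t ∈ Finset.Ico 0 (L i), wE R (p i t) (p i (t + 1))

theorem min_edges {V : Type u} {H : SimpleGraph V} {r : ℕ} {A : ℕ → V} {B : Set V}
    {R : V → V → Prop} {p : ℕ → ℕ → V} {L : ℕ → ℕ} (hp : GoodL H r A B p L)
    (hmin : ∀ p' L', GoodL H r A B p' L' → wL R r p L ≤ wL R r p' L')
    {i k k' l : ℕ} {b : ℕ → V} (hi : i < r)
    (hk : k < k') (hk' : k' ≤ L i) (hl : 0 < l) (b0 : b 0 = p i k) (bl : b l = p i k')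
    (badj : ∀ t < l, H.Adj (b t) (b (t + 1))) (binj : ∀ s ≤ l, ∀ t ≤ l, b s = b t → s = t)
    (bav : ∀ t, 0 < t → t < l → ∀ i' < r, ∀ c ≤ L i', b t ≠ p i' c)
    (bR : ∀ t < l, R (b t) (b (t + 1))) :
    ∀ t, k ≤ t → t < k' → R (p i t) (p i (t + 1)) := by
  have h := hmin _ _ (splice hp hi hk hk' hl b0 bl badj binj bav)
  unfold wL at h
  have hmem : i ∈ Finset.range r := Finset.mem_range.2 hi
  rw [← Finset.add_sum_erase _ _ hmem, ← Finset.add_sum_erase _ _ hmem] at h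
  have h1 : ∑ i' ∈ (Finset.range r).erase i,
      ∑ t ∈ Finset.Ico 0 (Function.update L i (k + l + (L i - k')) i'),
        wE R (Function.update p i (spl (p i) b k k' l) i' t)
          (Function.update p i (spl (p i) b k k' l) i' (t + 1)) =
      ∑ i' ∈ (Finset.range r).erase i, ∑ t ∈ Finset.Ico 0 (L i'), wE R (p i' t) (p i' (t + 1)) := by
    refine Finset.sum_congr rfl fun i' hi' => ?_
    have hne : i' ≠ i := (Finset.mem_erase.1 hi').1
    simp only [Function.update_of_ne hne]
  rw [h1] at h
  simp only [Function.update_self] at h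
  rw [← Finset.sum_Ico_consecutive _ (Nat.zero_le k) (show k ≤ L i by omega),
    ← Finset.sum_Ico_consecutive _ hk.le hk',
    ← Finset.sum_Ico_consecutive _ (Nat.zero_le k) (show k ≤ k + l + (L i - k') by omega),
    ← Finset.sum_Ico_consecutive _ (show k ≤ k + l by omega)
      (show k + l ≤ k + l + (L i - k') by omega)] at h
  have h2 : ∑ t ∈ Finset.Ico 0 k, wE R (spl (p i) b k k' l t) (spl (p i) b k k' l (t + 1)) =
      ∑ t ∈ Finset.Ico 0 k, wE R (p i t) (p i (t + 1)) := by
    refine Finset.sum_congr rfl fun t ht => ?_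
    rw [Finset.mem_Ico] at ht
    rw [spl1 (by omega), spl1 (by omega)]
  have h3 : ∑ t ∈ Finset.Ico k (k + l), wE R (spl (p i) b k k' l t) (spl (p i) b k k' l (t + 1)) =
      0 := by
    refine Finset.sum_eq_zero fun t ht => ?_
    rw [Finset.mem_Ico] at ht
    rw [spl2 b0 (by omega) (by omega), spl2 b0 (by omega) (by omega),
      show t + 1 - k = t - k + 1 by omega]
    unfold wE
    rw [if_pos (bR _ (by omega))]
  have h4 : ∑ t ∈ Finset.Ico (k + l) (k + l + (L i - k')),
      wE R (spl (p i) b k k' l t) (spl (p i) b k k' l (t + 1)) =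
      ∑ t ∈ Finset.Ico k' (L i), wE R (p i t) (p i (t + 1)) := by
    rw [Finset.sum_Ico_eq_sum_range, Finset.sum_Ico_eq_sum_range]
    refine Finset.sum_congr (by congr 1; omega) fun t ht => ?_
    rw [spl3 bl (by omega) hl, spl3 bl (by omega) hl,
      show k + l + t - (k + l) + k' = k' + t by omega,
      show k + l + t + 1 - (k + l) + k' = k' + t + 1 by omega]
  rw [h2, h3, h4] at h
  have h5 : ∑ t ∈ Finset.Ico k k', wE R (p i t) (p i (t + 1)) = 0 := by omega
  rw [Finset.sum_eq_zero_iff] at h5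
  intro t ht1 ht2
  have := h5 t (Finset.mem_Ico.2 ⟨ht1, ht2⟩)
  unfold wE at this
  by_contra hc
  rw [if_neg hc] at this
  omega

theorem exists_min {V : Type u} {H : SimpleGraph V} {r : ℕ} {A : ℕ → V} {B : Set V}
    (R : V → V → Prop) (hex : ∃ p L, GoodL H r A B p L) :
    ∃ p L, GoodL H r A B p L ∧ ∀ p' L', GoodL H r A B p' L' → wL R r p L ≤ wL R r p' L' := by
  classical
  have h : ∃ n, ∃ p L, GoodL H r A B p L ∧ wL R r p L = n := by
    obtain ⟨p, L, h⟩ := hex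
    exact ⟨_, p, L, h, rfl⟩
  obtain ⟨p, L, h1, h2⟩ := Nat.find_spec h
  refine ⟨p, L, h1, fun p' L' h' => ?_⟩
  rw [h2]
  exact Nat.find_min' h ⟨p', L', h', rfl⟩

theorem EQ_next {V : Type u} {H : SimpleGraph V} {r : ℕ} {q : ℕ → ℕ → V} {M : ℕ → ℕ}
    (hq : Linkage H r q M) {j s : ℕ} (hj : j < r) (hs : s ≤ M j) {v : V}
    (h : EQ r q M (q j s) v) : (s < M j ∧ v = q j (s + 1)) ∨ (0 < s ∧ v = q j (s - 1)) := by
  obtain ⟨j', hj', m, hm, ⟨h1, h2⟩ | ⟨h1, h2⟩⟩ := h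
  · obtain ⟨rfl, rfl⟩ := hq.inj _ hj _ hj' _ hs _ hm.le h1
    exact Or.inl ⟨hm, h2⟩
  · obtain ⟨rfl, rfl⟩ := hq.inj _ hj _ hj' _ hs _ hm h1
    exact Or.inr ⟨by omega, by simpa using h2⟩

theorem bump {V : Type u} {H : SimpleGraph V} {r : ℕ} {A : ℕ → V} {B : Set V}
    {q : ℕ → ℕ → V} {M : ℕ → ℕ} (hq : Linkage H r q M)
    {p : ℕ → ℕ → V} {L : ℕ → ℕ} (hp : GoodL H r A B p L)
    (hmin : ∀ p' L', GoodL H r A B p' L' → wL (EQ r q M) r p L ≤ wL (EQ r q M) r p' L')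
    {i j k k' s s' : ℕ} (hi : i < r) (hj : j < r) (hk : k < k') (hk' : k' ≤ L i)
    (hs : s ≤ M j) (hs' : s' ≤ M j) (e : p i k = q j s) (e' : p i k' = q j s')
    (hav : ∀ t, ((s < t ∧ t < s') ∨ (s' < t ∧ t < s)) → ∀ i' < r, ∀ c ≤ L i', q j t ≠ p i' c) :
    k' = k + 1 := by
  have pin := fun c hc c' hc' he => (hp.lk.inj i hi i hi c hc c' hc' he).2
  have qin := fun c hc c' hc' he => (hq.inj j hj j hj c hc c' hc' he).2
  rcases lt_trichotomy s s' with hss | hss | hss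
  · have all := min_edges (b := fun t => q j (s + t)) (l := s' - s) hp hmin hi hk hk' (by omega) e.symm
      (by simp only [show s + (s' - s) = s' by omega]; exact e'.symm)
      (fun t ht => hq.adj j hj _ (by omega))
      (fun a ha b hb h => by have := qin _ (by omega) _ (by omega) h; omega)
      (fun t h1 h2 => hav _ (Or.inl ⟨by omega, by omega⟩))
      (fun t ht => ⟨j, hj, s + t, by omega, Or.inl ⟨rfl, rfl⟩⟩)
    have h1 := all k le_rfl hk
    rw [e] at h1
    rcases EQ_next hq hj hs h1 with ⟨h2, h3⟩ | ⟨h2, h3⟩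
    · by_cases h4 : s' = s + 1
      · subst h4
        exact pin _ hk' _ (by omega) (e'.trans h3.symm)
      · exact absurd h3.symm (hav (s + 1) (Or.inl ⟨by omega, by omega⟩) i hi _ (by omega))
    · exfalso
      have ind : ∀ t, k + t + 1 ≤ k' → ∃ u, u + (t + 1) = s ∧ p i (k + t) = q j (u + 1) ∧
          p i (k + t + 1) = q j u := by
        intro t
        induction t with
        | zero =>
          intro _
          exact ⟨s - 1, by omega, by rw [show s - 1 + 1 = s by omega]; exact e, h3⟩
        | succ t ih =>
          intro ht
          obtain ⟨u, hu, hpu, hpu'⟩ := ih (by omega)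
          have h5 := all (k + t + 1) (by omega) (by omega)
          rw [hpu'] at h5
          rcases EQ_next hq hj (by omega) h5 with ⟨h6, h7⟩ | ⟨h6, h7⟩
          · have := pin _ (by omega) _ (by omega) (hpu.trans h7.symm)
            omega
          · exact ⟨u - 1, by omega, by rw [show u - 1 + 1 = u by omega]; exact hpu', h7⟩
      obtain ⟨u, hu, _, hpu⟩ := ind (k' - k - 1) (by omega)
      rw [show k + (k' - k - 1) + 1 = k' by omega, e'] at hpu
      have := qin _ hs' _ (by omega) hpu
      omega
  · subst hss
    have := pin _ (by omega) _ hk' (e.trans e'.symm)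
    omega
  · have all := min_edges (b := fun t => q j (s - t)) (l := s - s') hp hmin hi hk hk' (by omega) e.symm
      (by simp only [show s - (s - s') = s' by omega]; exact e'.symm)
      (fun t ht => by
        have := hq.adj j hj (s - (t + 1)) (by omega)
        rw [show s - (t + 1) + 1 = s - t by omega] at this
        exact this.symm)
      (fun a ha b hb h => by have := qin _ (by omega) _ (by omega) h; omega)
      (fun t h1 h2 => hav _ (Or.inr ⟨by omega, by omega⟩))
      (fun t ht => ⟨j, hj, s - (t + 1), by omega, Or.inr ⟨by
        rw [show s - (t + 1) + 1 = s - t by omega], rfl⟩⟩)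
    have h1 := all k le_rfl hk
    rw [e] at h1
    rcases EQ_next hq hj hs h1 with ⟨h2, h3⟩ | ⟨h2, h3⟩
    · exfalso
      have ind : ∀ t, k + t + 1 ≤ k' → s + t + 1 ≤ M j ∧ p i (k + t) = q j (s + t) ∧
          p i (k + t + 1) = q j (s + t + 1) := by
        intro t
        induction t with
        | zero => intro _; exact ⟨by omega, e, h3⟩
        | succ t ih =>
          intro ht
          obtain ⟨hu, hpu, hpu'⟩ := ih (by omega)
          have h5 := all (k + t + 1) (by omega) (by omega)
          rw [hpu'] at h5
          rcases EQ_next hq hj (by omega) h5 with ⟨h6, h7⟩ | ⟨h6, h7⟩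
          · exact ⟨by omega, hpu', h7⟩
          · have := pin _ (by omega) _ (by omega) (hpu.trans h7.symm)
            omega
      obtain ⟨hu, _, hpu⟩ := ind (k' - k - 1) (by omega)
      rw [show k + (k' - k - 1) + 1 = k' by omega, e'] at hpu
      have := qin _ hs' _ (by omega) hpu
      omega
    · by_cases h4 : s' = s - 1
      · subst h4
        exact pin _ hk' _ (by omega) (e'.trans h3.symm)
      · exact absurd h3.symm (hav (s - 1) (Or.inr ⟨by omega, by omega⟩) i hi _ (by omega))

/-- reachability inside a set -/
def Rch {V : Type u} (H : SimpleGraph V) (Z : Set V) (u w : V) : Prop :=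
  Relation.ReflTransGen (fun u w => H.Adj u w ∧ u ∈ Z ∧ w ∈ Z) u w

theorem Rch.symm {V : Type u} {H : SimpleGraph V} {Z : Set V} {u w : V} (h : Rch H Z u w) :
    Rch H Z w u := by
  induction h with
  | refl => exact Relation.ReflTransGen.refl
  | tail _ hs ih => exact Relation.ReflTransGen.head ⟨hs.1.symm, hs.2.2, hs.2.1⟩ ih

theorem Rch.trans {V : Type u} {H : SimpleGraph V} {Z : Set V} {u w x : V} (h : Rch H Z u w)
    (h' : Rch H Z w x) : Rch H Z u x := Relation.ReflTransGen.trans h h'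

theorem seg_le {V : Type u} {H : SimpleGraph V} {Z : Set V} {p : ℕ → V} {a b : ℕ} (hab : a ≤ b)
    (hadj : ∀ t, a ≤ t → t < b → H.Adj (p t) (p (t + 1)))
    (hZ : ∀ t, a ≤ t → t ≤ b → p t ∈ Z) : Rch H Z (p a) (p b) := by
  induction b, hab using Nat.le_induction with
  | base => exact Relation.ReflTransGen.refl
  | succ b hb ih =>
    refine Relation.ReflTransGen.tail (ih (fun t h1 h2 => hadj t h1 (by omega))
      (fun t h1 h2 => hZ t h1 (by omega))) ?_
    exact ⟨hadj b hb (by omega), hZ b hb (by omega), hZ (b + 1) (by omega) (by omega)⟩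

theorem seg_any {V : Type u} {H : SimpleGraph V} {Z : Set V} {p : ℕ → V} {a b n : ℕ}
    (ha : a ≤ n) (hb : b ≤ n)
    (hadj : ∀ t < n, H.Adj (p t) (p (t + 1)))
    (hZ : ∀ t, (a ≤ t ∧ t ≤ b) ∨ (b ≤ t ∧ t ≤ a) → p t ∈ Z) : Rch H Z (p a) (p b) := by
  rcases le_total a b with h | h
  · exact seg_le h (fun t _ h2 => hadj t (by omega)) (fun t h1 h2 => hZ t (Or.inl ⟨h1, h2⟩))
  · exact (seg_le h (fun t _ h2 => hadj t (by omega)) (fun t h1 h2 => hZ t (Or.inr ⟨h1, h2⟩))).symm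

/-- Configuration of two crossing linkages in a disc. -/
structure Conf {V : Type u} (H : SimpleGraph V) (r : ℕ) (z : ℕ → V) (p q : ℕ → ℕ → V)
    (L M e w : ℕ → ℕ) : Prop where
  cf : ∀ i j k l, i < j → j < k → k < l → l < 4 * r - 1 → ∀ Z Z' : Set V, Disjoint Z Z' →
    z i ∈ Z → z k ∈ Z → z j ∈ Z' → z l ∈ Z' → Rch H Z (z i) (z k) → Rch H Z' (z j) (z l) → False
  P : Linkage H r p L
  Q : Linkage H r q M
  ps : ∀ i < r, p i 0 = z (r - 1 - i)
  pe : ∀ i < r, p i (L i) = z (e i)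
  qs : ∀ j < r, q j 0 = z (r + j)
  qe : ∀ j < r, q j (M j) = z (w j)
  e1 : ∀ i < r, 2 * r ≤ e i
  e2 : ∀ i < r, e i < 3 * r
  hw : ∀ j < r, w j = 0 ∨ (3 * r ≤ w j ∧ w j < 4 * r - 1)
  bump : ∀ i j k k' s s', i < r → j < r → k < k' → k' ≤ L i → s ≤ M j → s' ≤ M j →
    p i k = q j s → p i k' = q j s' →
    (∀ t, ((s < t ∧ t < s') ∨ (s' < t ∧ t < s)) → ∀ i' < r, ∀ c ≤ L i', q j t ≠ p i' c) →
    k' = k + 1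

namespace Conf

variable {V : Type u} {H : SimpleGraph V} {r : ℕ} {z : ℕ → V} {p q : ℕ → ℕ → V} {L M e w : ℕ → ℕ}

theorem row_rch (h : Conf H r z p q L M e w) {Z : Set V} {i a b : ℕ} (hi : i < r) (ha : a ≤ L i)
    (hb : b ≤ L i) (hZ : ∀ t ≤ L i, p i t ∈ Z) : Rch H Z (p i a) (p i b) :=
  seg_any ha hb (h.P.adj i hi) (fun t ht => hZ t (by omega))

theorem e_mono (h : Conf H r z p q L M e w) {i i' : ℕ} (hii : i < i') (hi' : i' < r) :
    e i < e i' := by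
  have hi : i < r := by omega
  by_contra hc
  rcases lt_or_eq_of_le (not_lt.1 hc) with hlt | heq
  · have a1 := h.ps i hi
    have a2 := h.ps i' hi'
    have a3 := h.pe i hi
    have a4 := h.pe i' hi'
    have b1 := h.e1 i' hi'
    have b2 := h.e2 i hi
    refine h.cf (r - 1 - i') (r - 1 - i) (e i') (e i) (by omega) (by omega) hlt (by omega)
      {v | ∃ c ≤ L i', v = p i' c} {v | ∃ c ≤ L i, v = p i c} ?_ ?_ ?_ ?_ ?_ ?_ ?_
    · rw [Set.disjoint_left]
      rintro v ⟨c, hc, rfl⟩ ⟨d, hd, h1⟩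
      have := (h.P.inj _ hi' _ hi _ hc _ hd h1).1
      omega
    · exact ⟨0, by omega, a2.symm⟩
    · exact ⟨_, le_rfl, a4.symm⟩
    · exact ⟨0, by omega, a1.symm⟩
    · exact ⟨_, le_rfl, a3.symm⟩
    · rw [← a2, ← a4]
      exact h.row_rch hi' (by omega) le_rfl (fun t ht => ⟨t, ht, rfl⟩)
    · rw [← a1, ← a3]
      exact h.row_rch hi (by omega) le_rfl (fun t ht => ⟨t, ht, rfl⟩)
  · have h1 := h.pe i hi
    rw [← heq, ← h.pe i' hi'] at h1
    have := (h.P.inj _ hi _ hi' _ le_rfl _ le_rfl h1).1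
    omega

theorem link_rows (h : Conf H r z p q L M e w) {i i' j k k' s s' : ℕ} (hii : i + 2 ≤ i')
    (hi' : i' < r) (hj : j < r) (hk : k ≤ L i) (hk' : k' ≤ L i') (hs : s ≤ M j) (hs' : s' ≤ M j)
    (e1 : p i k = q j s) (e1' : p i' k' = q j s')
    (hav : ∀ t, ((s < t ∧ t < s') ∨ (s' < t ∧ t < s)) → ∀ i' < r, ∀ c ≤ L i', q j t ≠ p i' c) :
    False := by
  have hi : i < r := by omega
  have a1 := h.ps i hi
  have a2 := h.ps i' hi'
  have hm : i + 1 < r := by omega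
  have a3 := h.ps (i + 1) hm
  have a4 := h.pe (i + 1) hm
  have b1 := h.e1 (i + 1) hm
  have b2 := h.e2 (i + 1) hm
  let Z : Set V := {v | (∃ c ≤ L i, v = p i c) ∨ (∃ c ≤ L i', v = p i' c) ∨
    (∀ i' < r, ∀ c ≤ L i', v ≠ p i' c)}
  refine h.cf (r - 1 - i') (r - 1 - (i + 1)) (r - 1 - i) (e (i + 1)) (by omega) (by omega) (by omega)
    (by omega) Z {v | ∃ c ≤ L (i + 1), v = p (i + 1) c} ?_ ?_ ?_ ?_ ?_ ?_ ?_
  · rw [Set.disjoint_left]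
    rintro v (⟨c, hc, rfl⟩ | ⟨c, hc, rfl⟩ | hv) ⟨d, hd, h1⟩
    · have := (h.P.inj _ hi _ hm _ hc _ hd h1).1
      omega
    · have := (h.P.inj _ hi' _ hm _ hc _ hd h1).1
      omega
    · exact hv _ hm d hd h1
  · exact Or.inr (Or.inl ⟨0, by omega, a2.symm⟩)
  · exact Or.inl ⟨0, by omega, a1.symm⟩
  · exact ⟨0, by omega, a3.symm⟩
  · exact ⟨_, le_rfl, a4.symm⟩
  · rw [← a1, ← a2]
    have r1 : Rch H Z (p i' 0) (p i' k') :=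
      h.row_rch hi' (by omega) hk' (fun t ht => Or.inr (Or.inl ⟨t, ht, rfl⟩))
    have r2 : Rch H Z (q j s') (q j s) := by
      refine seg_any hs' hs (h.Q.adj j hj) fun t ht => ?_
      by_cases t1 : t = s
      · subst t1; exact Or.inl ⟨k, hk, e1.symm⟩
      · by_cases t2 : t = s'
        · subst t2; exact Or.inr (Or.inl ⟨k', hk', e1'.symm⟩)
        · exact Or.inr (Or.inr (hav t (by omega)))
    have r3 : Rch H Z (p i k) (p i 0) :=
      h.row_rch hi hk (by omega) (fun t ht => Or.inl ⟨t, ht, rfl⟩)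
    rw [← e1, ← e1'] at r2
    exact r1.trans (r2.trans r3)
  · rw [← a3, ← a4]
    exact h.row_rch hm (by omega) le_rfl (fun t ht => ⟨t, ht, rfl⟩)

theorem first_row (h : Conf H r z p q L M e w) {i j k s : ℕ} (hi : i < r) (hj : j < r)
    (hk : k ≤ L i) (hs : s ≤ M j) (e1 : p i k = q j s)
    (hav : ∀ t < s, ∀ i' < r, ∀ c ≤ L i', q j t ≠ p i' c) : i = 0 := by
  by_contra h0
  have hr : 0 < r := by omega
  have a1 := h.ps i hi
  have a2 := h.qs j hj
  have a3 := h.ps 0 hr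
  have a4 := h.pe 0 hr
  have b1 := h.e1 0 hr
  have b2 := h.e2 0 hr
  let Z : Set V := {v | (∃ c ≤ L i, v = p i c) ∨ (∀ i' < r, ∀ c ≤ L i', v ≠ p i' c)}
  have qZ : ∀ t ≤ s, q j t ∈ Z := by
    intro t ht
    by_cases t1 : t = s
    · subst t1; exact Or.inl ⟨k, hk, e1.symm⟩
    · exact Or.inr (hav t (by omega))
  refine h.cf (r - 1 - i) (r - 1 - 0) (r + j) (e 0) (by omega) (by omega) (by omega)
    (by omega) Z {v | ∃ c ≤ L 0, v = p 0 c} ?_ ?_ ?_ ?_ ?_ ?_ ?_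
  · rw [Set.disjoint_left]
    rintro v (⟨c, hc, rfl⟩ | hv) ⟨d, hd, h1⟩
    · have := (h.P.inj _ hi _ hr _ hc _ hd h1).1
      omega
    · exact hv _ hr d hd h1
  · exact Or.inl ⟨0, by omega, a1.symm⟩
  · rw [← a2]; exact qZ 0 (by omega)
  · exact ⟨0, by omega, a3.symm⟩
  · exact ⟨_, le_rfl, a4.symm⟩
  · rw [← a1, ← a2]
    have r1 : Rch H Z (p i 0) (p i k) :=
      h.row_rch hi (by omega) hk (fun t ht => Or.inl ⟨t, ht, rfl⟩)
    have r2 : Rch H Z (q j s) (q j 0) :=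
      seg_any hs (by omega) (h.Q.adj j hj) fun t ht => qZ t (by omega)
    rw [← e1] at r2
    exact r1.trans r2
  · rw [← a3, ← a4]
    exact h.row_rch hr (by omega) le_rfl (fun t ht => ⟨t, ht, rfl⟩)

theorem meets_last (h : Conf H r z p q L M e w) {j : ℕ} (hj : j < r) :
    ∃ t ≤ M j, ∃ k ≤ L (r - 1), q j t = p (r - 1) k := by
  have hm : r - 1 < r := by omega
  have a1 := h.ps (r - 1) hm
  have a4 := h.pe (r - 1) hm
  have b1 := h.e1 (r - 1) hm
  have b2 := h.e2 (r - 1) hm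
  have a2 := h.qs j hj
  have a3 := h.qe j hj
  rw [Nat.sub_self] at a1
  rcases h.hw j hj with h0 | h0
  · refine ⟨M j, le_rfl, 0, by omega, ?_⟩
    rw [a3, a1, h0]
  · by_contra hcon
    push Not at hcon
    refine h.cf 0 (r + j) (e (r - 1)) (w j) (by omega) (by omega) (by omega)
      (by omega) {v | ∃ c ≤ L (r - 1), v = p (r - 1) c} {v | ∃ c ≤ M j, v = q j c} ?_ ?_ ?_ ?_ ?_ ?_ ?_
    · rw [Set.disjoint_left]
      rintro v ⟨c, hc, rfl⟩ ⟨d, hd, h1⟩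
      exact hcon d hd c hc h1.symm
    · exact ⟨0, by omega, a1.symm⟩
    · exact ⟨_, le_rfl, a4.symm⟩
    · exact ⟨0, by omega, a2.symm⟩
    · exact ⟨_, le_rfl, a3.symm⟩
    · rw [← a1, ← a4]
      exact h.row_rch hm (by omega) le_rfl (fun t ht => ⟨t, ht, rfl⟩)
    · rw [← a2, ← a3]
      exact seg_any (by omega) le_rfl (h.Q.adj j hj) (fun t ht => ⟨t, by omega, rfl⟩)

theorem noncross1 (h : Conf H r z p q L M e w) {i j j' k k' s s' l l' t t' : ℕ}
    (hi : i + 1 < r) (hj : j < r) (hj' : j' < r) (hjj : j ≠ j')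
    (hk : k ≤ L i) (hk' : k' ≤ L (i + 1)) (hs : s ≤ M j) (hs' : s' ≤ M j)
    (e1 : p i k = q j s) (e1' : p (i + 1) k' = q j s')
    (hav : ∀ t, ((s < t ∧ t < s') ∨ (s' < t ∧ t < s)) → ∀ i' < r, ∀ c ≤ L i', q j t ≠ p i' c)
    (hl : l ≤ L i) (hl' : l' ≤ L (i + 1)) (ht : t ≤ M j') (ht' : t' ≤ M j')
    (e2 : p i l = q j' t) (e2' : p (i + 1) l' = q j' t')
    (hav' : ∀ x, ((t < x ∧ x < t') ∨ (t' < x ∧ x < t)) → ∀ i' < r, ∀ c ≤ L i', q j' x ≠ p i' c)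
    (hlk : l < k) : l' < k' := by
  by_contra hcon
  have hne : k' ≠ l' := by
    rintro rfl
    exact hjj (h.Q.inj _ hj _ hj' _ hs' _ ht' (e1'.symm.trans e2')).1
  have hi0 : i < r := by omega
  have a1 := h.ps i hi0
  have a2 := h.ps (i + 1) hi
  have a3 := h.pe i hi0
  have a4 := h.pe (i + 1) hi
  have b1 := h.e1 i hi0
  have b2 := h.e2 (i + 1) hi
  let Z : Set V := {v | (∃ c ≤ l, v = p i c) ∨ (∃ c, l' ≤ c ∧ c ≤ L (i + 1) ∧ v = p (i + 1) c) ∨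
    ((∀ i' < r, ∀ c ≤ L i', v ≠ p i' c) ∧ ∃ c ≤ M j', v = q j' c)}
  let Z' : Set V := {v | (∃ c ≤ k', v = p (i + 1) c) ∨ (∃ c, k ≤ c ∧ c ≤ L i ∧ v = p i c) ∨
    ((∀ i' < r, ∀ c ≤ L i', v ≠ p i' c) ∧ ∃ c ≤ M j, v = q j c)}
  refine h.cf (r - 1 - (i + 1)) (r - 1 - i) (e i) (e (i + 1)) (by omega) (by omega)
    (h.e_mono (by omega) hi) (by omega) Z' Z ?_ ?_ ?_ ?_ ?_ ?_ ?_
  · rw [Set.disjoint_left]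
    rintro v (⟨c, hc, rfl⟩ | ⟨c, hc, hc', rfl⟩ | ⟨hv, c, hc, hvc⟩)
      (⟨d, hd, h1⟩ | ⟨d, hd, hd', h1⟩ | ⟨hv', d, hd, h1⟩)
    · have := (h.P.inj _ hi _ hi0 _ (by omega) _ (by omega) h1).1
      omega
    · have := (h.P.inj _ hi _ hi _ (by omega) _ (by omega) h1).2
      omega
    · exact hv' _ hi c (by omega) rfl
    · have := (h.P.inj _ hi0 _ hi0 _ (by omega) _ (by omega) h1).2
      omega
    · have := (h.P.inj _ hi0 _ hi _ (by omega) _ (by omega) h1).1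
      omega
    · exact hv' _ hi0 c (by omega) rfl
    · exact hv _ hi0 d (by omega) h1
    · exact hv _ hi d (by omega) h1
    · exact hjj (h.Q.inj _ hj _ hj' _ hc _ hd (hvc.symm.trans h1)).1
  · exact Or.inl ⟨0, by omega, a2.symm⟩
  · exact Or.inr (Or.inl ⟨_, hk, le_rfl, a3.symm⟩)
  · exact Or.inl ⟨0, by omega, a1.symm⟩
  · exact Or.inr (Or.inl ⟨_, hl', le_rfl, a4.symm⟩)
  · rw [← a2, ← a3]
    have r1 : Rch H Z' (p (i + 1) 0) (p (i + 1) k') :=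
      seg_any (by omega) hk' (h.P.adj _ hi) (fun t ht => Or.inl ⟨t, by omega, rfl⟩)
    have r2 : Rch H Z' (q j s') (q j s) := by
      refine seg_any hs' hs (h.Q.adj j hj) fun t ht => ?_
      by_cases t1 : t = s
      · subst t1; exact Or.inr (Or.inl ⟨k, le_rfl, hk, e1.symm⟩)
      · by_cases t2 : t = s'
        · subst t2; exact Or.inl ⟨k', le_rfl, e1'.symm⟩
        · exact Or.inr (Or.inr ⟨hav t (by omega), t, by omega, rfl⟩)
    have r3 : Rch H Z' (p i k) (p i (L i)) :=
      seg_any hk le_rfl (h.P.adj _ hi0) (fun t ht => Or.inr (Or.inl ⟨t, by omega, by omega, rfl⟩))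
    rw [← e1, ← e1'] at r2
    exact r1.trans (r2.trans r3)
  · rw [← a1, ← a4]
    have r1 : Rch H Z (p i 0) (p i l) :=
      seg_any (by omega) hl (h.P.adj _ hi0) (fun t ht => Or.inl ⟨t, by omega, rfl⟩)
    have r2 : Rch H Z (q j' t) (q j' t') := by
      refine seg_any ht ht' (h.Q.adj j' hj') fun x hx => ?_
      by_cases t1 : x = t
      · subst t1; exact Or.inl ⟨l, le_rfl, e2.symm⟩
      · by_cases t2 : x = t'
        · subst t2; exact Or.inr (Or.inl ⟨l', le_rfl, hl', e2'.symm⟩)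
        · exact Or.inr (Or.inr ⟨hav' x (by omega), x, by omega, rfl⟩)
    have r3 : Rch H Z (p (i + 1) l') (p (i + 1) (L (i + 1))) :=
      seg_any hl' le_rfl (h.P.adj _ hi) (fun t ht => Or.inr (Or.inl ⟨t, by omega, by omega, rfl⟩))
    rw [← e2, ← e2'] at r2
    exact r1.trans (r2.trans r3)

end Conf

theorem conn_of_rch {V : Type u} {H : SimpleGraph V} {S : Set V} {x : V} (hx : x ∈ S)
    (h : ∀ v ∈ S, Rch H S x v) : (H.induce S).Connected := by
  have key : ∀ v, Rch H S x v → ∀ hv : v ∈ S, (H.induce S).Reachable ⟨x, hx⟩ ⟨v, hv⟩ := by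
    intro v hv
    induction hv with
    | refl => intro _; exact Reachable.refl _
    | tail _ hs ih =>
      intro hv
      refine (ih hs.2.1).trans (Adj.reachable ?_)
      exact hs.1
  have : Nonempty S := ⟨⟨x, hx⟩⟩
  refine Connected.mk ?_
  rintro ⟨u, hu⟩ ⟨v, hv⟩
  exact (key u (h u hu) hu).symm.trans (key v (h v hv) hv)

/-- combinatorial data producing a grid minor -/
structure GData {V : Type u} (H : SimpleGraph V) (r : ℕ) (p q : ℕ → ℕ → V) (L M : ℕ → ℕ)
    (f g d a : ℕ → ℕ → ℕ) : Prop where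
  P : Linkage H r p L
  Q : Linkage H r q M
  fL : ∀ i < r, ∀ c < r, f i c ≤ L i
  gL : ∀ i < r, ∀ c < r, g i c ≤ L i
  ff : ∀ i < r, ∀ c c', c < c' → c' < r → f i c < f i c'
  fg : ∀ i < r, ∀ c c', c < c' → c' < r → f i c < g i c'
  gf : ∀ i < r, ∀ c c', c < c' → c' < r → g i c < f i c'
  gg : ∀ i < r, ∀ c c', c < c' → c' < r → g i c < g i c'
  fe : ∀ i < r, ∀ c < r, p i (f i c) = q c (d i c)
  ge : ∀ i, i + 1 < r → ∀ c < r, p i (g i c) = q c (a i c)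
  da : ∀ i, i + 1 < r → ∀ c < r, d i c ≤ a i c
  ad : ∀ i, i + 1 < r → ∀ c < r, a i c < d (i + 1) c
  dM : ∀ i < r, ∀ c < r, d i c ≤ M c
  av : ∀ i, i + 1 < r → ∀ c < r, ∀ t, a i c < t → t < d (i + 1) c →
    ∀ i' < r, ∀ k ≤ L i', q c t ≠ p i' k

namespace GData

variable {V : Type u} {H : SimpleGraph V} {r : ℕ} {p q : ℕ → ℕ → V} {L M : ℕ → ℕ}
  {f g d a : ℕ → ℕ → ℕ}

/-- left end -/
def lo (f g : ℕ → ℕ → ℕ) (i c : ℕ) : ℕ := min (f i c) (g i c)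

/-- right end -/
def up (r : ℕ) (L : ℕ → ℕ) (f g : ℕ → ℕ → ℕ) (i c : ℕ) : ℕ :=
  if c + 1 < r then lo f g i (c + 1) else L i + 1

/-- branch sets -/
def br (r : ℕ) (p q : ℕ → ℕ → V) (L : ℕ → ℕ) (f g d a : ℕ → ℕ → ℕ) (i c : ℕ) : Set V :=
  {v | (∃ k, lo f g i c ≤ k ∧ k < up r L f g i c ∧ v = p i k) ∨
    (i + 1 < r ∧ ∃ t, a i c ≤ t ∧ t < d (i + 1) c ∧ v = q c t)}

theorem lo_lt (h : GData H r p q L M f g d a) {i c c' : ℕ} (hi : i < r) (hc : c < c')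
    (hc' : c' < r) : lo f g i c < lo f g i c' := by
  have h1 := h.ff i hi c c' hc hc'
  have h2 := h.fg i hi c c' hc hc'
  have h3 := h.gf i hi c c' hc hc'
  have h4 := h.gg i hi c c' hc hc'
  unfold lo; omega

theorem mem_up (h : GData H r p q L M f g d a) {i c : ℕ} (hi : i < r) (hc : c < r) :
    f i c < up r L f g i c ∧ g i c < up r L f g i c ∧ up r L f g i c ≤ L i + 1 := by
  have l1 := h.fL i hi c hc
  have l2 := h.gL i hi c hc
  unfold up
  split_ifs with h0
  · have h1 := h.ff i hi c (c + 1) (by omega) h0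
    have h2 := h.fg i hi c (c + 1) (by omega) h0
    have h3 := h.gf i hi c (c + 1) (by omega) h0
    have h4 := h.gg i hi c (c + 1) (by omega) h0
    have l3 := h.fL i hi (c + 1) h0
    unfold lo; omega
  · omega

theorem up_le (h : GData H r p q L M f g d a) {i c c' : ℕ} (hi : i < r) (hc : c < c')
    (hc' : c' < r) : up r L f g i c ≤ lo f g i c' := by
  unfold up
  rw [if_pos (by omega)]
  rcases Nat.lt_or_ge (c + 1) c' with h1 | h1
  · exact (h.lo_lt hi h1 hc').le
  · have : c' = c + 1 := by omega
    rw [this]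

theorem d_mono (h : GData H r p q L M f g d a) {c : ℕ} (hc : c < r) {i i' : ℕ} (hii : i ≤ i')
    (hi' : i' < r) : d i c ≤ d i' c := by
  induction i', hii using Nat.le_induction with
  | base => exact le_rfl
  | succ n hn ih =>
    have := ih (by omega)
    have h1 := h.da n hi' c hc
    have h2 := h.ad n hi' c hc
    omega

theorem br_conn (h : GData H r p q L M f g d a) {i c : ℕ} (hi : i < r) (hc : c < r) :
    (H.induce (br r p q L f g d a i c)).Connected := by
  obtain ⟨u1, u2, u3⟩ := h.mem_up hi hc
  have hl1 : lo f g i c ≤ f i c := by unfold lo; omega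
  have hl2 : lo f g i c ≤ g i c := by unfold lo; omega
  have hS : ∀ k, lo f g i c ≤ k → k < up r L f g i c → p i k ∈ br r p q L f g d a i c :=
    fun k h1 h2 => Or.inl ⟨k, h1, h2, rfl⟩
  have hR : ∀ k, lo f g i c ≤ k → k < up r L f g i c →
      Rch H (br r p q L f g d a i c) (p i (g i c)) (p i k) := by
    intro k h1 h2
    refine seg_any (n := L i) (by omega) (by omega) (h.P.adj i hi) ?_
    intro t ht
    exact hS t (by omega) (by omega)
  refine conn_of_rch (hS _ hl2 u2) ?_
  rintro v (⟨k, h1, h2, rfl⟩ | ⟨hi1, t, h1, h2, rfl⟩)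
  · exact hR k h1 h2
  · rw [h.ge i hi1 c hc]
    have hM := h.dM (i + 1) hi1 c hc
    refine seg_any (n := M c) (by omega) (by omega) (h.Q.adj c hc) ?_
    intro t' ht'
    exact Or.inr ⟨hi1, t', by omega, by omega, rfl⟩

theorem seg_link (h : GData H r p q L M f g d a) {i c i' c' k t : ℕ} (hi : i < r) (hc : c < r)
    (hi' : i' + 1 < r) (hc' : c' < r) (h1 : lo f g i c ≤ k) (h2 : k < up r L f g i c)
    (h3 : a i' c' ≤ t) (h4 : t < d (i' + 1) c') (e : p i k = q c' t) : i = i' ∧ c = c' := by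
  obtain ⟨u1, u2, u3⟩ := h.mem_up hi hc
  rcases Nat.lt_or_ge (a i' c') t with h5 | h5
  · exact absurd e.symm (h.av i' hi' c' hc' t h5 h4 i hi k (by omega))
  · have h6 : t = a i' c' := by omega
    subst h6
    rw [← h.ge i' hi' c' hc'] at e
    have hg := h.gL i' (by omega) c' hc'
    obtain ⟨rfl, rfl⟩ := h.P.inj _ hi _ (by omega) _ (by omega) _ hg e
    refine ⟨rfl, ?_⟩
    obtain ⟨v1, v2, v3⟩ := h.mem_up hi hc'
    have hl2 : lo f g i c' ≤ g i c' := by unfold lo; omega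
    rcases lt_trichotomy c c' with hlt | heq | hlt
    · have := h.up_le hi hlt hc'; omega
    · exact heq
    · have := h.up_le hi hlt hc; omega

theorem br_disj (h : GData H r p q L M f g d a) {i c i' c' : ℕ} (hi : i < r) (hc : c < r)
    (hi' : i' < r) (hc' : c' < r) {v : V} (h1 : v ∈ br r p q L f g d a i c)
    (h2 : v ∈ br r p q L f g d a i' c') : i = i' ∧ c = c' := by
  rcases h1 with ⟨k, k1, k2, rfl⟩ | ⟨j1, t, t1, t2, rfl⟩ <;>
    rcases h2 with ⟨k', k1', k2', e⟩ | ⟨j1', t', t1', t2', e⟩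
  · have u := (h.mem_up hi hc).2.2
    have u' := (h.mem_up hi' hc').2.2
    obtain ⟨rfl, rfl⟩ := h.P.inj _ hi _ hi' _ (by omega) _ (by omega) e
    refine ⟨rfl, ?_⟩
    rcases lt_trichotomy c c' with hlt | heq | hlt
    · have := h.up_le hi hlt hc'; omega
    · exact heq
    · have := h.up_le hi hlt hc; omega
  · exact h.seg_link hi hc j1' hc' k1 k2 t1' t2' e
  · have := h.seg_link hi' hc' j1 hc k1' k2' t1 t2 e.symm
    exact ⟨this.1.symm, this.2.symm⟩
  · have m1 := h.dM _ j1 c hc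
    have m2 := h.dM _ j1' c' hc'
    obtain ⟨rfl, rfl⟩ := h.Q.inj _ hc _ hc' _ (by omega) _ (by omega) e
    refine ⟨?_, rfl⟩
    rcases lt_trichotomy i i' with hlt | heq | hlt
    · have := h.d_mono hc (show i + 1 ≤ i' by omega) hi'
      have := h.da i' j1' c hc
      omega
    · exact heq
    · have := h.d_mono hc (show i' + 1 ≤ i by omega) hi
      have := h.da i j1 c hc
      omega

theorem br_adj (h : GData H r p q L M f g d a) {i c i' c' : ℕ} (hi' : i' < r) (hc' : c' < r)
    (hh : (i = i' ∧ c + 1 = c') ∨ (c = c' ∧ i + 1 = i')) :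
    ∃ x ∈ br r p q L f g d a i c, ∃ y ∈ br r p q L f g d a i' c', H.Adj x y := by
  rcases hh with ⟨rfl, rfl⟩ | ⟨rfl, rfl⟩
  · have hlt := h.lo_lt hi' (show c < c + 1 by omega) hc'
    have u := h.mem_up hi' hc'
    have hup : up r L f g i c = lo f g i (c + 1) := by unfold up; rw [if_pos hc']
    have hle : lo f g i (c + 1) ≤ f i (c + 1) := by unfold lo; omega
    refine ⟨p i (lo f g i (c + 1) - 1), Or.inl ⟨_, by omega, by omega, rfl⟩,
      p i (lo f g i (c + 1)), Or.inl ⟨_, le_rfl, by omega, rfl⟩, ?_⟩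
    have := h.P.adj i hi' (lo f g i (c + 1) - 1) (by omega)
    rwa [Nat.sub_add_cancel (by omega)] at this
  · have u := h.mem_up hi' hc'
    have h1 := h.ad i hi' c hc'
    have h2 := h.dM _ hi' c hc'
    have hle : lo f g (i + 1) c ≤ f (i + 1) c := by unfold lo; omega
    refine ⟨q c (d (i + 1) c - 1), Or.inr ⟨hi', _, by omega, by omega, rfl⟩,
      p (i + 1) (f (i + 1) c), Or.inl ⟨_, hle, u.1, rfl⟩, ?_⟩
    rw [h.fe _ hi' c hc']
    have := h.Q.adj c hc' (d (i + 1) c - 1) (by omega)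
    rwa [Nat.sub_add_cancel (by omega)] at this

theorem grid (h : GData H r p q L M f g d a) : HasMinor H (gridGraph r) := by
  refine ⟨fun w => br r p q L f g d a w.1 w.2, ?_, ?_, ?_⟩
  · intro w
    exact h.br_conn w.1.2 w.2.2
  · rintro ⟨i, c⟩ ⟨i', c'⟩ hne
    rw [Set.disjoint_left]
    intro v h1 h2
    obtain ⟨e1, e2⟩ := h.br_disj i.2 c.2 i'.2 c'.2 h1 h2
    exact hne (Prod.ext (Fin.ext e1) (Fin.ext e2))
  · rintro ⟨i, c⟩ ⟨i', c'⟩ hadj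
    unfold gridGraph at hadj
    rw [SimpleGraph.fromRel_adj] at hadj
    rcases hadj.2 with h1 | h1
    · refine h.br_adj i'.2 c'.2 ?_
      rcases h1 with ⟨h1, h2⟩ | ⟨h1, h2⟩
      · exact Or.inl ⟨congrArg Fin.val h1, h2⟩
      · exact Or.inr ⟨congrArg Fin.val h1, h2⟩
    · have : ∃ x ∈ br r p q L f g d a i' c', ∃ y ∈ br r p q L f g d a i c, H.Adj x y := by
        refine h.br_adj i.2 c.2 ?_
        rcases h1 with ⟨h1, h2⟩ | ⟨h1, h2⟩
        · exact Or.inl ⟨congrArg Fin.val h1, h2⟩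
        · exact Or.inr ⟨congrArg Fin.val h1, h2⟩
      obtain ⟨x, hx, y, hy, hxy⟩ := this
      exact ⟨y, hy, x, hx, hxy.symm⟩

end GData

/-- first hitting times -/
theorem hits {b : ℕ → ℕ × ℕ} {N R : ℕ} (h0 : (b 0).1 = 0) (hN : (b N).1 = R)
    (hs : ∀ n < N, StepOK (b n) (b (n + 1))) :
    ∃ F : ℕ → ℕ, F 0 = 0 ∧ (∀ i ≤ R, F i ≤ N ∧ (b (F i)).1 = i ∧ ∀ n < F i, (b n).1 < i) ∧
      ∀ i < R, F i < F (i + 1) ∧ (b (F (i + 1) - 1)).1 = i := by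
  have hex : ∀ i, ∃ n, i ≤ R → n ≤ N ∧ i ≤ (b n).1 := fun i => ⟨N, fun h => ⟨le_rfl, by omega⟩⟩
  classical
  let F : ℕ → ℕ := fun i => if hi : i ≤ R then Nat.find (hex i) else 0
  have hF : ∀ i ≤ R, F i ≤ N ∧ i ≤ (b (F i)).1 := by
    intro i hi
    have := Nat.find_spec (hex i) hi
    simpa only [F, dif_pos hi] using this
  have hF2 : ∀ i ≤ R, ∀ n < F i, (b n).1 < i := by
    intro i hi n hn
    have hn' : n < Nat.find (hex i) := by simpa only [F, dif_pos hi] using hn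
    have := Nat.find_min (hex i) hn'
    have := (hF i hi).1
    by_contra hc
    apply Nat.find_min (hex i) hn'
    intro _
    constructor <;> omega
  have hF0 : F 0 = 0 := by
    by_contra hc
    have := hF2 0 (by omega) 0 (by omega)
    omega
  have hst : ∀ n < N, (b (n + 1)).1 ≤ (b n).1 + 1 := by
    intro n hn
    have := hs n hn
    unfold StepOK at this
    omega
  have hFe : ∀ i ≤ R, (b (F i)).1 = i := by
    intro i hi
    obtain ⟨a1, a2⟩ := hF i hi
    rcases Nat.eq_zero_or_pos (F i) with h1 | h1
    · rw [h1] at a2 ⊢; omega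
    · have h2 := hst (F i - 1) (by omega)
      have h3 := hF2 i hi (F i - 1) (by omega)
      rw [Nat.sub_add_cancel h1] at h2
      omega
  refine ⟨F, hF0, fun i hi => ⟨(hF i hi).1, hFe i hi, hF2 i hi⟩, ?_⟩
  intro i hi
  have e1 := hFe i (by omega)
  have e2 := hFe (i + 1) (by omega)
  obtain ⟨a1, a2⟩ := hF (i + 1) (by omega)
  constructor
  · by_contra hc
    rcases Nat.lt_or_ge (F (i + 1)) (F i) with h1 | h1
    · have := hF2 i (by omega) _ h1
      omega
    · have : F i = F (i + 1) := by omega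
      rw [this] at e1; omega
  · have h1 : 0 < F (i + 1) := by
      by_contra hc
      have : F (i + 1) = 0 := by omega
      rw [this] at e2; omega
    have h2 := hst (F (i + 1) - 1) (by omega)
    have h3 := hF2 (i + 1) (by omega) (F (i + 1) - 1) (by omega)
    rw [Nat.sub_add_cancel h1] at h2
    omega

/-- visits in order -/
theorem enum_visits (P : ℕ → Prop) {m : ℕ} (hm : P m) :
    ∃ (s : ℕ → ℕ) (N : ℕ), s N = m ∧ (∀ n ≤ N, s n ≤ m ∧ P (s n)) ∧ (∀ t < s 0, ¬ P t) ∧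
      ∀ n < N, s n < s (n + 1) ∧ ∀ t, s n < t → t < s (n + 1) → ¬ P t := by
  induction m using Nat.strong_induction_on with
  | _ m ih =>
    by_cases hc : ∃ m' < m, P m'
    · classical
      have hne : ((Finset.range m).filter P).Nonempty := by
        obtain ⟨m', h1, h2⟩ := hc
        exact ⟨m', by simp [h1, h2]⟩
      obtain ⟨m', hmem, hle⟩ : ∃ m' ∈ (Finset.range m).filter P,
          ∀ x ∈ (Finset.range m).filter P, x ≤ m' :=
        ⟨_, Finset.max'_mem _ hne, fun x hx => Finset.le_max' _ x hx⟩
      simp only [Finset.mem_filter, Finset.mem_range] at hmem hle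
      obtain ⟨s, N, e, h1, h2, h3⟩ := ih m' hmem.1 hmem.2
      refine ⟨fun n => if n ≤ N then s n else m, N + 1, by simp, ?_, ?_, ?_⟩
      · intro n hn
        by_cases hN : n ≤ N
        · simp only [hN, if_true]
          exact ⟨(h1 n hN).1.trans hmem.1.le, (h1 n hN).2⟩
        · simp only [hN, if_false]
          exact ⟨le_rfl, hm⟩
      · simpa using h2
      · intro n hn
        by_cases hN : n + 1 ≤ N
        · have hN' : n ≤ N := by omega
          simp only [hN, hN', if_true]
          exact h3 n hN
        · have hN' : n = N := by omega
          subst hN'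
          simp only [le_refl, if_true, hN, if_false, e]
          refine ⟨hmem.1, fun t h4 h5 h6 => ?_⟩
          have := hle t ⟨h5, h6⟩
          omega
    · push Not at hc
      exact ⟨fun _ => m, 0, rfl, fun n _ => ⟨le_rfl, hm⟩, hc, fun n hn => by omega⟩

/-- visits of a column to the rows -/
structure Col {V : Type u} (r : ℕ) (p q : ℕ → ℕ → V) (L M : ℕ → ℕ) (j : ℕ) (s : ℕ → ℕ)
    (b : ℕ → ℕ × ℕ) (N : ℕ) : Prop where
  loc : ∀ n ≤ N, s n ≤ M j ∧ (b n).1 < r ∧ (b n).2 ≤ L (b n).1 ∧ p (b n).1 (b n).2 = q j (s n)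
  mono : ∀ n < N, s n < s (n + 1)
  av : ∀ n < N, ∀ t, s n < t → t < s (n + 1) → ∀ i' < r, ∀ c ≤ L i', q j t ≠ p i' c
  b0 : (b 0).1 = 0
  bN : (b N).1 = r - 1
  step : ∀ n < N, StepOK (b n) (b (n + 1))

namespace Conf

variable {V : Type u} {H : SimpleGraph V} {r : ℕ} {z : ℕ → V} {p q : ℕ → ℕ → V} {L M e w : ℕ → ℕ}

theorem exists_col (h : Conf H r z p q L M e w) {j : ℕ} (hj : j < r) :
    ∃ s b N, Col r p q L M j s b N := by
  obtain ⟨m, hm, k, hk, hmk⟩ := h.meets_last hj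
  obtain ⟨s, N, sN, h1, h2, h3⟩ := enum_visits (fun t => ∃ i < r, ∃ k ≤ L i, q j t = p i k)
    (m := m) ⟨r - 1, by omega, k, hk, hmk⟩
  have hx : ∀ n, ∃ x : ℕ × ℕ, n ≤ N → x.1 < r ∧ x.2 ≤ L x.1 ∧ p x.1 x.2 = q j (s n) := by
    intro n
    by_cases hn : n ≤ N
    · obtain ⟨i, hi, k, hk, he⟩ := (h1 n hn).2
      exact ⟨(i, k), fun _ => ⟨hi, hk, he.symm⟩⟩
    · exact ⟨(0, 0), fun h => absurd h hn⟩
  choose b hb using hx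
  have hav : ∀ n < N, ∀ t, s n < t → t < s (n + 1) → ∀ i' < r, ∀ c ≤ L i', q j t ≠ p i' c := by
    intro n hn t ht ht' i' hi' c hc he
    exact (h3 n hn).2 t ht ht' ⟨i', hi', c, hc, he⟩
  refine ⟨s, b, N, ⟨fun n hn => ⟨(h1 n hn).1.trans hm, hb n hn⟩, fun n hn => (h3 n hn).1, hav,
    ?_, ?_, ?_⟩⟩
  · obtain ⟨a1, a2, a3⟩ := hb 0 (by omega)
    refine h.first_row a1 hj a2 ((h1 0 (by omega)).1.trans hm) a3 ?_
    intro t ht i' hi' c hc he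
    exact h2 t ht ⟨i', hi', c, hc, he⟩
  · obtain ⟨a1, a2, a3⟩ := hb N le_rfl
    rw [sN, hmk] at a3
    exact (h.P.inj _ a1 _ (by omega) _ a2 _ hk a3).1
  · intro n hn
    obtain ⟨a1, a2, a3⟩ := hb n (by omega)
    obtain ⟨c1, c2, c3⟩ := hb (n + 1) (by omega)
    have m1 := (h1 n (by omega)).1.trans hm
    have m2 := (h1 (n + 1) (by omega)).1.trans hm
    have hs := (h3 n hn).1
    have hv := hav n hn
    generalize b n = x at *
    generalize b (n + 1) = y at *
    obtain ⟨x1, x2⟩ := x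
    obtain ⟨y1, y2⟩ := y
    simp only at *
    unfold StepOK
    simp only
    by_contra hc
    rcases lt_trichotomy x1 y1 with hlt | heq | hlt
    · exact h.link_rows (i := x1) (i' := y1) (by omega) c1 hj a2 c2 m1 m2 a3 c3
        (fun t ht => hv t (by omega) (by omega))
    · subst heq
      rcases lt_trichotomy x2 y2 with hlt | heq | hlt
      · have := h.bump _ _ _ _ _ _ a1 hj hlt c2 m1 m2 a3 c3
          (fun t ht => hv t (by omega) (by omega))
        omega
      · subst heq
        have := (h.Q.inj _ hj _ hj _ m1 _ m2 (a3.symm.trans c3)).2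
        omega
      · have := h.bump _ _ _ _ _ _ a1 hj hlt a2 m2 m1 c3 a3
          (fun t ht => hv t (by omega) (by omega))
        omega
    · exact h.link_rows (i := y1) (i' := x1) (by omega) a1 hj c2 a2 m2 m1 c3 a3
        (fun t ht => hv t (by omega) (by omega))

theorem col_lk {j : ℕ} {s : ℕ → ℕ} {b : ℕ → ℕ × ℕ} {N : ℕ} (hC : Col r p q L M j s b N)
    {n : ℕ} (hn : n < N) {x x' : ℕ × ℕ} (hl : Lk b n x x') :
    ∃ t t', t ≤ M j ∧ t' ≤ M j ∧ x.1 < r ∧ x'.1 < r ∧ x.2 ≤ L x.1 ∧ x'.2 ≤ L x'.1 ∧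
      p x.1 x.2 = q j t ∧ p x'.1 x'.2 = q j t' ∧
      (∀ y, ((t < y ∧ y < t') ∨ (t' < y ∧ y < t)) → ∀ i' < r, ∀ c ≤ L i', q j y ≠ p i' c) := by
  have l1 := hC.loc n (by omega)
  have l2 := hC.loc (n + 1) (by omega)
  have hm := hC.mono n hn
  have hv := hC.av n hn
  rcases hl with ⟨rfl, rfl⟩ | ⟨rfl, rfl⟩
  · exact ⟨s n, s (n + 1), l1.1, l2.1, l1.2.1, l2.2.1, l1.2.2.1, l2.2.2.1, l1.2.2.2, l2.2.2.2,
      fun y hy => hv y (by omega) (by omega)⟩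
  · exact ⟨s (n + 1), s n, l2.1, l1.1, l2.2.1, l1.2.1, l2.2.2.1, l1.2.2.1, l2.2.2.2, l1.2.2.2,
      fun y hy => hv y (by omega) (by omega)⟩

theorem order (h : Conf H r z p q L M e w) {j j' : ℕ} (hj : j < r) (hj' : j' < r) (hjj : j ≠ j')
    {s s' : ℕ → ℕ} {b b' : ℕ → ℕ × ℕ} {N N' : ℕ} (hC : Col r p q L M j s b N)
    (hC' : Col r p q L M j' s' b' N') {S T I : ℕ} (hS : S ≤ N) (hT : T ≤ N')
    (eS : (b S).1 = I) (eT : (b' T).1 = I) (lS : ∀ t ≤ S, (b t).1 ≤ I)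
    (lT : ∀ t ≤ T, (b' t).1 ≤ I) : (b' 0).2 < (b 0).2 ↔ (b' T).2 < (b S).2 := by
  have hd : ∀ n ≤ S, ∀ t ≤ T, b n ≠ b' t := by
    intro n hn t ht he
    have l1 := hC.loc n (by omega)
    have l2 := hC'.loc t (by omega)
    rw [he] at l1
    exact hjj (h.Q.inj _ hj _ hj' _ l1.1 _ l2.1 (l1.2.2.2.symm.trans l2.2.2.2)).1
  refine parity b b' S T I hC.b0 hC'.b0 eS eT lS lT (fun t ht => hC.step t (by omega))
    (fun t ht => hC'.step t (by omega)) hd ?_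
  intro n hn t ht x x' y y' k1 k2 e1 e2 e3
  obtain ⟨t1, t1', a1, a2, a3, a4, a5, a6, a7, a8, a9⟩ := col_lk hC (by omega) k1
  obtain ⟨t2, t2', c1, c2, c3, c4, c5, c6, c7, c8, c9⟩ := col_lk hC' (by omega) k2
  obtain ⟨x1, x2⟩ := x
  obtain ⟨x1', x2'⟩ := x'
  obtain ⟨y1, y2⟩ := y
  obtain ⟨y1', y2'⟩ := y'
  simp only at *
  subst e1 e2 e3
  have n1 : y2' ≠ x2' := by
    rintro rfl
    exact hjj (h.Q.inj _ hj _ hj' _ a2 _ c2 (a8.symm.trans c8)).1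
  have n2 : y2 ≠ x2 := by
    rintro rfl
    exact hjj (h.Q.inj _ hj _ hj' _ a1 _ c1 (a7.symm.trans c7)).1
  constructor
  · intro hlt
    exact h.noncross1 a4 hj hj' hjj a5 a6 a1 a2 a7 a8 a9 c5 c6 c1 c2 c7 c8 c9 hlt
  · intro hlt
    by_contra hc
    have := h.noncross1 a4 hj' hj hjj.symm c5 c6 c1 c2 c7 c8 c9 a5 a6 a1 a2 a7 a8 a9
      (show x2 < y2 by omega)
    omega

theorem grid (h : Conf H r z p q L M e w) : HasMinor H (gridGraph r) := by
  have hcol : ∀ j, ∃ (s : ℕ → ℕ) (b : ℕ → ℕ × ℕ) (N : ℕ) (F : ℕ → ℕ), j < r → Col r p q L M j s b N ∧ F 0 = 0 ∧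
      (∀ i ≤ r - 1, F i ≤ N ∧ (b (F i)).1 = i ∧ ∀ n < F i, (b n).1 < i) ∧
      ∀ i < r - 1, F i < F (i + 1) ∧ (b (F (i + 1) - 1)).1 = i := by
    intro j
    by_cases hj : j < r
    · obtain ⟨s, b, N, hC⟩ := h.exists_col hj
      obtain ⟨F, h0, h1, h2⟩ := hits hC.b0 hC.bN hC.step
      exact ⟨s, b, N, F, fun _ => ⟨hC, h0, h1, h2⟩⟩
    · exact ⟨fun _ => 0, fun _ => 0, 0, fun _ => 0, fun h => absurd h hj⟩
  choose s b N F hcol using hcol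
  have hinj : ∀ j < r, ∀ j' < r, (b j 0).2 = (b j' 0).2 → j = j' := by
    intro j hj j' hj' he
    have c1 := (hcol j hj).1
    have c2 := (hcol j' hj').1
    have l1 := c1.loc 0 (by omega)
    have l2 := c2.loc 0 (by omega)
    have : b j 0 = b j' 0 := Prod.ext (c1.b0.trans c2.b0.symm) he
    rw [this] at l1
    exact (h.Q.inj _ hj _ hj' _ l1.1 _ l2.1 (l1.2.2.2.symm.trans l2.2.2.2)).1
  obtain ⟨π, hπ, hπs⟩ : ∃ π : ℕ → ℕ, (∀ c < r, π c < r) ∧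
      ∀ c c', c < c' → c' < r → (b (π c) 0).2 < (b (π c') 0).2 := by
    let f : Fin r → ℕ := fun j => (b j 0).2
    have hf : Function.Injective f := fun j j' he => Fin.ext (hinj j j.2 j' j'.2 he)
    have hm : StrictMono (f ∘ Tuple.sort f) :=
      (Tuple.monotone_sort f).strictMono_of_injective (hf.comp (Tuple.sort f).injective)
    refine ⟨fun c => if hc : c < r then (Tuple.sort f ⟨c, hc⟩ : Fin r) else 0, ?_, ?_⟩
    · intro c hc
      simp only [hc, dif_pos]
      exact (Tuple.sort f ⟨c, hc⟩).2
    · intro c c' h1 h2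
      have h3 : c < r := by omega
      simp only [h2, h3, dif_pos]
      exact hm (show (⟨c, h3⟩ : Fin r) < ⟨c', h2⟩ from h1)
  have hπi : ∀ c < r, ∀ c' < r, π c = π c' → c = c' := by
    intro c hc c' hc' he
    rcases lt_trichotomy c c' with h1 | h1 | h1
    · have := hπs c c' h1 hc'; rw [he] at this; omega
    · exact h1
    · have := hπs c' c h1 hc; rw [he] at this; omega
  let Gt : ℕ → ℕ → ℕ := fun i c => if i + 1 < r then F (π c) (i + 1) - 1 else F (π c) i
  have hFp : ∀ i < r, ∀ c < r, F (π c) i ≤ N (π c) ∧ (b (π c) (F (π c) i)).1 = i ∧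
      ∀ n ≤ F (π c) i, (b (π c) n).1 ≤ i := by
    intro i hi c hc
    obtain ⟨a1, a2, a3⟩ := (hcol (π c) (hπ c hc)).2.2.1 i (by omega)
    refine ⟨a1, a2, fun n hn => ?_⟩
    rcases Nat.lt_or_ge n (F (π c) i) with h1 | h1
    · exact (a3 n h1).le
    · have : n = F (π c) i := by omega
      rw [this, a2]
  have hGp : ∀ i < r, ∀ c < r, Gt i c ≤ N (π c) ∧ (b (π c) (Gt i c)).1 = i ∧
      ∀ n ≤ Gt i c, (b (π c) n).1 ≤ i := by
    intro i hi c hc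
    by_cases hi1 : i + 1 < r
    · simp only [Gt, hi1, if_true]
      obtain ⟨a1, a2, a3⟩ := (hcol (π c) (hπ c hc)).2.2.1 (i + 1) (by omega)
      obtain ⟨a4, a5⟩ := (hcol (π c) (hπ c hc)).2.2.2 i (by omega)
      refine ⟨by omega, a5, fun n hn => ?_⟩
      have := a3 n (by omega)
      omega
    · simp only [Gt, hi1, if_false]
      exact hFp i hi c hc
  have hord : ∀ i, ∀ c c', c < c' → c' < r → ∀ S T,
      (S ≤ N (π c) ∧ (b (π c) S).1 = i ∧ ∀ n ≤ S, (b (π c) n).1 ≤ i) →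
      (T ≤ N (π c') ∧ (b (π c') T).1 = i ∧ ∀ n ≤ T, (b (π c') n).1 ≤ i) →
      (b (π c) S).2 < (b (π c') T).2 := by
    intro i c c' h1 h2 S T hS hT
    have hc : c < r := by omega
    have hne : π c' ≠ π c := fun he => by
      have := hπi _ h2 _ hc he
      omega
    exact (h.order (hπ c' h2) (hπ c hc) hne (hcol _ (hπ c' h2)).1 (hcol _ (hπ c hc)).1 hT.1 hS.1
      hT.2.1 hS.2.1 hT.2.2 hS.2.2).1 (hπs c c' h1 h2)
  have smono : ∀ c < r, ∀ n n', n ≤ n' → n' ≤ N (π c) → s (π c) n ≤ s (π c) n' := by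
    intro c hc n n' hn hn'
    induction n', hn using Nat.le_induction with
    | base => exact le_rfl
    | succ k hk ih =>
      have := ih (by omega)
      have := (hcol _ (hπ c hc)).1.mono k (by omega)
      omega
  have hGe : ∀ i, i + 1 < r → ∀ c < r, F (π c) i ≤ Gt i c ∧ Gt i c + 1 = F (π c) (i + 1) := by
    intro i hi c hc
    simp only [Gt, hi, if_true]
    have := ((hcol (π c) (hπ c hc)).2.2.2 i (by omega)).1
    omega
  have G : GData H r p (fun c => q (π c)) L (fun c => M (π c))
      (fun i c => (b (π c) (F (π c) i)).2) (fun i c => (b (π c) (Gt i c)).2)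
      (fun i c => s (π c) (F (π c) i)) (fun i c => s (π c) (Gt i c)) := by
    constructor
    · exact h.P
    · constructor
      · intro c hc
        exact h.Q.adj _ (hπ c hc)
      · intro c hc c' hc' k hk k' hk' he
        obtain ⟨a1, a2⟩ := h.Q.inj _ (hπ c hc) _ (hπ c' hc') _ hk _ hk' he
        exact ⟨hπi _ hc _ hc' a1, a2⟩
    · intro i hi c hc
      have a := hFp i hi c hc
      have l := ((hcol _ (hπ c hc)).1.loc _ a.1).2.2.1
      rwa [a.2.1] at l
    · intro i hi c hc
      have a := hGp i hi c hc
      have l := ((hcol _ (hπ c hc)).1.loc _ a.1).2.2.1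
      rwa [a.2.1] at l
    · intro i hi c c' h1 h2
      exact hord i c c' h1 h2 _ _ (hFp i hi c (by omega)) (hFp i hi c' h2)
    · intro i hi c c' h1 h2
      exact hord i c c' h1 h2 _ _ (hFp i hi c (by omega)) (hGp i hi c' h2)
    · intro i hi c c' h1 h2
      exact hord i c c' h1 h2 _ _ (hGp i hi c (by omega)) (hFp i hi c' h2)
    · intro i hi c c' h1 h2
      exact hord i c c' h1 h2 _ _ (hGp i hi c (by omega)) (hGp i hi c' h2)
    · intro i hi c hc
      have a := hFp i hi c hc
      have l := ((hcol _ (hπ c hc)).1.loc _ a.1).2.2.2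
      rwa [a.2.1] at l
    · intro i hi c hc
      have a := hGp i (by omega) c hc
      have l := ((hcol _ (hπ c hc)).1.loc _ a.1).2.2.2
      rwa [a.2.1] at l
    · intro i hi c hc
      exact smono c hc _ _ (hGe i hi c hc).1 (hGp i (by omega) c hc).1
    · intro i hi c hc
      have e := (hGe i hi c hc).2
      have a := (hFp (i + 1) hi c hc).1
      have := (hcol _ (hπ c hc)).1.mono (Gt i c) (by omega)
      rwa [e] at this
    · intro i hi c hc
      exact ((hcol _ (hπ c hc)).1.loc _ (hFp i hi c hc).1).1
    · intro i hi c hc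
      have e := (hGe i hi c hc).2
      have a := (hFp (i + 1) hi c hc).1
      have := (hcol _ (hπ c hc)).1.av (Gt i c) (by omega)
      rwa [e] at this
  exact G.grid

end Conf

theorem HasMinor.mono {V : Type u} {W : Type*} {H G : SimpleGraph V} {K : SimpleGraph W}
    (hle : H ≤ G) (h : HasMinor H K) : HasMinor G K := by
  obtain ⟨φ, h1, h2, h3⟩ := h
  refine ⟨φ, fun w => ?_, h2, fun w₁ w₂ hw => ?_⟩
  · refine (h1 w).mono ?_
    intro a b hab
    exact hle hab
  · obtain ⟨a, ha, b, hb, hab⟩ := h3 hw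
    exact ⟨a, ha, b, hb, hle hab⟩

theorem sub_le {V : Type u} {G : SimpleGraph V} (D : Set G.edgeSet) : subG D ≤ G := by
  intro a b h
  obtain ⟨h, -⟩ := h
  exact h

theorem disc_split {V : Type u} [Fintype V] {G : SimpleGraph V} (m : PMap G) {r : ℕ} (hr : 1 ≤ r)
    (hno : ¬ HasMinor G (gridGraph r)) {C D : Set G.edgeSet} (hC : ClI m.adj C univ)
    (hD : DiscI m.adj C D) (hn : (bdI m.inc D).ncard = 4 * r - 1) :
    ∃ A ⊆ D, (bdI m.inc A).ncard < (bdI m.inc D).ncard ∧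
      (bdI m.inc (D \ A)).ncard < (bdI m.inc D).ncard := by
  have hne : (bdI m.inc D).Nonempty := by
    apply Set.nonempty_of_ncard_ne_zero
    omega
  obtain ⟨n, X, Y, hc⟩ := m.exists_cyc hne
  have hn' := m.cyc_card hC hD hc
  have hnn : n = 4 * r - 1 := hn'.symm.trans hn
  subst hnn
  have hbd := m.cyc_bd hC hD hc
  let z : ℕ → V := fun k => m.fv (X k)
  have zinj : ∀ i < 4 * r - 1, ∀ j < 4 * r - 1, z i = z j → i = j := hc.inj
  have zbd : ∀ i < 4 * r - 1, z i ∈ bdI m.inc D := by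
    intro i hi
    rw [hbd]
    exact ⟨i, hi, rfl⟩
  have img : ∀ g : ℕ → ℕ, (∀ i < r, g i < 4 * r - 1) → (∀ i < r, ∀ j < r, g i = g j → i = j) →
      ((fun i => z (g i)) '' Iio r ⊆ bdI m.inc D) ∧ ((fun i => z (g i)) '' Iio r).ncard = r := by
    intro g h1 h2
    constructor
    · rintro _ ⟨i, hi, rfl⟩
      exact zbd _ (h1 i hi)
    · rw [Set.InjOn.ncard_image]
      · simp [Set.ncard_eq_toFinset_card']
      · intro i hi j hj hij
        exact h2 i hi j hj (zinj _ (h1 i hi) _ (h1 j hj) hij)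
  obtain ⟨a1, a2⟩ := img (fun i => r - 1 - i) (fun i hi => by omega) (fun i hi j hj h => by omega)
  obtain ⟨b1, b2⟩ := img (fun i => 2 * r + i) (fun i hi => by omega) (fun i hi j hj h => by omega)
  obtain ⟨c1, c2⟩ := img (fun i => r + i) (fun i hi => by omega) (fun i hi j hj h => by omega)
  obtain ⟨d1, d2⟩ := img (fun i => if i = 0 then 0 else 3 * r + i - 1)
    (fun i hi => by split_ifs <;> omega)
    (fun i hi j hj h => by split_ifs at h <;> omega)
  rcases menger (subG D) r (fun i => z (r - 1 - i))
    (fun i hi j hj h => by have := zinj _ (by omega) _ (by omega) h; omega)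
    ((fun i => z (2 * r + i)) '' Iio r) with hP | ⟨Xs, S, s1, s2, s3, s4⟩
  swap
  · exact sep_bd D r m.inc (fun _ _ => Iff.rfl) _ _ Xs S a1 b1 a2 b2 s1 s2 s3 s4
  rcases menger (subG D) r (fun i => z (r + i))
    (fun i hi j hj h => by have := zinj _ (by omega) _ (by omega) h; omega)
    ((fun i => z (if i = 0 then 0 else 3 * r + i - 1)) '' Iio r) with
    ⟨q, M, hQ, q1, q2⟩ | ⟨Xs, S, s1, s2, s3, s4⟩
  swap
  · exact sep_bd D r m.inc (fun _ _ => Iff.rfl) _ _ Xs S c1 d1 c2 d2 s1 s2 s3 s4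
  exfalso
  obtain ⟨p0, L0, hP, p1, p2⟩ := hP
  obtain ⟨p, L, hp, hmin⟩ := exists_min (EQ r q M) ⟨p0, L0, GoodL.mk hP p1 p2⟩
  have he : ∀ i, ∃ k, i < r → k < r ∧ p i (L i) = z (2 * r + k) := by
    intro i
    by_cases hi : i < r
    · obtain ⟨k, hk, e⟩ := hp.en i hi
      exact ⟨k, fun _ => ⟨hk, e.symm⟩⟩
    · exact ⟨0, fun h => absurd h hi⟩
  choose e he using he
  have hw : ∀ j, ∃ k, j < r → k < r ∧ q j (M j) = z (if k = 0 then 0 else 3 * r + k - 1) := by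
    intro i
    by_cases hi : i < r
    · obtain ⟨k, hk, e⟩ := q2 i hi
      exact ⟨k, fun _ => ⟨hk, e.symm⟩⟩
    · exact ⟨0, fun h => absurd h hi⟩
  choose w hw using hw
  have conf : Conf (subG D) r z p q L M (fun i => 2 * r + e i)
      (fun j => if w j = 0 then 0 else 3 * r + w j - 1) := by
    constructor
    · intro i j k l hij hjk hkl hl Z Z' hZ hi hk hj hl' hp hp'
      exact m.cross_free hC hD hc hij hjk hkl hl hZ hi hk hj hp hp'
    · exact hp.lk
    · exact hQ
    · exact hp.st
    · exact fun i hi => (he i hi).2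
    · exact q1
    · exact fun j hj => (hw j hj).2
    · intro i hi
      omega
    · intro i hi
      have := (he i hi).1
      omega
    · intro j hj
      have := (hw j hj).1
      split_ifs <;> omega
    · intro i j k k' s s' hi hj hk hk' hs hs' e1 e2 hav
      exact bump hQ hp hmin hi hj hk hk' hs hs' e1 e2 hav
  exact hno (conf.grid.mono (sub_le D))

/-- (Robertson–Seymour–Thomas) If `G` is planar and `bw(G) ≥ 4r`, then `G` contains the
`(r × r)`-grid as a minor. -/
theorem planar_grid_minor {V : Type u} [Fintype V] (G : SimpleGraph V) (r : ℕ)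
    (hr : 1 ≤ r) (hplanar : IsPlanar G) (hbw : 4 * r ≤ branchwidth G) :
    HasMinor G (gridGraph r) := by
  by_contra hno
  obtain ⟨m⟩ := exists_PMap hplanar
  by_cases hsub : Subsingleton G.edgeSet
  · have := branch_of_subsingleton G hsub
    omega
  · rw [not_subsingleton_iff_nontrivial] at hsub
    obtain ⟨e0, e1, hne⟩ := hsub
    have h2 : ∀ e : G.edgeSet, {v | m.inc v e}.ncard ≤ 2 := by
      rintro ⟨e, he⟩
      induction e using Sym2.ind with
      | _ x y =>
        have : {v | m.inc v ⟨s(x, y), he⟩} = {x, y} := by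
          ext v
          exact Sym2.mem_iff
        rw [this]
        exact (Set.ncard_insert_le x {y}).trans (by rw [Set.ncard_singleton])
    have hRT := RT_top (k := 4 * r - 1) m.adj_symm m.K1' m.K0 h2 (by omega)
      (fun C D _ hC hD hk => disc_split m hr hno hC hD hk) e0 ⟨e1, fun h => hne h.symm⟩
    have := branch_of_RT G (4 * r - 1) e0 hRT
    omega
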